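/- Let Γ = ℤ^5 ⋊ ℤ/4 where the generator of ℤ/4 acts on ℤ^5 by the matrix [[1,1,0,0,0],[-1,0,0,-1,0],[0,0,0,0,-1],[-1,0,0,0,0],[0,0,-1,0,0]]. Then H^1(Γ,ℤ) ≅ ℤ^2; H^2(Γ,ℤ) ≅ ℤ^2 ⊕ ℤ/4; H^3(Γ,ℤ) ≅ ℤ^2 ⊕ (ℤ/2)^4; H^4(Γ,ℤ) ≅ ℤ ⊕ (ℤ/4)^2 ⊕ (ℤ/2)^2; and H^i(Γ,ℤ) ≅ ℤ/4 ⊕ (ℤ/2)^5 for all i ≥ 5. -/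

import Mathlib

open Matrix

namespace Crystal

/-- The lattice `ℤ^n`, written multiplicatively so that it can be a factor of a semidirect
product of groups. -/
abbrev Lat (n : ℕ) : Type := Multiplicative (Fin n → ℤ)

/-- The invertible integer matrix determined by `M` with `M ^ (m + 1) = 1`. -/
def matUnit {n : ℕ} (M : Matrix (Fin n) (Fin n) ℤ) (m : ℕ) (hm : M ^ (m + 1) = 1) :
    (Matrix (Fin n) (Fin n) ℤ)ˣ :=
  ⟨M, M ^ m, by rw [← pow_succ']; exact hm, by rw [← pow_succ]; exact hm⟩

/-- Linear automorphisms of `ℤ^n` as multiplicative automorphisms of the multiplicative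
version of `ℤ^n`. -/
def linToAut (n : ℕ) : ((Fin n → ℤ) ≃ₗ[ℤ] (Fin n → ℤ)) →* MulAut (Lat n) :=
  MonoidHom.mk' (fun e => AddEquiv.toMultiplicative e.toAddEquiv) (fun _ _ => rfl)

/-- An invertible integer matrix acts on the (multiplicative) lattice `ℤ^n` by (left)
matrix-vector multiplication. -/
def glToAut (n : ℕ) : (Matrix (Fin n) (Fin n) ℤ)ˣ →* MulAut (Lat n) :=
  (linToAut n).comp
    ((LinearMap.GeneralLinearGroup.generalLinearEquiv ℤ (Fin n → ℤ)).toMonoidHom.comp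
      (Matrix.GeneralLinearGroup.toLin).toMonoidHom)

/-- The homomorphism from `ℤ/m` (written multiplicatively) to a group `G` sending the
generator `1` to a chosen element `α` satisfying `α ^ m = 1`. -/
def zmodHom {G : Type*} [Group G] (m : ℕ) [NeZero m] (α : G) (hα : α ^ m = 1) :
    Multiplicative (ZMod m) →* G :=
  MonoidHom.mk' (fun g => α ^ (g.toAdd.val)) (by
    intro a b
    show α ^ (ZMod.val (a.toAdd + b.toAdd)) = α ^ (ZMod.val a.toAdd) * α ^ (ZMod.val b.toAdd)
    rw [ZMod.val_add, ← pow_eq_pow_mod _ hα, pow_add])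

/-- The action of `ℤ/q` on the lattice `ℤ^n` in which the generator `1` of `ℤ/q` acts by left
multiplication by the integer matrix `M`; `M` is required to satisfy `M ^ q = 1`. -/
def matAction {n : ℕ} (q : ℕ) [NeZero q] (M : Matrix (Fin n) (Fin n) ℤ)
    (hq : M ^ q = 1) : Multiplicative (ZMod q) →* MulAut (Lat n) :=
  zmodHom q (glToAut n (matUnit M (q - 1) (by
      rwa [Nat.sub_add_cancel (Nat.one_le_iff_ne_zero.2 (NeZero.ne q))])))
    (by
      rw [← map_pow]
      convert map_one (glToAut n)
      ext i j
      rw [Units.val_pow_eq_pow_val]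
      simp [matUnit, hq])

/-- The crystallographic group `ℤ^n ⋊ ℤ/q` in which the generator `1` of `ℤ/q` acts on the
lattice `ℤ^n` by left multiplication by the integer matrix `M` (with `M ^ q = 1`). -/
abbrev Crys {n : ℕ} (q : ℕ) [NeZero q] (M : Matrix (Fin n) (Fin n) ℤ) (hq : M ^ q = 1) : Type :=
  SemidirectProduct (Lat n) (Multiplicative (ZMod q)) (matAction q M hq)


open CategoryTheory groupCohomology

variable {k : Type} [CommRing k]

lemma comp_contractNth {G H : Type*} [Monoid G] [Monoid H] (f : G →* H) {n : ℕ}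
    (j : Fin (n + 1)) (g : Fin (n + 1) → G) (i : Fin n) :
    f (Fin.contractNth j (· * ·) g i) = Fin.contractNth j (· * ·) (fun l => f (g l)) i := by
  rcases lt_trichotomy (i : ℕ) j with h | h | h
  · rw [Fin.contractNth_apply_of_lt _ _ _ _ h, Fin.contractNth_apply_of_lt _ _ _ _ h]
  · rw [Fin.contractNth_apply_of_eq _ _ _ _ h, Fin.contractNth_apply_of_eq _ _ _ _ h,
      _root_.map_mul]
  · rw [Fin.contractNth_apply_of_gt _ _ _ _ h, Fin.contractNth_apply_of_gt _ _ _ _ h]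

/-- The map of inhomogeneous cochain complexes induced (contravariantly in the group,
covariantly in the coefficients) by a group homomorphism `f : H →* G` together with a
compatible linear map `τ : A → B` of coefficients. -/
def cochainsMap {G H : Type} [Group G] [Group H] (A : Rep k G) (B : Rep k H)
    (f : H →* G) (τ : A →ₗ[k] B)
    (hcomp : ∀ (h : H) (a : A), τ (A.ρ (f h) a) = B.ρ h (τ a)) :
    inhomogeneousCochains A ⟶ inhomogeneousCochains B where
  f n := ModuleCat.ofHom
    { toFun := fun F v => τ (F (fun i => f (v i)))
      map_add' := fun x y => by funext v; simp
      map_smul' := fun r x => by funext v; simp }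
  comm' i j hij := by
    have hij' : i + 1 = j := hij
    subst hij'
    rw [inhomogeneousCochains.d_def, inhomogeneousCochains.d_def]
    ext F v
    show (inhomogeneousCochains.d B i).hom (fun w => τ (F (fun l => f (w l)))) v
      = τ ((inhomogeneousCochains.d A i).hom F (fun l => f (v l)))
    simp only [inhomogeneousCochains.d_hom_apply, map_add, map_sum, _root_.map_smul]
    congr 1
    · exact (hcomp (v 0) _).symm
    · refine Finset.sum_congr rfl fun j' _ => ?_
      have hc : (fun l => f (j'.contractNth (· * ·) v l))
          = j'.contractNth (· * ·) (fun l => f (v l)) := by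
        funext l
        exact comp_contractNth f j' v l
      rw [hc]

lemma cochainsMap_eq_id {G : Type} [Group G] (A : Rep k G) (f : G →* G) (τ : A →ₗ[k] A)
    (hcomp : ∀ (h : G) (a : A), τ (A.ρ (f h) a) = A.ρ h (τ a))
    (hf : ∀ x, f x = x) (hτ : ∀ a, τ a = a) :
    cochainsMap A A f τ hcomp = 𝟙 _ := by
  apply HomologicalComplex.Hom.ext
  funext n
  ext F v
  show τ (F (fun i => f (v i))) = F v
  simp only [hf, hτ]

lemma cochainsMap_comp {G H K : Type} [Group G] [Group H] [Group K]
    (A : Rep k G) (B : Rep k H) (C : Rep k K)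
    (f₁ : H →* G) (τ₁ : A →ₗ[k] B) (h₁ : ∀ (h : H) (a : A), τ₁ (A.ρ (f₁ h) a) = B.ρ h (τ₁ a))
    (f₂ : K →* H) (τ₂ : B →ₗ[k] C) (h₂ : ∀ (h : K) (a : B), τ₂ (B.ρ (f₂ h) a) = C.ρ h (τ₂ a))
    (f₃ : K →* G) (τ₃ : A →ₗ[k] C) (h₃ : ∀ (h : K) (a : A), τ₃ (A.ρ (f₃ h) a) = C.ρ h (τ₃ a))
    (hf : ∀ x, f₁ (f₂ x) = f₃ x) (hτ : ∀ a, τ₂ (τ₁ a) = τ₃ a) :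
    cochainsMap A B f₁ τ₁ h₁ ≫ cochainsMap B C f₂ τ₂ h₂ = cochainsMap A C f₃ τ₃ h₃ := by
  apply HomologicalComplex.Hom.ext
  funext n
  ext F v
  show τ₂ (τ₁ (F (fun i => f₁ (f₂ (v i))))) = τ₃ (F (fun i => f₃ (v i)))
  simp only [hf]
  exact hτ _

/-- Given an action `φ` of a group `G` on a group `L` and a representation `ψ` of `G` on a
`k`-module `V`, this is `H^j(L, V)` (with `L` acting trivially on the coefficients `V`),
endowed with the `G`-action functorially induced by the action of `G` on `L` and on `V`:
`g` acts via the conjugation automorphism `φ g⁻¹` of `L` and via `ψ g` on `V`. -/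
noncomputable def cohRep {G L V : Type} [Group G] [Group L] [AddCommGroup V] [Module k V]
    (φ : G →* MulAut L) (ψ : Representation k G V) (j : ℕ) : Rep k G :=
  Rep.of (X := groupCohomology (Rep.trivial k L V) j)
    { toFun := fun g => ModuleCat.Hom.hom <| HomologicalComplex.homologyMap
        (cochainsMap (Rep.trivial k L V) (Rep.trivial k L V) (φ g⁻¹).toMonoidHom (ψ g)
          (fun _ _ => rfl)) j
      map_one' := by
        have h := cochainsMap_eq_id (Rep.trivial k L V) (φ 1⁻¹).toMonoidHom (ψ 1)
          (fun _ _ => rfl) (fun x => by simp) (fun a => by simp)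
        exact (congrArg (fun c => ModuleCat.Hom.hom (HomologicalComplex.homologyMap c j)) h).trans
          (congrArg ModuleCat.Hom.hom (HomologicalComplex.homologyMap_id _ j))
      map_mul' := fun g₁ g₂ => by
        have h := cochainsMap_comp (Rep.trivial k L V) (Rep.trivial k L V) (Rep.trivial k L V)
          (φ g₂⁻¹).toMonoidHom (ψ g₂) (fun _ _ => rfl)
          (φ g₁⁻¹).toMonoidHom (ψ g₁) (fun _ _ => rfl)
          (φ (g₁ * g₂)⁻¹).toMonoidHom (ψ (g₁ * g₂)) (fun _ _ => rfl)
          (fun x => by simp [_root_.mul_inv_rev]) (fun a => by simp)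
        rw [← h, HomologicalComplex.homologyMap_comp]
        rfl }


/-- `H^i(G, H^j(L, ℤ))`: the `i`-th cohomology of the cyclic group `ℤ/q` with coefficients in
the `j`-th cohomology of the lattice `ℤ^n` (with trivial `ℤ` coefficients), where the
`ℤ/q`-action on `H^j(ℤ^n, ℤ)` is the one functorially induced by the matrix action on the
lattice. -/
noncomputable abbrev cohOfCoh {n : ℕ} (q : ℕ) [NeZero q] (M : Matrix (Fin n) (Fin n) ℤ)
    (hq : M ^ q = 1) (i j : ℕ) : ModuleCat ℤ :=
  groupCohomology
    (cohRep (matAction q M hq) (1 : Representation ℤ (Multiplicative (ZMod q)) ℤ) j) i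

/-- `H^k(Γ, ℤ)` for `Γ = ℤ^n ⋊ ℤ/q`, with trivial coefficients `ℤ`. -/
noncomputable abbrev cohCrys {n : ℕ} (q : ℕ) [NeZero q] (M : Matrix (Fin n) (Fin n) ℤ)
    (hq : M ^ q = 1) (k : ℕ) : ModuleCat ℤ :=
  groupCohomology (Rep.trivial ℤ (Crys q M hq) ℤ) k

end Crystal

/-- The holonomy matrix. -/
def holM : Matrix (Fin 5) (Fin 5) ℤ := !![1, 1, 0, 0, 0; -1, 0, 0, -1, 0; 0, 0, 0, 0, -1; -1, 0, 0, 0, 0; 0, 0, -1, 0, 0]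

lemma holM_pow : holM ^ 4 = 1 := by decide

/-- `H^k(ℤ^5 ⋊ ℤ/4, ℤ)`, where the generator of `ℤ/4` acts on `ℤ^5` by left
multiplication by the matrix `holM`. -/
noncomputable abbrev H (k : ℕ) : ModuleCat ℤ := Crystal.cohCrys 4 holM holM_pow k

/-- `H^i(ℤ/4, H^j(ℤ^5, ℤ))`, with the functorially induced action on coefficients. -/
noncomputable abbrev Hc (i j : ℕ) : ModuleCat ℤ := Crystal.cohOfCoh 4 holM holM_pow i j

set_option synthInstance.maxHeartbeats 200000
set_option synthInstance.maxSize 2000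
set_option linter.unusedSimpArgs false
set_option linter.all false

/-! ## Modules with operators and the small complexes -/

/-- An abelian group with operators `u v t x` satisfying the relations of `ℤ^3 ⋊ ℤ/4`. -/
structure Ops3 (B : Type) [AddCommGroup B] where
  u : B ≃+ B
  v : B ≃+ B
  t : B ≃+ B
  x : B ≃+ B
  vu : ∀ a, v (u a) = u (v a)
  tu : ∀ a, t (u a) = u (t a)
  tv : ∀ a, t (v a) = v (t a)
  vx : ∀ a, v (x a) = x (u a)
  ux : ∀ a, u (x a) = x (v.symm a)
  tx : ∀ a, t (x a) = x (v (t a))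
  x4 : ∀ a, x (x (x (x a))) = a

namespace Ops3

variable {B : Type} [AddCommGroup B] (O : Ops3 B)

lemma vui (a : B) : O.v (O.u.symm a) = O.u.symm (O.v a) := by
  apply O.u.injective; rw [← O.vu]; simp
lemma viu (a : B) : O.v.symm (O.u a) = O.u (O.v.symm a) := by
  apply O.v.injective; rw [O.vu]; simp
lemma viui (a : B) : O.v.symm (O.u.symm a) = O.u.symm (O.v.symm a) := by
  apply O.v.injective; rw [O.vui]; simp
lemma tui (a : B) : O.t (O.u.symm a) = O.u.symm (O.t a) := by
  apply O.u.injective; rw [← O.tu]; simp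
lemma tvi (a : B) : O.t (O.v.symm a) = O.v.symm (O.t a) := by
  apply O.v.injective; rw [← O.tv]; simp
lemma vix (a : B) : O.v.symm (O.x a) = O.x (O.u.symm a) := by
  apply O.v.injective; rw [O.vx]; simp
lemma uix (a : B) : O.u.symm (O.x a) = O.x (O.v a) := by
  apply O.u.injective; rw [O.ux]; simp

end Ops3

/-- Underlying groups of the complex for `ℤ[i] ⋊ ℤ/4`. -/
abbrev CK (B : Type) : Type := B × B × B × B

/-- Underlying groups of the complex for `ℤ^3 ⋊ ℤ/4`. -/
abbrev C3 (B : Type) : Type := CK B × CK B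

instance instCK (B : Type) [AddCommGroup B] : AddCommGroup (CK B) := Prod.instAddCommGroup

instance instC3 (B : Type) [AddCommGroup B] : AddCommGroup (C3 B) := Prod.instAddCommGroup

section complexes

variable {B : Type} [AddCommGroup B] (O : Ops3 B)

/-- The differential of the complex for `ℤ[i] ⋊ ℤ/4`; the Boolean is the parity of the degree. -/
def DK : Bool → CK B → CK B
  | false, (a, b, c, e) =>
    (O.x a - a,
     O.u a - a - (b - O.x (O.v.symm c) - O.x (O.x (O.u.symm b)) + O.x (O.x (O.x c))),
     O.v a - a - (c + O.x b - O.x (O.x (O.v.symm c)) - O.x (O.x (O.x (O.u.symm b)))),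
     O.u c - c - (O.v b - b) + (O.x (O.v.symm e) - e))
  | true, (a, b, c, e) =>
    (a + O.x a + O.x (O.x a) + O.x (O.x (O.x a)),
     O.u a - a - (-O.x (O.v.symm c) - b),
     O.v a - a - (O.x b - c),
     O.u c - c - (O.v b - b) + (e + O.x (O.v.symm e) + O.x (O.x (O.u.symm (O.v.symm e)))
       + O.x (O.x (O.x (O.u.symm e)))))

/-- The chain map lifting the action of `t`. -/
def TK : Bool → CK B → CK B
  | false, (a, b, c, e) =>
    (O.t a - (O.x (O.t c) + O.x (O.x (O.u (O.t c))) + O.x (O.x (O.t b)) + O.x (O.x (O.x (O.t b))))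
      + O.x (O.x (O.t e)),
     O.t b, O.t c - O.x (O.t e), O.t e)
  | true, (a, b, c, e) =>
    (O.t a - O.x (O.t c) + O.x (O.x (O.t e)),
     O.t b + O.x (O.x (O.t e)) + O.x (O.x (O.x (O.t e))),
     O.t c - O.x (O.t e) - O.x (O.x (O.v.symm (O.t e))), O.t e)

/-- The differential of the complex for `ℤ^3 ⋊ ℤ/4`. -/
def D3 (p : Bool) (z : C3 B) : C3 B := (DK O p z.1, TK O p z.1 - z.1 - DK O (!p) z.2)

lemma DK_add (p : Bool) (y z : CK B) : DK O p (y + z) = DK O p y + DK O p z := by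
  obtain ⟨a, b, c, e⟩ := y
  obtain ⟨a', b', c', e'⟩ := z
  cases p <;> simp only [DK, Prod.mk_add_mk, map_add, Prod.mk.injEq] <;>
    refine ⟨?_, ?_, ?_, ?_⟩ <;> first | rfl | abel | simp

lemma TK_add (p : Bool) (y z : CK B) : TK O p (y + z) = TK O p y + TK O p z := by
  obtain ⟨a, b, c, e⟩ := y
  obtain ⟨a', b', c', e'⟩ := z
  cases p <;> simp only [TK, Prod.mk_add_mk, map_add, Prod.mk.injEq] <;>
    refine ⟨?_, ?_, ?_, ?_⟩ <;> first | rfl | abel | simp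

lemma DK_DK (p : Bool) (z : CK B) : DK O (!p) (DK O p z) = 0 := by
  obtain ⟨a, b, c, e⟩ := z
  cases p <;> simp only [DK, Bool.not_false, Bool.not_true, Prod.mk_eq_zero, map_add, map_sub,
    map_neg, O.vu, O.tu, O.tv, O.vx, O.ux, O.tx, O.x4, O.vui, O.viu, O.viui, O.tui, O.tvi, O.vix,
    O.uix, AddEquiv.apply_symm_apply, AddEquiv.symm_apply_apply] <;>
    refine ⟨?_, ?_, ?_, ?_⟩ <;> first | rfl | abel | simp

lemma DK_TK (p : Bool) (z : CK B) : DK O p (TK O p z) = TK O (!p) (DK O p z) := by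
  obtain ⟨a, b, c, e⟩ := z
  cases p <;> simp only [DK, TK, Bool.not_false, Bool.not_true, Prod.mk.injEq, map_add, map_sub,
    map_neg, O.vu, O.tu, O.tv, O.vx, O.ux, O.tx, O.x4, O.vui, O.viu, O.viui, O.tui, O.tvi, O.vix,
    O.uix, AddEquiv.apply_symm_apply, AddEquiv.symm_apply_apply] <;>
    refine ⟨?_, ?_, ?_, ?_⟩ <;> first | rfl | abel | simp

/-- `DK` as a homomorphism. -/
def DKh (p : Bool) : CK B →+ CK B := AddMonoidHom.mk' (DK O p) (DK_add O p)

lemma DK_sub (p : Bool) (y z : CK B) : DK O p (y - z) = DK O p y - DK O p z :=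
  map_sub (DKh O p) y z

lemma DK_neg (p : Bool) (y : CK B) : DK O p (-y) = -DK O p y :=
  map_neg (DKh O p) y

lemma DK_zero (p : Bool) : DK O p 0 = 0 := map_zero (DKh O p)

lemma TK_sub (p : Bool) (y z : CK B) : TK O p (y - z) = TK O p y - TK O p z :=
  map_sub (AddMonoidHom.mk' (TK O p) (TK_add O p)) y z

lemma D3_add (p : Bool) (y z : C3 B) : D3 O p (y + z) = D3 O p y + D3 O p z := by
  simp only [D3, Prod.fst_add, Prod.snd_add, DK_add, TK_add, Prod.mk_add_mk, Prod.mk.injEq,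
    true_and]
  abel

lemma D3_D3 (p : Bool) (z : C3 B) : D3 O (!p) (D3 O p z) = 0 := by
  have h := DK_DK O (!p) z.2
  simp only [D3, DK_DK, DK_sub, DK_TK, Bool.not_not, Prod.mk_eq_zero, true_and] at h ⊢
  rw [h]; abel

/-- `D3` as a homomorphism. -/
def D3h (p : Bool) : C3 B →+ C3 B := AddMonoidHom.mk' (D3 O p) (D3_add O p)

lemma D3_sub (p : Bool) (y z : C3 B) : D3 O p (y - z) = D3 O p y - D3 O p z :=
  map_sub (D3h O p) y z

lemma D3_neg (p : Bool) (y : C3 B) : D3 O p (-y) = -D3 O p y :=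
  map_neg (D3h O p) y

lemma D3_zero (p : Bool) : D3 O p 0 = 0 := map_zero (D3h O p)

end complexes


set_option linter.all false
set_option synthInstance.maxHeartbeats 200000
set_option synthInstance.maxSize 2000
/-! ## Supports and functoriality -/

/-- Cochains of degree `< m` in the first complex. -/
def FK (B : Type) [AddCommGroup B] (m : ℕ) : AddSubgroup (CK B) where
  carrier := {z | (m ≤ 0 → z.1 = 0) ∧ (m ≤ 1 → z.2.1 = 0 ∧ z.2.2.1 = 0) ∧ (m ≤ 2 → z.2.2.2 = 0)}
  zero_mem' := by simp
  add_mem' := by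
    rintro y z ⟨h1, h2, h3⟩ ⟨k1, k2, k3⟩
    refine ⟨fun h => ?_, fun h => ⟨?_, ?_⟩, fun h => ?_⟩
    · simp [h1 h, k1 h]
    · simp [h2 h, k2 h]
    · simp [h2 h, k2 h]
    · simp [h3 h, k3 h]
  neg_mem' := by
    rintro y ⟨h1, h2, h3⟩
    refine ⟨fun h => ?_, fun h => ⟨?_, ?_⟩, fun h => ?_⟩
    · simp [h1 h]
    · simp [h2 h]
    · simp [h2 h]
    · simp [h3 h]

lemma mem_FK {B : Type} [AddCommGroup B] {m : ℕ} {a b c e : B} :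
    ((a, b, c, e) : CK B) ∈ FK B m ↔ (m ≤ 0 → a = 0) ∧ (m ≤ 1 → b = 0 ∧ c = 0) ∧ (m ≤ 2 → e = 0) :=
  Iff.rfl

/-- Cochains of degree `< m` in the second complex. -/
def F3 (B : Type) [AddCommGroup B] (m : ℕ) : AddSubgroup (C3 B) := (FK B m).prod (FK B (m - 1))

lemma mem_F3 {B : Type} [AddCommGroup B] {m : ℕ} {z : C3 B} :
    z ∈ F3 B m ↔ z.1 ∈ FK B m ∧ z.2 ∈ FK B (m - 1) := Iff.rfl

lemma FK_mono {B : Type} [AddCommGroup B] {m n : ℕ} (h : m ≤ n) : FK B m ≤ FK B n := by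
  rintro ⟨a, b, c, e⟩ hz
  rw [mem_FK] at *
  exact ⟨fun k => hz.1 (h.trans k), fun k => hz.2.1 (h.trans k), fun k => hz.2.2 (h.trans k)⟩

lemma F3_mono {B : Type} [AddCommGroup B] {m n : ℕ} (h : m ≤ n) : F3 B m ≤ F3 B n := by
  rintro z hz
  exact ⟨FK_mono h hz.1, FK_mono (by omega) hz.2⟩

lemma FK_zero {B : Type} [AddCommGroup B] {z : CK B} (hz : z ∈ FK B 0) : z = 0 := by
  obtain ⟨a, b, c, e⟩ := z
  rw [mem_FK] at hz
  obtain ⟨h1, h2, h3⟩ := hz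
  simp [h1, h2, h3]

lemma F3_zero {B : Type} [AddCommGroup B] {z : C3 B} (hz : z ∈ F3 B 0) : z = 0 :=
  Prod.ext (FK_zero hz.1) (FK_zero hz.2)

section
variable {B : Type} [AddCommGroup B] (O : Ops3 B)

lemma DK_mem (p : Bool) {m : ℕ} {z : CK B} (hz : z ∈ FK B m) : DK O p z ∈ FK B (m + 1) := by
  obtain ⟨a, b, c, e⟩ := z
  rw [mem_FK] at hz
  obtain ⟨h1, h2, h3⟩ := hz
  cases p
  all_goals
    simp only [DK, mem_FK]
    refine ⟨fun h => by omega, fun h => ?_, fun h => ?_⟩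
    · have h' : m ≤ 0 := by omega
      simp [h1 h', h2 (by omega)]
    · simp [h2 (by omega), h3 (by omega)]

lemma TK_mem (p : Bool) {m : ℕ} {z : CK B} (hz : z ∈ FK B m) : TK O p z ∈ FK B m := by
  obtain ⟨a, b, c, e⟩ := z
  rw [mem_FK] at hz
  obtain ⟨h1, h2, h3⟩ := hz
  cases p
  all_goals
    simp only [TK, mem_FK]
    refine ⟨fun h => ?_, fun h => ?_, fun h => ?_⟩
    · simp [h1 h, h2 (by omega), h3 (by omega)]
    · simp [h2 (by omega), h3 (by omega)]
    · simp [h3 (by omega)]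

lemma D3_mem (p : Bool) {m : ℕ} {z : C3 B} (hz : z ∈ F3 B m) : D3 O p z ∈ F3 B (m + 1) := by
  refine ⟨DK_mem O p hz.1, ?_⟩
  have h : DK O (!p) z.2 ∈ FK B m := by
    rcases Nat.eq_zero_or_pos m with h0 | h0
    · subst h0
      rw [FK_zero hz.2, DK_zero]; exact zero_mem _
    · have := DK_mem O (!p) hz.2
      rwa [Nat.sub_add_cancel h0] at this
  exact (FK B m).sub_mem ((FK B m).sub_mem (TK_mem O p hz.1) hz.1) h

end

/-- Homomorphisms commuting with all operators. -/
structure IsOpsHom {B B' : Type} [AddCommGroup B] [AddCommGroup B'] (O : Ops3 B) (O' : Ops3 B')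
    (f : B →+ B') : Prop where
  u : ∀ a, f (O.u a) = O'.u (f a)
  v : ∀ a, f (O.v a) = O'.v (f a)
  t : ∀ a, f (O.t a) = O'.t (f a)
  x : ∀ a, f (O.x a) = O'.x (f a)

section
variable {B B' B'' : Type} [AddCommGroup B] [AddCommGroup B'] [AddCommGroup B'']

/-- The induced map on the first complex. -/
def CKmap (f : B →+ B') (z : CK B) : CK B' := (f z.1, f z.2.1, f z.2.2.1, f z.2.2.2)

/-- The induced map on the second complex. -/
def C3map (f : B →+ B') (z : C3 B) : C3 B' := (CKmap f z.1, CKmap f z.2)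

lemma C3map_add (f : B →+ B') (y z : C3 B) : C3map f (y + z) = C3map f y + C3map f z := by
  simp [C3map, CKmap]

lemma C3map_zero (f : B →+ B') : C3map f (0 : C3 B) = 0 := by
  simp [C3map, CKmap]

lemma C3map_sub (f : B →+ B') (y z : C3 B) : C3map f (y - z) = C3map f y - C3map f z := by
  simp [C3map, CKmap]

lemma C3map_neg (f : B →+ B') (y : C3 B) : C3map f (-y) = -C3map f y := by
  simp [C3map, CKmap]

lemma CKmap_mem (f : B →+ B') {m : ℕ} {z : CK B} (hz : z ∈ FK B m) : CKmap f z ∈ FK B' m := by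
  obtain ⟨a, b, c, e⟩ := z
  obtain ⟨h1, h2, h3⟩ := mem_FK.1 hz
  refine mem_FK.2 ⟨fun h => ?_, fun h => ?_, fun h => ?_⟩
  · simp [h1 h]
  · simp [h2 h]
  · simp [h3 h]

lemma C3map_mem (f : B →+ B') {m : ℕ} {z : C3 B} (hz : z ∈ F3 B m) : C3map f z ∈ F3 B' m :=
  ⟨CKmap_mem f hz.1, CKmap_mem f hz.2⟩

lemma C3map_inj (f : B →+ B') (hf : Function.Injective f) : Function.Injective (C3map f) := by
  rintro ⟨⟨a, b, c, e⟩, a', b', c', e'⟩ ⟨⟨a1, b1, c1, e1⟩, a1', b1', c1', e1'⟩ h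
  simpa [C3map, CKmap, hf.eq_iff] using h

lemma CK_lift (f : B →+ B') (g : B' →+ B'') (h : ∀ b, g b = 0 → ∃ a, f a = b) {m : ℕ}
    {z : CK B'} (hz : z ∈ FK B' m) (hg : CKmap g z = 0) : ∃ y ∈ FK B m, CKmap f y = z := by
  have key : ∀ (b : B') (P : Prop), (P → b = 0) → g b = 0 → ∃ a, (P → a = 0) ∧ f a = b := by
    intro b P hP hb
    by_cases hp : P
    · exact ⟨0, fun _ => rfl, by rw [hP hp, map_zero]⟩
    · obtain ⟨a, ha⟩ := h b hb
      exact ⟨a, fun k => absurd k hp, ha⟩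
  obtain ⟨a, b, c, e⟩ := z
  obtain ⟨h1, h2, h3⟩ := mem_FK.1 hz
  simp only [CKmap, Prod.mk_eq_zero] at hg
  obtain ⟨a', ha, ha'⟩ := key a _ h1 hg.1
  obtain ⟨b', hb, hb'⟩ := key b _ (fun k => (h2 k).1) hg.2.1
  obtain ⟨c', hc, hc'⟩ := key c _ (fun k => (h2 k).2) hg.2.2.1
  obtain ⟨e', he, he'⟩ := key e _ h3 hg.2.2.2
  exact ⟨(a', b', c', e'), mem_FK.2 ⟨ha, fun k => ⟨hb k, hc k⟩, he⟩, by
    simp [CKmap, ha', hb', hc', he']⟩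

lemma C3_lift (f : B →+ B') (g : B' →+ B'') (h : ∀ b, g b = 0 → ∃ a, f a = b) {m : ℕ}
    {z : C3 B'} (hz : z ∈ F3 B' m) (hg : C3map g z = 0) : ∃ y ∈ F3 B m, C3map f y = z := by
  obtain ⟨y1, h1, h1'⟩ := CK_lift f g h hz.1 (congrArg Prod.fst hg)
  obtain ⟨y2, h2, h2'⟩ := CK_lift f g h hz.2 (congrArg Prod.snd hg)
  exact ⟨(y1, y2), ⟨h1, h2⟩, Prod.ext h1' h2'⟩

variable {O : Ops3 B} {O' : Ops3 B'}

lemma IsOpsHom.ui {f : B →+ B'} (hf : IsOpsHom O O' f) (a : B) :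
    f (O.u.symm a) = O'.u.symm (f a) := by
  apply O'.u.injective; rw [← hf.u]; simp

lemma IsOpsHom.vi {f : B →+ B'} (hf : IsOpsHom O O' f) (a : B) :
    f (O.v.symm a) = O'.v.symm (f a) := by
  apply O'.v.injective; rw [← hf.v]; simp

lemma DK_map {f : B →+ B'} (hf : IsOpsHom O O' f) (p : Bool) (z : CK B) :
    DK O' p (CKmap f z) = CKmap f (DK O p z) := by
  obtain ⟨a, b, c, e⟩ := z
  cases p <;> simp only [DK, CKmap, map_add, map_sub, map_neg, hf.u, hf.v, hf.x, hf.ui, hf.vi]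

lemma TK_map {f : B →+ B'} (hf : IsOpsHom O O' f) (p : Bool) (z : CK B) :
    TK O' p (CKmap f z) = CKmap f (TK O p z) := by
  obtain ⟨a, b, c, e⟩ := z
  cases p <;> simp only [TK, CKmap, map_add, map_sub, map_neg, hf.u, hf.v, hf.x, hf.t, hf.vi]

lemma D3_map {f : B →+ B'} (hf : IsOpsHom O O' f) (p : Bool) (z : C3 B) :
    D3 O' p (C3map f z) = C3map f (D3 O p z) := by
  simp only [D3, C3map, DK_map hf, TK_map hf]
  simp [CKmap]

end

/-! ## Operators for the full group -/

/-- An abelian group with operators `u v t x e f` satisfying the relations of `ℤ^5 ⋊ ℤ/4`. -/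
structure OpsG (A : Type) [AddCommGroup A] extends Ops3 A where
  e : A ≃+ A
  f : A ≃+ A
  eu : ∀ a, e (u a) = u (e a)
  ev : ∀ a, e (v a) = v (e a)
  et : ∀ a, e (t a) = t (e a)
  fu : ∀ a, f (u a) = u (f a)
  fv : ∀ a, f (v a) = v (f a)
  ft : ∀ a, f (t a) = t (f a)
  ef : ∀ a, e (f a) = f (e a)
  ex : ∀ a, e (x a) = x (f a)
  fx : ∀ a, f (x a) = x (e a)

namespace OpsG
variable {A : Type} [AddCommGroup A] (O : OpsG A)

/-- The operators on `A × A`, with `x` twisted by the swap. -/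
def O2 : Ops3 (A × A) where
  u := AddEquiv.prodCongr O.u O.u
  v := AddEquiv.prodCongr O.v O.v
  t := AddEquiv.prodCongr O.t O.t
  x := (AddEquiv.prodCongr O.x O.x).trans AddEquiv.prodComm
  vu a := Prod.ext (O.vu a.1) (O.vu a.2)
  tu a := Prod.ext (O.tu a.1) (O.tu a.2)
  tv a := Prod.ext (O.tv a.1) (O.tv a.2)
  vx a := Prod.ext (O.vx a.2) (O.vx a.1)
  ux a := by
    obtain ⟨b, c⟩ := a
    ext
    · exact O.ux c
    · exact O.ux b
  tx a := Prod.ext (O.tx a.2) (O.tx a.1)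
  x4 a := Prod.ext (O.x4 a.1) (O.x4 a.2)

/-- The operators with `x` replaced by `-x`. -/
def On : Ops3 A where
  u := O.u
  v := O.v
  t := O.t
  x := O.x.trans (AddEquiv.neg A)
  vu := O.vu
  tu := O.tu
  tv := O.tv
  vx a := by simp [O.vx]
  ux a := by simp [O.ux]
  tx a := by simp [O.tx]
  x4 a := by simp [O.x4]

/-- First Koszul map. -/
def d1 : A →+ A × A :=
  AddMonoidHom.prod (O.e.toAddMonoidHom - AddMonoidHom.id A) (O.f.toAddMonoidHom - AddMonoidHom.id A)

/-- Second Koszul map. -/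
def d2 : A × A →+ A :=
  (O.e.toAddMonoidHom - AddMonoidHom.id A).comp (AddMonoidHom.snd A A) -
    (O.f.toAddMonoidHom - AddMonoidHom.id A).comp (AddMonoidHom.fst A A)

lemma d1_apply (a : A) : O.d1 a = (O.e a - a, O.f a - a) := rfl
lemma d2_apply (b c : A) : O.d2 (b, c) = (O.e c - c) - (O.f b - b) := rfl

lemma d1_hom : IsOpsHom O.toOps3 O.O2 O.d1 where
  u a := by simp only [d1_apply, O.eu, O.fu, ← map_sub]; rfl
  v a := by simp only [d1_apply, O.ev, O.fv, ← map_sub]; rfl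
  t a := by simp only [d1_apply, O.et, O.ft, ← map_sub]; rfl
  x a := by simp only [d1_apply, O.ex, O.fx, ← map_sub]; rfl

lemma d2_hom : IsOpsHom O.O2 O.On O.d2 where
  u := by rintro ⟨b, c⟩; show O.d2 (O.u b, O.u c) = O.u _; simp [d2_apply, O.eu, O.fu]
  v := by rintro ⟨b, c⟩; show O.d2 (O.v b, O.v c) = O.v _; simp [d2_apply, O.ev, O.fv]
  t := by rintro ⟨b, c⟩; show O.d2 (O.t b, O.t c) = O.t _; simp [d2_apply, O.et, O.ft]
  x := by
    rintro ⟨b, c⟩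
    show O.d2 (O.x c, O.x b) = -O.x _
    simp [d2_apply, O.ex, O.fx]

lemma d2_d1 (a : A) : O.d2 (O.d1 a) = 0 := by
  rw [d1_apply, d2_apply, map_sub, map_sub, O.ef]; abel

end OpsG

/-- Underlying groups of the complex for `ℤ^5 ⋊ ℤ/4`. -/
abbrev CG (A : Type) : Type := C3 A × C3 (A × A) × C3 A

instance instCG (A : Type) [AddCommGroup A] : AddCommGroup (CG A) := Prod.instAddCommGroup

/-- Cochains of degree `< m`. -/
def FG (A : Type) [AddCommGroup A] (m : ℕ) : AddSubgroup (CG A) :=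
  (F3 A m).prod ((F3 (A × A) (m - 1)).prod (F3 A (m - 2)))

section
variable {A : Type} [AddCommGroup A] (O : OpsG A)

/-- The differential of the complex for `ℤ^5 ⋊ ℤ/4`. -/
def DG (p : Bool) (z : CG A) : CG A :=
  (D3 O.toOps3 p z.1, C3map O.d1 z.1 - D3 O.O2 (!p) z.2.1, C3map O.d2 z.2.1 + D3 O.On p z.2.2)

lemma DG_add (p : Bool) (y z : CG A) : DG O p (y + z) = DG O p y + DG O p z := by
  simp only [DG, Prod.fst_add, Prod.snd_add, D3_add, C3map_add, Prod.mk_add_mk, Prod.mk.injEq,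
    true_and]
  constructor <;> abel

/-- `DG` as a homomorphism. -/
def DGh (p : Bool) : CG A →+ CG A := AddMonoidHom.mk' (DG O p) (DG_add O p)

lemma DGh_apply (p : Bool) (y : CG A) : DGh O p y = DG O p y := rfl

lemma DG_sub (p : Bool) (y z : CG A) : DG O p (y - z) = DG O p y - DG O p z :=
  map_sub (DGh O p) y z

lemma DG_zero (p : Bool) : DG O p 0 = 0 := map_zero (DGh O p)

lemma C3map_d2_d1 (z : C3 A) : C3map O.d2 (C3map O.d1 z) = 0 := by
  simp only [C3map, CKmap, O.d2_d1]; rfl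

lemma DG_DG (p : Bool) (z : CG A) : DG O (!p) (DG O p z) = 0 := by
  have h := D3_D3 O.O2 (!p) z.2.1
  simp only [Bool.not_not] at h
  simp only [DG, D3_D3, D3_sub, D3_add, Bool.not_not, D3_map O.d1_hom, D3_map O.d2_hom, C3map_sub,
    C3map_d2_d1, h]
  simp

lemma DG_mem (p : Bool) {m : ℕ} {z : CG A} (hz : z ∈ FG A m) : DG O p z ∈ FG A (m + 1) := by
  have hs : ∀ {B : Type} [AddCommGroup B] (O' : Ops3 B) (q : Bool) (k : ℕ) (y : C3 B),
      y ∈ F3 B (k - 1) → D3 O' q y ∈ F3 B k := by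
    intro B _ O' q k y hy
    rcases Nat.eq_zero_or_pos k with h0 | h0
    · subst h0
      rw [F3_zero hy, D3_zero]; exact zero_mem _
    · have := D3_mem O' q hy
      rwa [Nat.sub_add_cancel h0] at this
  refine ⟨D3_mem _ p hz.1, (F3 _ _).sub_mem (C3map_mem _ hz.1) (hs _ _ _ _ hz.2.1),
    (F3 _ _).add_mem (C3map_mem _ hz.2.1) (hs _ _ _ _ hz.2.2)⟩

end

set_option linter.all false
set_option synthInstance.maxHeartbeats 200000
set_option synthInstance.maxSize 2000
/-! ## Acyclicity criteria -/

/-- Conditions on operators guaranteeing acyclicity of the complexes. -/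
structure Good {B : Type} [AddCommGroup B] (O : Ops3 B) : Prop where
  g1 : ∀ b, ∃ c, O.u c - c = b
  g2 : ∀ b, O.u b = b → ∃ c, O.u c = c ∧ O.v c - c = b
  g3 : ∀ b, O.u b = b → O.v b = b → O.x b = b →
    ∃ c, O.u c = c ∧ O.v c = c ∧ O.x c = c ∧ O.t c - c = b
  g4 : ∀ b, O.u b = b → O.v b = b → b + O.x b + O.x (O.x b) + O.x (O.x (O.x b)) = 0 →
    ∃ c, O.u c = c ∧ O.v c = c ∧ O.x c - c = b
  g5 : ∀ b, O.u b = b → O.v b = b → O.x b = b →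
    ∃ c, O.u c = c ∧ O.v c = c ∧ c + O.x c + O.x (O.x c) + O.x (O.x (O.x c)) = b

section
variable {B : Type} [AddCommGroup B] {O : Ops3 B}

/-- The last component of the differential. -/
lemma DK_last (p : Bool) (a b c : B) : (DK O p (a, b, c, 0)).2.2.2 = O.u c - c - (O.v b - b) := by
  cases p <;> simp [DK]

lemma DK_mid (p : Bool) (a : B) : (DK O p (a, 0, 0, 0)).2 = (O.u a - a, O.v a - a, 0) := by
  cases p <;> simp [DK]

lemma DK_mid' (p : Bool) (b c : B) : (DK O p (0, 0, c, 0)).2.2.2 = O.u c - c := by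
  cases p <;> simp [DK]

lemma acyclicK (hO : Good O) (p : Bool) {n : ℕ} (hn : 1 ≤ n) {z : CK B} (hz : z ∈ FK B (n + 1))
    (hD : DK O p z = 0) : ∃ y ∈ FK B n, DK O (!p) y = z := by
  have step1 : ∃ y ∈ FK B n, (z - DK O (!p) y).2.2.2 = 0 := by
    rcases Nat.lt_or_ge n 2 with h | h
    · refine ⟨0, zero_mem _, ?_⟩
      rw [DK_zero, sub_zero]
      exact hz.2.2 (by omega)
    · obtain ⟨c, hc⟩ := hO.g1 z.2.2.2
      refine ⟨(0, 0, c, 0), mem_FK.2 ⟨fun _ => rfl, fun _ => by omega, fun _ => rfl⟩, ?_⟩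
      simp only [Prod.snd_sub, DK_mid' (!p) c c, hc, sub_self]
  obtain ⟨y1, hy1, h1⟩ := step1
  have hD1 : DK O p (z - DK O (!p) y1) = 0 := by
    have := DK_DK O (!p) y1
    rw [Bool.not_not] at this
    rw [DK_sub, hD, this, sub_zero]
  generalize hz1 : z - DK O (!p) y1 = z1 at h1 hD1
  obtain ⟨a, b, c, e⟩ := z1
  simp only at h1
  subst h1
  have h2 := congrArg (fun w => w.2.2.2) hD1
  rw [DK_last] at h2
  have h2' : O.u c - c = O.v b - b := sub_eq_zero.1 h2
  obtain ⟨a1, ha1⟩ := hO.g1 b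
  obtain ⟨a2, ha2, ha2'⟩ := hO.g2 (c - (O.v a1 - a1)) (by
    rw [map_sub, map_sub, ← O.vu]
    have : O.v (O.u a1) - O.u a1 - (O.v a1 - a1) = O.v b - b := by
      rw [← ha1, map_sub]; abel
    rw [sub_eq_sub_iff_sub_eq_sub, h2', ← this])
  have hD2 : DK O p ((a, b, c, 0) - DK O (!p) (a1 + a2, 0, 0, 0)) = 0 := by
    have := DK_DK O (!p) (a1 + a2, 0, 0, 0)
    rw [Bool.not_not] at this
    rw [DK_sub, hD1, this, sub_zero]
  have h3 : ((a, b, c, 0) - DK O (!p) (a1 + a2, 0, 0, 0) : CK B).2 = 0 := by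
    rw [Prod.snd_sub, DK_mid]
    simp only [map_add, ha2]
    have e1 : O.u a1 + a2 - (a1 + a2) = b := by rw [← ha1]; abel
    have e2 : O.v a1 + O.v a2 - (a1 + a2) = c := by
      have : c = (O.v a2 - a2) + (O.v a1 - a1) := by rw [ha2']; abel
      rw [this]; abel
    rw [e1, e2]; simp
  generalize hz2 : ((a, b, c, 0) - DK O (!p) (a1 + a2, 0, 0, 0) : CK B) = z2 at h3 hD2
  obtain ⟨a3, r⟩ := z2
  simp only at h3
  subst h3
  have h4 := congrArg (fun w => w.2) hD2
  have h4' : (DK O p (a3, 0, 0, 0)).2 = 0 := h4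
  rw [DK_mid] at h4'
  simp only [Prod.mk_eq_zero, and_true] at h4'
  have hu := sub_eq_zero.1 h4'.1
  have hv := sub_eq_zero.1 h4'.2
  have h5 : (DK O p (a3, 0, 0, 0)).1 = 0 := congrArg (fun w => w.1) hD2
  have step3 : ∃ a4, DK O (!p) (a4, 0, 0, 0) = (a3, 0, 0, 0) := by
    cases p
    · obtain ⟨a4, k1, k2, k3⟩ := hO.g5 a3 hu hv (sub_eq_zero.1 h5)
      exact ⟨a4, by simp [DK, k1, k2, k3]⟩
    · obtain ⟨a4, k1, k2, k3⟩ := hO.g4 a3 hu hv h5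
      exact ⟨a4, by simp [DK, k1, k2, k3]⟩
  obtain ⟨a4, h6⟩ := step3
  refine ⟨y1 + (a1 + a2, 0, 0, 0) + (a4, 0, 0, 0), ?_, ?_⟩
  · have hm : ∀ w : B, ((w, 0, 0, 0) : CK B) ∈ FK B n := fun w =>
      mem_FK.2 ⟨fun h => by omega, fun _ => ⟨rfl, rfl⟩, fun _ => rfl⟩
    exact add_mem (add_mem hy1 (hm _)) (hm _)
  · rw [DK_add, DK_add, h6]
    have h7 : ((a3, 0, 0, 0) : CK B) = (a3, 0) := rfl
    rw [h7, ← hz2, ← hz1]; abel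

lemma acyclic3 (hO : Good O) {n : ℕ} (hn : 1 ≤ n) {z : C3 B} (hz : z ∈ F3 B (n + 1))
    (hD : D3 O n.bodd z = 0) : ∃ y ∈ F3 B n, D3 O (!n.bodd) y = z := by
  obtain ⟨b, hb, hb'⟩ := acyclicK hO n.bodd hn hz.1 (congrArg Prod.fst hD)
  have hy : ((b, 0) : C3 B) ∈ F3 B n := ⟨hb, zero_mem _⟩
  have hw : z - D3 O (!n.bodd) (b, 0) ∈ F3 B (n + 1) := sub_mem hz (D3_mem O _ hy)
  have hDw : D3 O n.bodd (z - D3 O (!n.bodd) (b, 0)) = 0 := by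
    have := D3_D3 O (!n.bodd) (b, 0)
    rw [Bool.not_not] at this
    rw [D3_sub, hD, this, sub_zero]
  have hw1 : (z - D3 O (!n.bodd) (b, 0)).1 = 0 := by
    rw [Prod.fst_sub, D3, hb', sub_self]
  generalize hz1 : z - D3 O (!n.bodd) (b, 0) = w at hw hDw hw1
  obtain ⟨w1, w2⟩ := w
  simp only at hw1
  subst hw1
  have hw2 : w2 ∈ FK B n := hw.2
  have hT : ∀ q, TK O q 0 = 0 := fun q => map_zero (AddMonoidHom.mk' (TK O q) (TK_add O q))
  have hDw2 : DK O (!n.bodd) w2 = 0 := by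
    have := congrArg Prod.snd hDw
    simpa [D3, hT] using this
  have step : ∃ y ∈ F3 B n, D3 O (!n.bodd) y = (0, w2) := by
    rcases Nat.lt_or_ge n 2 with h | h
    · have h1 : n = 1 := by omega
      subst h1
      obtain ⟨a, b', c', e'⟩ := w2
      obtain ⟨-, k2, k3⟩ := mem_FK.1 hw2
      obtain ⟨rfl, rfl⟩ := k2 le_rfl
      obtain rfl := k3 (by norm_num)
      simp only [Nat.bodd_one, Bool.not_true] at hDw2 ⊢
      have e1 : O.x a - a = 0 := congrArg Prod.fst hDw2
      have e2 : (DK O false (a, 0, 0, 0)).2 = 0 := congrArg Prod.snd hDw2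
      rw [DK_mid] at e2
      simp only [Prod.mk_eq_zero, and_true] at e2
      obtain ⟨c, k1, k2, k3, k4⟩ := hO.g3 a (sub_eq_zero.1 e2.1) (sub_eq_zero.1 e2.2)
        (sub_eq_zero.1 e1)
      refine ⟨((c, 0, 0, 0), 0), ⟨mem_FK.2 ⟨fun h => by omega, fun _ => ⟨rfl, rfl⟩, fun _ => rfl⟩,
        zero_mem _⟩, ?_⟩
      simp [D3, DK_zero, DK, TK, k1, k2, k3, k4]
    · obtain ⟨m, rfl⟩ : ∃ m, n = m + 1 := ⟨n - 1, by omega⟩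
      obtain ⟨y, hy1, hy2⟩ := acyclicK hO _ (by omega) hw2 hDw2
      refine ⟨(0, -y), ⟨zero_mem _, (FK B _).neg_mem hy1⟩, ?_⟩
      simp [D3, DK_zero, hT, DK_neg]
      simpa using hy2
  obtain ⟨y, hy1, hy2⟩ := step
  refine ⟨(b, 0) + y, add_mem hy hy1, ?_⟩
  rw [D3_add, hy2, ← hz1]; abel

end

/-- The subgroup of elements invariant under `e` and `f`. -/
def OpsG.S {A : Type} [AddCommGroup A] (O : OpsG A) : AddSubgroup A where
  carrier := {a | O.e a = a ∧ O.f a = a}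
  zero_mem' := by simp
  add_mem' := by
    rintro a b ⟨h1, h2⟩ ⟨k1, k2⟩
    exact ⟨by rw [map_add, h1, k1], by rw [map_add, h2, k2]⟩
  neg_mem' := by
    rintro a ⟨h1, h2⟩
    exact ⟨by rw [map_neg, h1], by rw [map_neg, h2]⟩

/-- Restriction of an automorphism to a stable subgroup. -/
def restrictEquiv {A : Type} [AddCommGroup A] (S : AddSubgroup A) (w : A ≃+ A)
    (h : ∀ a ∈ S, w a ∈ S) (h' : ∀ a ∈ S, w.symm a ∈ S) : S ≃+ S where
  toFun a := ⟨w a, h a a.2⟩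
  invFun a := ⟨w.symm a, h' a a.2⟩
  left_inv a := by simp
  right_inv a := by simp
  map_add' a b := by ext; simp

lemma symm_comm {A : Type} [AddCommGroup A] {e u : A ≃+ A} (h : ∀ a, e (u a) = u (e a)) (a : A) :
    e (u.symm a) = u.symm (e a) := by
  apply u.injective; rw [← h]; simp

section
variable {A : Type} [AddCommGroup A] (O : OpsG A)

/-- The restricted operators on the invariants of `e` and `f`. -/
def OpsG.OS : Ops3 O.S where
  u := restrictEquiv O.S O.u (fun a h => ⟨by rw [O.eu, h.1], by rw [O.fu, h.2]⟩)
    (fun a h => ⟨by rw [symm_comm O.eu, h.1], by rw [symm_comm O.fu, h.2]⟩)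
  v := restrictEquiv O.S O.v (fun a h => ⟨by rw [O.ev, h.1], by rw [O.fv, h.2]⟩)
    (fun a h => ⟨by rw [symm_comm O.ev, h.1], by rw [symm_comm O.fv, h.2]⟩)
  t := restrictEquiv O.S O.t (fun a h => ⟨by rw [O.et, h.1], by rw [O.ft, h.2]⟩)
    (fun a h => ⟨by rw [symm_comm O.et, h.1], by rw [symm_comm O.ft, h.2]⟩)
  x := restrictEquiv O.S O.x (fun a h => ⟨by rw [O.ex, h.2], by rw [O.fx, h.1]⟩)
    (fun a h => ⟨by apply O.x.injective; rw [← O.fx]; simp [h.2],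
      by apply O.x.injective; rw [← O.ex]; simp [h.1]⟩)
  vu a := Subtype.ext (O.vu a)
  tu a := Subtype.ext (O.tu a)
  tv a := Subtype.ext (O.tv a)
  vx a := Subtype.ext (O.vx a)
  ux a := Subtype.ext (O.ux a)
  tx a := Subtype.ext (O.tx a)
  x4 a := Subtype.ext (O.x4 a)

lemma OpsG.OS_hom : IsOpsHom O.OS O.toOps3 O.S.subtype where
  u _ := rfl
  v _ := rfl
  t _ := rfl
  x _ := rfl

/-- Conditions guaranteeing acyclicity of the complex of the full group. -/
structure GoodG : Prop where
  ge : ∀ b, ∃ c, O.e c - c = b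
  gf : ∀ b, O.e b = b → ∃ c, O.e c = c ∧ O.f c - c = b
  gS : Good O.OS

lemma acyclicG (hO : GoodG O) {n : ℕ} (hn : 1 ≤ n) {z : CG A} (hz : z ∈ FG A (n + 1))
    (hD : DG O n.bodd z = 0) : ∃ y ∈ FG A n, DG O (!n.bodd) y = z := by
  have hDD : ∀ y, DG O n.bodd (DG O (!n.bodd) y) = 0 := fun y => by
    have := DG_DG O (!n.bodd) y
    rwa [Bool.not_not] at this
  obtain ⟨b', hb', hb''⟩ := C3_lift O.d2 (0 : A →+ A) (fun b _ => by
    obtain ⟨c, hc⟩ := hO.ge b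
    exact ⟨(0, c), by rw [O.d2_apply, hc]; simp⟩) hz.2.2 rfl
  have hy1 : ((0, b', 0) : CG A) ∈ FG A n :=
    ⟨zero_mem _, F3_mono (by omega) hb', zero_mem _⟩
  have hw : z - DG O (!n.bodd) (0, b', 0) ∈ FG A (n + 1) := sub_mem hz (DG_mem O _ hy1)
  have hDw : DG O n.bodd (z - DG O (!n.bodd) (0, b', 0)) = 0 := by
    rw [DG_sub, hD, hDD, sub_zero]
  have hw1 : (z - DG O (!n.bodd) (0, b', 0)).2.2 = 0 := by
    show z.2.2 - (C3map O.d2 b' + D3 O.On (!n.bodd) 0) = 0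
    rw [hb'', D3_zero, add_zero, sub_self]
  generalize hz1 : z - DG O (!n.bodd) (0, b', 0) = w at hw hDw hw1
  obtain ⟨w1, w2, w3⟩ := w
  simp only at hw1
  subst hw1
  have hdw2 : C3map O.d2 w2 = 0 := by
    have : C3map O.d2 w2 + D3 O.On n.bodd 0 = 0 := congrArg (fun r => r.2.2) hDw
    rwa [D3_zero, add_zero] at this
  obtain ⟨a', ha', ha''⟩ := C3_lift O.d1 O.d2 (by
    rintro ⟨b, c⟩ hbc
    rw [O.d2_apply, sub_eq_zero] at hbc
    obtain ⟨a1, ha1⟩ := hO.ge b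
    obtain ⟨a2, ha2, ha2'⟩ := hO.gf (c - (O.f a1 - a1)) (by
      rw [map_sub, map_sub, O.ef]
      have : O.f (O.e a1) - O.e a1 - (O.f a1 - a1) = O.f b - b := by
        rw [← ha1, map_sub]; abel
      rw [sub_eq_sub_iff_sub_eq_sub, hbc, ← this])
    refine ⟨a1 + a2, ?_⟩
    rw [O.d1_apply, map_add, map_add, ha2]
    have e1 : O.e a1 + a2 - (a1 + a2) = b := by rw [← ha1]; abel
    have e2 : O.f a1 + O.f a2 - (a1 + a2) = c := by
      have : c = (O.f a2 - a2) + (O.f a1 - a1) := by rw [ha2']; abel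
      rw [this]; abel
    rw [e1, e2]) hw.2.1 hdw2
  have hy2 : ((a', 0, 0) : CG A) ∈ FG A n := ⟨ha', zero_mem _, zero_mem _⟩
  have hv : (w1, w2, 0) - DG O (!n.bodd) (a', 0, 0) ∈ FG A (n + 1) := sub_mem hw (DG_mem O _ hy2)
  have hDv : DG O n.bodd ((w1, w2, 0) - DG O (!n.bodd) (a', 0, 0)) = 0 := by
    rw [DG_sub, hDw, hDD, sub_zero]
  have hv1 : (((w1, w2, 0) : CG A) - DG O (!n.bodd) (a', 0, 0)).2 = 0 := by
    rw [Prod.snd_sub, DG, ha'', D3_zero, D3_zero, C3map_zero]; simp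
  generalize hz2 : ((w1, w2, 0) : CG A) - DG O (!n.bodd) (a', 0, 0) = v at hv hDv hv1
  obtain ⟨v1, v2⟩ := v
  simp only at hv1
  subst hv1
  have hD1 : D3 O.toOps3 n.bodd v1 = 0 := congrArg Prod.fst hDv
  have hd1 : C3map O.d1 v1 = 0 := by
    have : C3map O.d1 v1 - D3 O.O2 (!n.bodd) 0 = 0 := congrArg (fun r => r.2.1) hDv
    rwa [D3_zero, sub_zero] at this
  obtain ⟨s, hs, hs'⟩ := C3_lift O.S.subtype O.d1 (by
    intro b hb
    rw [O.d1_apply, Prod.mk_eq_zero, sub_eq_zero, sub_eq_zero] at hb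
    exact ⟨⟨b, hb⟩, rfl⟩) hv.1 hd1
  have hDs : D3 O.OS n.bodd s = 0 := by
    apply C3map_inj O.S.subtype Subtype.val_injective
    rw [← D3_map O.OS_hom, hs', hD1, C3map_zero]
  obtain ⟨r, hr, hr'⟩ := acyclic3 hO.gS hn hs hDs
  have hy3 : ((C3map O.S.subtype r, 0, 0) : CG A) ∈ FG A n :=
    ⟨C3map_mem _ hr, zero_mem _, zero_mem _⟩
  have hd : C3map O.d1 (C3map O.S.subtype r) = 0 := by
    have : ∀ a : O.S, O.d1 a = 0 := fun a => by
      rw [O.d1_apply, a.2.1, a.2.2, sub_self]; rfl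
    simp [C3map, CKmap, this]
  have h3 : DG O (!n.bodd) (C3map O.S.subtype r, 0, 0) = (v1, 0) := by
    rw [DG, D3_map O.OS_hom, hr', hs', hd, D3_zero, D3_zero, C3map_zero]; simp
  refine ⟨(0, b', 0) + (a', 0, 0) + (C3map O.S.subtype r, 0, 0), add_mem (add_mem hy1 hy2) hy3, ?_⟩
  rw [DG_add, DG_add, h3, ← hz2, ← hz1]; abel

end

set_option linter.all false
set_option synthInstance.maxHeartbeats 200000
set_option synthInstance.maxSize 2000
open Matrix
/-! ## The group -/

/-- The group `ℤ^5 ⋊ ℤ/4`. -/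
abbrev Gam : Type := Crystal.Crys 4 holM holM_pow

/-- Translations. -/
def lat (w : Fin 5 → ℤ) : Gam := SemidirectProduct.inl (Multiplicative.ofAdd w)

/-- The generator of `ℤ/4`. -/
def gx : Gam := SemidirectProduct.inr (Multiplicative.ofAdd 1)

/-- Basis of the lattice. -/
def gu : Gam := lat ![0, -1, 0, -1, 0]
/-- Basis of the lattice. -/
def gv : Gam := lat ![-1, 1, 0, 0, 0]
/-- Basis of the lattice. -/
def gt : Gam := lat ![1, 0, 0, 0, 0]
/-- Basis of the lattice. -/
def ge : Gam := lat ![0, 0, 1, 0, 0]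
/-- Basis of the lattice. -/
def gf : Gam := lat ![0, 0, 0, 0, -1]

lemma act_one (w : Fin 5 → ℤ) :
    Crystal.matAction 4 holM holM_pow (Multiplicative.ofAdd 1) (Multiplicative.ofAdd w) =
      Multiplicative.ofAdd (holM *ᵥ w) := by
  have h : ZMod.val (1 : ZMod 4) = 1 := rfl
  show ((Crystal.glToAut 5 (Crystal.matUnit holM 3 _)) ^ (ZMod.val (1 : ZMod 4))) _ = _
  rw [h, pow_one]
  rfl

lemma lat_mul (w w' : Fin 5 → ℤ) : lat w * lat w' = lat (w + w') := by
  rw [lat, lat, lat, ofAdd_add, map_mul]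

lemma lat_comm (w w' : Fin 5 → ℤ) : lat w * lat w' = lat w' * lat w := by
  rw [lat_mul, lat_mul, add_comm]

lemma gx_lat (w : Fin 5 → ℤ) : gx * lat w = lat (holM *ᵥ w) * gx := by
  rw [lat, lat, gx, ← act_one, SemidirectProduct.inl_aut]
  simp

lemma gx_pow : gx ^ 4 = 1 := by
  rw [gx, ← map_pow]
  have : (Multiplicative.ofAdd (1 : ZMod 4)) ^ 4 = 1 := by
    rw [← ofAdd_nsmul]; rfl
  rw [this, map_one]

lemma rel_xu : gx * gu = gv * gx := by
  rw [gu, gv, gx_lat]; congr 2; decide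
lemma rel_xe : gx * ge = gf * gx := by
  rw [ge, gf, gx_lat]; congr 2; decide
lemma rel_xf : gx * gf = ge * gx := by
  rw [ge, gf, gx_lat]; congr 2; decide
lemma rel_tx : gt * gx = gx * gv * gt := by
  rw [gt, gv, mul_assoc, lat_mul, gx_lat]; congr 2; decide
lemma rel_ux : gu * gx * gv = gx := by
  rw [gu, gv, mul_assoc, gx_lat, ← mul_assoc, lat_mul]
  have : (![0, -1, 0, -1, 0] + holM *ᵥ ![-1, 1, 0, 0, 0] : Fin 5 → ℤ) = 0 := by decide
  rw [this, lat, ofAdd_zero, map_one, one_mul]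

/-- Coordinates. -/
def co (g : Gam) : Fin 5 → ℤ :=
  Multiplicative.toAdd (Crystal.matAction 4 holM holM_pow g.right⁻¹ g.left)

lemma eq_co (g : Gam) : g = SemidirectProduct.inr g.right * lat (co g) := by
  ext
  · simp [lat, co]
  · simp [lat, co]

lemma co_lat (g : Gam) (w : Fin 5 → ℤ) : co (g * lat w) = co g + w := by
  simp [co, lat]

lemma co_gx (g : Gam) : holM *ᵥ co (g * gx) = co g := by
  apply Multiplicative.ofAdd.injective
  rw [← act_one]
  simp [co, gx]

lemma right_lat (g : Gam) (w : Fin 5 → ℤ) : (g * lat w).right = g.right := by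
  simp [lat]

/-- Projection to `ℤ/4`. -/
def pr (g : Gam) : ZMod 4 := Multiplicative.toAdd g.right

lemma pr_lat (g : Gam) (w : Fin 5 → ℤ) : pr (g * lat w) = pr g := by
  simp [lat, pr]

lemma pr_gx (g : Gam) : pr (g * gx) = pr g + 1 := by
  simp [gx, pr]

lemma eq_gx_pow (r : Multiplicative (ZMod 4)) :
    (SemidirectProduct.inr r : Gam) = gx ^ (ZMod.val (Multiplicative.toAdd r)) := by
  rw [gx, ← map_pow, ← ofAdd_nsmul]
  congr 1
  apply Multiplicative.toAdd.injective
  simp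

/-- Coordinate functions for the basis. -/
def lu (g : Gam) : ℤ := - co g 3
/-- Coordinate functions for the basis. -/
def lv (g : Gam) : ℤ := co g 1 - co g 3
/-- Coordinate functions for the basis. -/
def lt (g : Gam) : ℤ := co g 0 + co g 1 - co g 3
/-- Coordinate functions for the basis. -/
def le (g : Gam) : ℤ := co g 2
/-- Coordinate functions for the basis. -/
def lf (g : Gam) : ℤ := - co g 4

lemma lt_gx (g : Gam) : lt (g * gx) = lt g := by
  have h := co_gx g
  rw [lt, lt, ← h]
  simp [holM, Matrix.mulVec, dotProduct, Fin.sum_univ_succ]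
  ring
lemma lat_zpow (w : Fin 5 → ℤ) (k : ℤ) : lat w ^ k = lat (k • w) := by
  rw [lat, lat, ← map_zpow, ofAdd_zsmul]

/-- Decomposition of group elements. -/
lemma decomp (g : Gam) : g = gx ^ (ZMod.val (pr g)) *
    (gt ^ lt g * gu ^ lu g * gv ^ lv g * ge ^ le g * gf ^ lf g) := by
  conv_lhs => rw [eq_co g, eq_gx_pow]
  rw [pr, gt, gu, gv, ge, gf]
  simp only [lat_zpow, lat_mul]
  congr 2
  ext i
  fin_cases i <;> simp [lt, lu, lv, le, lf]

lemma inv_of_gens {A : Type} (r : Gam → A → A) (h1 : ∀ a, r 1 a = a)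
    (hm : ∀ g h a, r (g * h) a = r g (r h a)) (a : A)
    (hu : r gu a = a) (hv : r gv a = a) (ht : r gt a = a) (he : r ge a = a) (hf : r gf a = a)
    (hx : r gx a = a) (g : Gam) : r g a = a := by
  let S : Subgroup Gam :=
    { carrier := {g | r g a = a}
      one_mem' := h1 a
      mul_mem' := by
        intro g h hg hh
        show r (g * h) a = a
        rw [hm, hh, hg]
      inv_mem' := by
        intro g hg
        show r g⁻¹ a = a
        have hg' : r g a = a := hg
        conv_lhs => rw [← hg', ← hm, inv_mul_cancel, h1] }
  show g ∈ S
  rw [decomp g]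
  exact S.mul_mem (S.pow_mem hx _) (S.mul_mem (S.mul_mem (S.mul_mem (S.mul_mem
    (S.zpow_mem ht _) (S.zpow_mem hu _)) (S.zpow_mem hv _)) (S.zpow_mem he _)) (S.zpow_mem hf _))

set_option linter.all false
set_option synthInstance.maxHeartbeats 200000
set_option synthInstance.maxSize 2000
open Matrix
/-! ## Operators from group actions -/

/-- Additive actions of the group. -/
structure Act (A : Type) [AddCommGroup A] where
  /-- The automorphisms. -/
  r : Gam → A ≃+ A
  one : ∀ a, r 1 a = a
  mul : ∀ g h a, r (g * h) a = r g (r h a)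

section
variable {A : Type} [AddCommGroup A]

lemma Act.key (R : Act A) {g h g' h' : Gam} (H : g * h = g' * h') (a : A) :
    R.r g (R.r h a) = R.r g' (R.r h' a) := by
  rw [← R.mul, ← R.mul, H]

/-- The operators of an action of the group. -/
def opsOf (R : Act A) : OpsG A where
  u := R.r gu
  v := R.r gv
  t := R.r gt
  x := R.r gx
  e := R.r ge
  f := R.r gf
  vu := R.key (lat_comm _ _)
  tu := R.key (lat_comm _ _)
  tv := R.key (lat_comm _ _)
  vx := R.key rel_xu.symm
  ux := by
    intro a
    have h2 : R.r gu (R.r gx (R.r gv ((R.r gv).symm a))) = R.r gx ((R.r gv).symm a) := by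
      rw [← R.mul, ← R.mul, rel_ux]
    rwa [AddEquiv.apply_symm_apply] at h2
  tx := by
    intro a
    rw [← R.mul, ← R.mul, ← R.mul, rel_tx, mul_assoc]
  x4 := by
    intro a
    rw [← R.mul, ← R.mul, ← R.mul]
    have h : gx * gx * gx * gx = 1 := by
      rw [← gx_pow]; simp [pow_succ, mul_assoc]
    rw [h, R.one]
  eu := R.key (lat_comm _ _)
  ev := R.key (lat_comm _ _)
  et := R.key (lat_comm _ _)
  fu := R.key (lat_comm _ _)
  fv := R.key (lat_comm _ _)
  ft := R.key (lat_comm _ _)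
  ef := R.key (lat_comm _ _)
  ex := R.key rel_xf.symm
  fx := R.key rel_xe.symm

/-- Right translation action on functions. -/
def rtrans (M : Type) [AddCommGroup M] : Act (Gam → M) where
  r g :=
    { toFun := fun F h => F (h * g)
      invFun := fun F h => F (h * g⁻¹)
      left_inv := fun F => by funext h; simp
      right_inv := fun F => by funext h; simp
      map_add' := fun F F' => rfl }
  one F := by funext h; simp
  mul g g' F := by funext h; simp [mul_assoc]

lemma rtrans_apply (M : Type) [AddCommGroup M] (g : Gam) (F : Gam → M) (h : Gam) :
    (rtrans M).r g F h = F (h * g) := rfl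

lemma antidiff_int (b : ℤ → A) : ∃ c : ℤ → A, ∀ k, c (k + 1) - c k = b k := by
  refine ⟨fun k => match k with
    | Int.ofNat n => ∑ i ∈ Finset.range n, b i
    | Int.negSucc n => - ∑ i ∈ Finset.range (n + 1), b (-(i + 1 : ℤ)), ?_⟩
  intro k
  rcases k with n | n
  · show (∑ i ∈ Finset.range (n + 1), b i) - _ = _
    rw [Finset.sum_range_succ]; simp
  · rcases n with _ | n
    · show (∑ i ∈ Finset.range 0, b i) - (- ∑ i ∈ Finset.range 1, b (-(i + 1 : ℤ))) = _
      simp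
    · have h : Int.negSucc (n + 1) + 1 = Int.negSucc n := rfl
      rw [h]
      show (- ∑ i ∈ Finset.range (n + 1), b (-(i + 1 : ℤ))) -
        (- ∑ i ∈ Finset.range (n + 1 + 1), b (-(i + 1 : ℤ))) = _
      rw [Finset.sum_range_succ _ (n + 1)]
      have h2 : Int.negSucc (n + 1) = -((n + 1 : ℕ) + 1 : ℤ) := by
        rw [Int.negSucc_eq]
      rw [h2]; abel

lemma antidiff (w : Gam) (l : Gam → ℤ) (hl : ∀ g, l (g * w) = l g + 1) (b : Gam → A) :
    ∃ c : Gam → A, (∀ g, c (g * w) - c g = b g) ∧ ∀ s, (∀ g, l (g * s) = l g) →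
      (∀ h (k : ℤ), b (h * s * w ^ k) = b (h * w ^ k)) → ∀ g, c (g * s) = c g := by
  choose T hT using fun (β : ℤ → A) => antidiff_int β
  refine ⟨fun g => T (fun k => b (g * w ^ (k - l g))) (l g), fun g => ?_, fun s hs hb g => ?_⟩
  · have h : (fun k => b (g * w * w ^ (k - l (g * w)))) = fun k => b (g * w ^ (k - l g)) := by
      funext k
      rw [hl, mul_assoc, ← _root_.zpow_one_add]
      congr 3; ring
    show T (fun k => b (g * w * w ^ (k - l (g * w)))) _ - _ = _
    rw [h, hl, hT]; simp
  · have h : (fun k => b (g * s * w ^ (k - l (g * s)))) = fun k => b (g * w ^ (k - l g)) := by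
      funext k
      rw [hs, hb]
    show T (fun k => b (g * s * w ^ (k - l (g * s)))) _ = _
    rw [h, hs]

lemma antidiff_comm (w : Gam) (l : Gam → ℤ) (hl : ∀ g, l (g * w) = l g + 1) (b : Gam → A) :
    ∃ c : Gam → A, (∀ g, c (g * w) - c g = b g) ∧ ∀ s, (∀ g, l (g * s) = l g) →
      s * w = w * s → (∀ h, b (h * s) = b h) → ∀ g, c (g * s) = c g := by
  obtain ⟨c, h1, h2⟩ := antidiff w l hl b
  refine ⟨c, h1, fun s hs hc hb => h2 s hs fun h k => ?_⟩
  have : s * w ^ k = w ^ k * s := (Commute.zpow_right (show Commute s w from hc) k)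
  rw [mul_assoc, this, ← mul_assoc, hb]


lemma l_lat (g : Gam) (w : Fin 5 → ℤ) :
    lu (g * lat w) = lu g - w 3 ∧ lv (g * lat w) = lv g + (w 1 - w 3) ∧
    lt (g * lat w) = lt g + (w 0 + w 1 - w 3) ∧ le (g * lat w) = le g + w 2 ∧
    lf (g * lat w) = lf g - w 4 := by
  simp only [lu, lv, lt, le, lf, co_lat, Pi.add_apply]
  refine ⟨?_, ?_, ?_, ?_, ?_⟩ <;> first | trivial | ring

lemma lu_u (g : Gam) : lu (g * gu) = lu g + 1 := by rw [gu, (l_lat _ _).1]; simp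
lemma lu_e (g : Gam) : lu (g * ge) = lu g := by rw [ge, (l_lat _ _).1]; simp
lemma lu_f (g : Gam) : lu (g * gf) = lu g := by rw [gf, (l_lat _ _).1]; simp
lemma lv_v (g : Gam) : lv (g * gv) = lv g + 1 := by rw [gv, (l_lat _ _).2.1]; simp
lemma lv_u (g : Gam) : lv (g * gu) = lv g := by rw [gu, (l_lat _ _).2.1]; simp
lemma lv_e (g : Gam) : lv (g * ge) = lv g := by rw [ge, (l_lat _ _).2.1]; simp
lemma lv_f (g : Gam) : lv (g * gf) = lv g := by rw [gf, (l_lat _ _).2.1]; simp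
lemma lt_t (g : Gam) : lt (g * gt) = lt g + 1 := by rw [gt, (l_lat _ _).2.2.1]; simp
lemma lt_u (g : Gam) : lt (g * gu) = lt g := by rw [gu, (l_lat _ _).2.2.1]; simp
lemma lt_v (g : Gam) : lt (g * gv) = lt g := by rw [gv, (l_lat _ _).2.2.1]; simp
lemma lt_e (g : Gam) : lt (g * ge) = lt g := by rw [ge, (l_lat _ _).2.2.1]; simp
lemma lt_f (g : Gam) : lt (g * gf) = lt g := by rw [gf, (l_lat _ _).2.2.1]; simp
lemma le_e (g : Gam) : le (g * ge) = le g + 1 := by rw [ge, (l_lat _ _).2.2.2.1]; simp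
lemma lf_f (g : Gam) : lf (g * gf) = lf g + 1 := by rw [gf, (l_lat _ _).2.2.2.2]; simp
lemma lf_e (g : Gam) : lf (g * ge) = lf g := by rw [ge, (l_lat _ _).2.2.2.2]; simp

/-- Invariance under `u v e f`. -/
def InvH (b : Gam → A) : Prop :=
  (∀ g, b (g * gu) = b g) ∧ (∀ g, b (g * gv) = b g) ∧ (∀ g, b (g * ge) = b g) ∧
    (∀ g, b (g * gf) = b g)

lemma InvH.shift {b : Gam → A} (h : InvH b) : InvH (fun g => b (g * gx)) := by
  obtain ⟨h1, h2, h3, h4⟩ := h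
  refine ⟨fun g => ?_, fun g => ?_, fun g => ?_, fun g => ?_⟩
  · show b (g * gu * gx) = b (g * gx)
    rw [← h2, mul_assoc, mul_assoc, ← mul_assoc gu, rel_ux]
  · show b (g * gv * gx) = b (g * gx)
    rw [mul_assoc, ← rel_xu, ← mul_assoc, h1]
  · show b (g * ge * gx) = b (g * gx)
    rw [mul_assoc, ← rel_xf, ← mul_assoc, h4]
  · show b (g * gf * gx) = b (g * gx)
    rw [mul_assoc, ← rel_xe, ← mul_assoc, h3]

lemma zmod4 (a : ZMod 4) : a = 0 ∨ a = 1 ∨ a = 2 ∨ a = 3 := by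
  revert a; decide

lemma gx4 (g : Gam) : g * gx * gx * gx * gx = g := by
  have h := gx_pow
  simp only [pow_succ, pow_zero, one_mul] at h
  rw [mul_assoc, mul_assoc, mul_assoc, ← mul_assoc gx gx, ← mul_assoc, ← mul_assoc] at *
  simp only [mul_assoc] at h ⊢
  rw [h, mul_one]

lemma hom4 (b : Gam → A) (hb : InvH b)
    (hN : ∀ g, b g + b (g * gx) + b (g * gx * gx) + b (g * gx * gx * gx) = 0) :
    ∃ c, InvH c ∧ ∀ g, c (g * gx) - c g = b g := by
  let b1 : Gam → A := fun g => b (g * gx)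
  let b2 : Gam → A := fun g => b (g * gx * gx)
  let b3 : Gam → A := fun g => b (g * gx * gx * gx)
  have i1 : InvH b1 := hb.shift
  have i2 : InvH b2 := i1.shift
  have i3 : InvH b3 := i2.shift
  refine ⟨fun g => if pr g = 0 then 0 else if pr g = 1 then b3 g else
    if pr g = 2 then b3 g + b2 g else b3 g + b2 g + b1 g, ?_, fun g => ?_⟩
  · refine ⟨fun g => ?_, fun g => ?_, fun g => ?_, fun g => ?_⟩
    · have h : pr (g * gu) = pr g := pr_lat _ _
      simp only [h, i1.1, i2.1, i3.1]
    · have h : pr (g * gv) = pr g := pr_lat _ _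
      simp only [h, i1.2.1, i2.2.1, i3.2.1]
    · have h : pr (g * ge) = pr g := pr_lat _ _
      simp only [h, i1.2.2.1, i2.2.2.1, i3.2.2.1]
    · have h : pr (g * gf) = pr g := pr_lat _ _
      simp only [h, i1.2.2.2, i2.2.2.2, i3.2.2.2]
  · have k3 : b3 (g * gx) = b g := by simp only [b3, gx4]
    have k2 : b2 (g * gx) = b3 g := rfl
    have k1 : b1 (g * gx) = b2 g := rfl
    have hN' : b g + b1 g + b2 g + b3 g = 0 := hN g
    simp only [pr_gx, k3, k2, k1]
    rcases zmod4 (pr g) with h | h | h | h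
    · rw [h]; simp +decide
    · rw [h]; simp +decide
    · rw [h]; simp +decide
    · rw [h]
      simp +decide
      have e : b g = -(b3 g + b2 g + b1 g) := by
        rw [eq_neg_iff_add_eq_zero, ← hN']; abel
      rw [e]; abel

lemma hom5 (b : Gam → A) (hb : InvH b) (hx : ∀ g, b (g * gx) = b g) :
    ∃ c, InvH c ∧ ∀ g, c g + c (g * gx) + c (g * gx * gx) + c (g * gx * gx * gx) = b g := by
  refine ⟨fun g => if pr g = 0 then b g else 0, ?_, fun g => ?_⟩
  · refine ⟨fun g => ?_, fun g => ?_, fun g => ?_, fun g => ?_⟩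
    · have h : pr (g * gu) = pr g := pr_lat _ _
      simp only [h, hb.1]
    · have h : pr (g * gv) = pr g := pr_lat _ _
      simp only [h, hb.2.1]
    · have h : pr (g * ge) = pr g := pr_lat _ _
      simp only [h, hb.2.2.1]
    · have h : pr (g * gf) = pr g := pr_lat _ _
      simp only [h, hb.2.2.2]
  · simp only [pr_gx, hx]
    rcases zmod4 (pr g) with h | h | h | h <;> rw [h] <;> simp +decide

/-- The function module is good. -/
theorem rtrans_good : GoodG (opsOf (rtrans A)) where
  ge b := by
    obtain ⟨c, h1, h2⟩ := antidiff_comm ge le le_e b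
    exact ⟨c, funext h1⟩
  gf b hb := by
    obtain ⟨c, h1, h2⟩ := antidiff_comm gf lf lf_f b
    exact ⟨c, funext (h2 ge lf_e (lat_comm _ _) (congrFun hb)), funext h1⟩
  gS :=
    { g1 := by
        rintro ⟨b, hb1, hb2⟩
        obtain ⟨c, h1, h2⟩ := antidiff_comm gu lu lu_u b
        exact ⟨⟨c, funext (h2 ge lu_e (lat_comm _ _) (congrFun hb1)),
          funext (h2 gf lu_f (lat_comm _ _) (congrFun hb2))⟩, Subtype.ext (funext h1)⟩
      g2 := by
        rintro ⟨b, hb1, hb2⟩ hu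
        have hu' := congrArg Subtype.val hu
        obtain ⟨c, h1, h2⟩ := antidiff_comm gv lv lv_v b
        exact ⟨⟨c, funext (h2 ge lv_e (lat_comm _ _) (congrFun hb1)),
          funext (h2 gf lv_f (lat_comm _ _) (congrFun hb2))⟩,
          Subtype.ext (funext (h2 gu lv_u (lat_comm _ _) (congrFun hu'))), Subtype.ext (funext h1)⟩
      g3 := by
        rintro ⟨b, hb1, hb2⟩ hu hv hx
        have hu' : ∀ g, b (g * gu) = b g := congrFun (congrArg Subtype.val hu)
        have hv' : ∀ g, b (g * gv) = b g := congrFun (congrArg Subtype.val hv)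
        have hx' : ∀ g, b (g * gx) = b g := congrFun (congrArg Subtype.val hx)
        obtain ⟨c, h1, h3⟩ := antidiff gt lt lt_t b
        have h2 : ∀ s, (∀ g, lt (g * s) = lt g) →
            s * gt = gt * s → (∀ h, b (h * s) = b h) → ∀ g, c (g * s) = c g := by
          intro s hs hc hb
          refine h3 s hs fun h k => ?_
          have : s * gt ^ k = gt ^ k * s := (Commute.zpow_right (show Commute s gt from hc) k)
          rw [mul_assoc, this, ← mul_assoc, hb]
        refine ⟨⟨c, funext (h2 ge lt_e (lat_comm _ _) (congrFun hb1)),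
          funext (h2 gf lt_f (lat_comm _ _) (congrFun hb2))⟩,
          Subtype.ext (funext (h2 gu lt_u (lat_comm _ _) hu')),
          Subtype.ext (funext (h2 gv lt_v (lat_comm _ _) hv')),
          Subtype.ext (funext (h3 gx lt_gx fun h k => ?_)), Subtype.ext (funext h1)⟩
        have huk : ∀ (k : ℤ) g, b (g * gu ^ k) = b g := by
          intro k
          induction k using Int.induction_on with
          | zero => simp
          | succ n ih => intro g; rw [_root_.zpow_add_one, ← mul_assoc, hu', ih]
          | pred n ih => intro g; rw [← hu', _root_.zpow_sub_one, ← mul_assoc]; simpa using ih g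
        have hxt : gx * gt ^ k = gt ^ k * gu ^ k * gx := by
          rw [gt, gu, lat_zpow, lat_zpow, gx_lat, lat_mul, Matrix.mulVec_smul, ← smul_add]
          congr 3
          decide
        rw [mul_assoc, hxt, ← mul_assoc, hx', ← mul_assoc, huk]
      g4 := by
        rintro ⟨b, hb1, hb2⟩ hu hv hN
        obtain ⟨c, ⟨i1, i2, i3, i4⟩, hc⟩ := hom4 b ⟨congrFun (congrArg Subtype.val hu),
          congrFun (congrArg Subtype.val hv), congrFun hb1, congrFun hb2⟩
          (congrFun (congrArg Subtype.val hN))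
        exact ⟨⟨c, funext i3, funext i4⟩, Subtype.ext (funext i1), Subtype.ext (funext i2),
          Subtype.ext (funext hc)⟩
      g5 := by
        rintro ⟨b, hb1, hb2⟩ hu hv hx
        obtain ⟨c, ⟨i1, i2, i3, i4⟩, hc⟩ := hom5 b ⟨congrFun (congrArg Subtype.val hu),
          congrFun (congrArg Subtype.val hv), congrFun hb1, congrFun hb2⟩
          (congrFun (congrArg Subtype.val hx))
        exact ⟨⟨c, funext i3, funext i4⟩, Subtype.ext (funext i1), Subtype.ext (funext i2),
          Subtype.ext (funext hc)⟩ }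

end

set_option linter.all false
set_option synthInstance.maxHeartbeats 200000
set_option synthInstance.maxSize 2000
open Matrix
/-! ## Cohomology of the explicit complex -/

/-- Homomorphisms commuting with all six operators. -/
structure IsGHom {A A' : Type} [AddCommGroup A] [AddCommGroup A'] (O : OpsG A) (O' : OpsG A')
    (f : A →+ A') : Prop extends IsOpsHom O.toOps3 O'.toOps3 f where
  e : ∀ a, f (O.e a) = O'.e (f a)
  f : ∀ a, f (O.f a) = O'.f (f a)

section
variable {A A' A'' : Type} [AddCommGroup A] [AddCommGroup A'] [AddCommGroup A'']

/-- The induced map on the complex. -/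
def CGmap (f : A →+ A') (z : CG A) : CG A' :=
  (C3map f z.1, C3map (f.prodMap f) z.2.1, C3map f z.2.2)

lemma CGmap_add (f : A →+ A') (y z : CG A) : CGmap f (y + z) = CGmap f y + CGmap f z := by
  simp only [CGmap, Prod.fst_add, Prod.snd_add, C3map_add, Prod.mk_add_mk]

lemma CGmap_sub (f : A →+ A') (y z : CG A) : CGmap f (y - z) = CGmap f y - CGmap f z := by
  simp only [CGmap, Prod.fst_sub, Prod.snd_sub, C3map_sub, Prod.mk_sub_mk]

lemma CGmap_zero (f : A →+ A') : CGmap f (0 : CG A) = 0 := by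
  simp only [CGmap, Prod.fst_zero, Prod.snd_zero, C3map_zero]; rfl

lemma CGmap_mem (f : A →+ A') {m : ℕ} {z : CG A} (hz : z ∈ FG A m) : CGmap f z ∈ FG A' m :=
  ⟨C3map_mem f hz.1, C3map_mem _ hz.2.1, C3map_mem f hz.2.2⟩

lemma CGmap_inj (f : A →+ A') (hf : Function.Injective f) : Function.Injective (CGmap f) := by
  rintro ⟨a, b, c⟩ ⟨a', b', c'⟩ h
  simp only [CGmap, Prod.mk.injEq] at h
  have h2 : Function.Injective (f.prodMap f) := by
    rintro ⟨p, q⟩ ⟨p', q'⟩ hpq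
    simp only [AddMonoidHom.coe_prodMap, Prod.map_apply, Prod.mk.injEq, hf.eq_iff] at hpq
    simp [hpq.1, hpq.2]
  rw [C3map_inj f hf h.1, C3map_inj _ h2 h.2.1, C3map_inj f hf h.2.2]

lemma CG_lift (f : A →+ A') (g : A' →+ A'') (h : ∀ b, g b = 0 → ∃ a, f a = b) {m : ℕ}
    {z : CG A'} (hz : z ∈ FG A' m) (hg : CGmap g z = 0) : ∃ y ∈ FG A m, CGmap f y = z := by
  obtain ⟨y1, h1, h1'⟩ := C3_lift f g h hz.1 (congrArg Prod.fst hg)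
  obtain ⟨y2, h2, h2'⟩ := C3_lift (f.prodMap f) (g.prodMap g) (by
    rintro ⟨p, q⟩ hpq
    simp only [AddMonoidHom.coe_prodMap, Prod.map_apply, Prod.mk_eq_zero] at hpq
    obtain ⟨p', hp'⟩ := h p hpq.1
    obtain ⟨q', hq'⟩ := h q hpq.2
    exact ⟨(p', q'), by simp [hp', hq']⟩) hz.2.1 (congrArg (fun w => w.2.1) hg)
  obtain ⟨y3, h3, h3'⟩ := C3_lift f g h hz.2.2 (congrArg (fun w => w.2.2) hg)
  exact ⟨(y1, y2, y3), ⟨h1, h2, h3⟩, Prod.ext h1' (Prod.ext h2' h3')⟩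

lemma C3map_comp (f : A →+ A') (g : A' →+ A'') (z : C3 A) :
    C3map g (C3map f z) = C3map (g.comp f) z := rfl

lemma CGmap_comp_zero (f : A →+ A') (g : A' →+ A'') (h : ∀ a, g (f a) = 0) (z : CG A) :
    CGmap g (CGmap f z) = 0 := by
  have h2 : ∀ p, Prod.map g g (Prod.map f f p) = 0 := by
    rintro ⟨p, q⟩
    simp [h]
  simp [CGmap, C3map, CKmap, h, h2]

variable {O : OpsG A} {O' : OpsG A'}

lemma DG_map {f : A →+ A'} (hf : IsGHom O O' f) (p : Bool) (z : CG A) :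
    DG O' p (CGmap f z) = CGmap f (DG O p z) := by
  have h2 : IsOpsHom O.O2 O'.O2 (f.prodMap f) :=
    ⟨fun a => Prod.ext (hf.u a.1) (hf.u a.2), fun a => Prod.ext (hf.v a.1) (hf.v a.2),
      fun a => Prod.ext (hf.t a.1) (hf.t a.2), fun a => Prod.ext (hf.x a.2) (hf.x a.1)⟩
  have hn : IsOpsHom O.On O'.On f := ⟨hf.u, hf.v, hf.t, fun a => by
    show f (-O.x a) = -O'.x (f a)
    rw [map_neg, hf.x]⟩
  have e1 : O'.d1.comp f = (f.prodMap f).comp O.d1 := by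
    ext a
    · simp [OpsG.d1_apply, hf.e]
    · simp [OpsG.d1_apply, hf.f]
  have e2 : O'.d2.comp (f.prodMap f) = f.comp O.d2 := by
    apply AddMonoidHom.ext
    rintro ⟨b, c⟩
    simp [OpsG.d2_apply, hf.e, hf.f]
  simp only [DG, CGmap, D3_map hf.toIsOpsHom, D3_map h2, D3_map hn, C3map_comp, e1, e2, C3map_sub,
    C3map_add]

variable (O)

/-- Cocycles. -/
def ZC (n : ℕ) : AddSubgroup (CG A) := FG A (n + 1) ⊓ (DGh O n.bodd).ker

/-- Coboundaries. -/
def BC (n : ℕ) : AddSubgroup (CG A) := (FG A n).map (DGh O (!n.bodd))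

/-- Cohomology. -/
abbrev HC (n : ℕ) : Type := ZC O n ⧸ (BC O n).addSubgroupOf (ZC O n)

variable {O}

lemma mem_ZC {n : ℕ} {z : CG A} : z ∈ ZC O n ↔ z ∈ FG A (n + 1) ∧ DG O n.bodd z = 0 := Iff.rfl

lemma mem_BC {n : ℕ} {z : CG A} : z ∈ BC O n ↔ ∃ y ∈ FG A n, DG O (!n.bodd) y = z := Iff.rfl

/-- A homomorphism into cohomology from a homomorphism into cocycles. -/
def toHC {Y : Type} [AddCommGroup Y] (n : ℕ) (h : Y →+ CG A) (hz : ∀ y, h y ∈ ZC O n) :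
    Y →+ HC O n :=
  (QuotientAddGroup.mk' _).comp (h.codRestrict (ZC O n) hz)

lemma toHC_eq_zero {Y : Type} [AddCommGroup Y] (n : ℕ) (h : Y →+ CG A) (hz : ∀ y, h y ∈ ZC O n)
    (y : Y) : toHC n h hz y = 0 ↔ h y ∈ BC O n := by
  show ((⟨h y, hz y⟩ : ZC O n) : HC O n) = 0 ↔ _
  rw [QuotientAddGroup.eq_zero_iff]
  rfl

lemma toHC_surj {Y : Type} [AddCommGroup Y] (n : ℕ) (h : Y →+ CG A) (hz : ∀ y, h y ∈ ZC O n)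
    (hs : ∀ z ∈ ZC O n, ∃ y, h y = z) : Function.Surjective (toHC n h hz) := by
  intro q
  obtain ⟨⟨z, hz'⟩, rfl⟩ := QuotientAddGroup.mk_surjective q
  obtain ⟨y, rfl⟩ := hs z hz'
  exact ⟨y, rfl⟩

end

lemma equiv_of_ker {Y X X' : Type} [AddCommGroup Y] [AddCommGroup X] [AddCommGroup X']
    (f : Y →+ X) (g : Y →+ X') (hf : Function.Surjective f) (hg : Function.Surjective g)
    (h : ∀ y, f y = 0 ↔ g y = 0) : Nonempty (X ≃+ X') := by
  have hk : f.ker = g.ker := by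
    ext y; exact h y
  exact ⟨((QuotientAddGroup.quotientKerEquivOfSurjective f hf).symm.trans
    (QuotientAddGroup.quotientAddEquivOfEq hk)).trans
    (QuotientAddGroup.quotientKerEquivOfSurjective g hg)⟩

section
variable {A E Q : Type} [AddCommGroup A] [AddCommGroup E] [AddCommGroup Q]
  (O : OpsG A) (OE : OpsG E) (OQ : OpsG Q) (i : A →+ E) (π : E →+ Q)

/-- The auxiliary group for dimension shifting. -/
def YC (n : ℕ) : AddSubgroup (CG E × CG A) where
  carrier := {w | w.1 ∈ FG E (n + 1) ∧ w.2 ∈ FG A (n + 1 + 1) ∧ CGmap i w.2 = DG OE n.bodd w.1}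
  zero_mem' := ⟨zero_mem _, zero_mem _, by
    show CGmap i 0 = DG OE n.bodd 0
    rw [CGmap_zero, DG_zero]⟩
  add_mem' := by
    rintro y z ⟨h1, h2, h3⟩ ⟨k1, k2, k3⟩
    refine ⟨add_mem h1 k1, add_mem h2 k2, ?_⟩
    rw [Prod.fst_add, Prod.snd_add, CGmap_add, DG_add, h3, k3]
  neg_mem' := by
    rintro y ⟨h1, h2, h3⟩
    refine ⟨neg_mem h1, neg_mem h2, ?_⟩
    show CGmap i (-y.2) = DG OE n.bodd (-y.1)
    rw [← zero_sub, ← zero_sub, CGmap_sub, DG_sub, CGmap_zero, DG_zero, h3]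

/-- The projection to the first factor. -/
def YC1 (n : ℕ) : YC OE i n →+ CG E := (AddMonoidHom.fst _ _).comp (YC OE i n).subtype

/-- The projection to the second factor. -/
def YC2 (n : ℕ) : YC OE i n →+ CG A := (AddMonoidHom.snd _ _).comp (YC OE i n).subtype

variable {O OE OQ i π}

lemma YC2_mem (hi : IsGHom O OE i) (inj : Function.Injective i) (n : ℕ) (y : YC OE i n) : YC2 OE i n y ∈ ZC O (n + 1) := by
  refine mem_ZC.2 ⟨y.2.2.1, ?_⟩
  apply CGmap_inj i inj
  show CGmap i (DG O (n + 1).bodd y.1.2) = CGmap i 0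
  rw [← DG_map hi, y.2.2.2, CGmap_zero, Nat.bodd_succ, DG_DG]

lemma YC2_surj (hi : IsGHom O OE i) (inj : Function.Injective i) (hE : GoodG OE) (n : ℕ) :
    Function.Surjective (toHC (n + 1) (YC2 OE i n) (YC2_mem hi inj n)) := by
  apply toHC_surj
  intro z hz
  obtain ⟨h1, h2⟩ := mem_ZC.1 hz
  obtain ⟨y, hy, hy'⟩ := acyclicG OE hE (n := n + 1) (by omega) (CGmap_mem i h1) (by
    rw [DG_map hi, h2, CGmap_zero])
  rw [Nat.bodd_succ, Bool.not_not] at hy'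
  exact ⟨⟨(y, z), hy, h1, hy'.symm⟩, rfl⟩

lemma shiftHC (hi : IsGHom O OE i) (hπ : IsGHom OE OQ π) (inj : Function.Injective i)
    (surj : Function.Surjective π) (ex : ∀ b, π b = 0 ↔ ∃ a, i a = b) (hE : GoodG OE) (n : ℕ) (hn : 1 ≤ n) : Nonempty (HC OQ n ≃+ HC O (n + 1)) := by
  have hd : ∀ z, DG OQ n.bodd (CGmap π z) = CGmap π (DG OE n.bodd z) := fun z => DG_map hπ _ z
  let CP : CG E →+ CG Q := AddMonoidHom.mk' (CGmap π) (CGmap_add π)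
  have e0 : ∀ z, CGmap π (CGmap i z) = 0 := CGmap_comp_zero i π (fun a => (ex _).2 ⟨a, rfl⟩)
  have m1 : ∀ y, (CP.comp (YC1 OE i n)) y ∈ ZC OQ n := by
    intro y
    refine mem_ZC.2 ⟨CGmap_mem π y.2.1, ?_⟩
    show DG OQ n.bodd (CGmap π y.1.1) = 0
    rw [hd, ← y.2.2.2, e0]
  refine equiv_of_ker (toHC n (CP.comp (YC1 OE i n)) m1)
    (toHC (n + 1) (YC2 OE i n) (YC2_mem hi inj n)) ?_ (YC2_surj hi inj hE n) ?_
  · apply toHC_surj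
    intro z hz
    obtain ⟨h1, h2⟩ := mem_ZC.1 hz
    obtain ⟨y, hy, rfl⟩ := CG_lift π (0 : Q →+ Q) (fun b _ => surj b) h1 rfl
    obtain ⟨a, ha, ha'⟩ := CG_lift i π (fun b hb => (ex b).1 hb) (DG_mem OE n.bodd hy) (by
      rw [← hd, h2])
    exact ⟨⟨(y, a), hy, ha, ha'⟩, rfl⟩
  · rintro ⟨⟨y, a⟩, h1, h2, h3⟩
    simp only at h1 h2 h3
    rw [toHC_eq_zero, toHC_eq_zero, mem_BC, mem_BC]
    show (∃ q ∈ FG Q n, DG OQ (!n.bodd) q = CGmap π y) ↔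
      ∃ a' ∈ FG A (n + 1), DG O (!(n + 1).bodd) a' = a
    rw [Nat.bodd_succ, Bool.not_not]
    constructor
    · rintro ⟨q, hq, hq'⟩
      obtain ⟨e, he, rfl⟩ := CG_lift π (0 : Q →+ Q) (fun b _ => surj b) hq rfl
      obtain ⟨a', ha', ha''⟩ := CG_lift i π (fun b hb => (ex b).1 hb)
        (sub_mem h1 (DG_mem OE (!n.bodd) he)) (by
          rw [CGmap_sub, ← hq', DG_map hπ, sub_self])
      refine ⟨a', ha', ?_⟩
      apply CGmap_inj i inj
      have := DG_DG OE (!n.bodd) e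
      rw [Bool.not_not] at this
      rw [← DG_map hi, ha'', DG_sub, this, sub_zero, h3]
    · rintro ⟨a', ha', rfl⟩
      obtain ⟨e, he, he'⟩ := acyclicG OE hE hn (sub_mem h1 (CGmap_mem i ha')) (by
        rw [DG_sub, ← h3, DG_map hi, sub_self])
      refine ⟨CGmap π e, CGmap_mem π he, ?_⟩
      rw [DG_map hπ, he', CGmap_sub, e0, sub_zero]

/-- Degree zero cochains. -/
def iota (w : A) : CG A := (((w, 0, 0, 0), 0), 0, 0)

lemma iota_mem (w : A) : iota w ∈ FG A 1 :=
  ⟨⟨mem_FK.2 ⟨fun h => by omega, fun _ => ⟨rfl, rfl⟩, fun _ => rfl⟩, zero_mem _⟩, zero_mem _,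
    zero_mem _⟩

lemma eq_iota {z : CG A} (hz : z ∈ FG A 1) : z = iota z.1.1.1 := by
  obtain ⟨⟨h1, h2⟩, h3, h4⟩ := hz
  obtain ⟨⟨⟨a, b, c, e⟩, z2⟩, z3, z4⟩ := z
  obtain ⟨-, k2, k3⟩ := mem_FK.1 h1
  obtain ⟨rfl, rfl⟩ := k2 le_rfl
  obtain rfl := k3 (by norm_num)
  obtain rfl := FK_zero h2
  obtain rfl := F3_zero h3
  obtain rfl := F3_zero h4
  rfl

lemma DG_iota (w : A) : DG O false (iota w) = 0 ↔
    O.u w = w ∧ O.v w = w ∧ O.t w = w ∧ O.e w = w ∧ O.f w = w ∧ O.x w = w := by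
  simp [iota, DG, D3_zero, D3, DK, TK, C3map, CKmap, OpsG.d1_apply, DK_zero, OpsG.d2_apply,
    sub_eq_zero]
  tauto

end

set_option linter.all false
set_option synthInstance.maxHeartbeats 200000
set_option synthInstance.maxSize 2000
open Matrix
/-! ## Comparison with group cohomology -/

section
open CategoryTheory

/-- The action underlying a representation. -/
def actOf {k : Type} [CommRing k] {V : Type} [AddCommGroup V] [Module k V] (ρ : Representation k Gam V) : Act V where
  r g :=
    { toFun := fun a => ρ g a
      invFun := fun a => ρ g⁻¹ a
      left_inv := fun a => by
        show (ρ g⁻¹) ((ρ g) a) = a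
        rw [← Module.End.mul_apply, ← map_mul, inv_mul_cancel, map_one]; rfl
      right_inv := fun a => by
        show (ρ g) ((ρ g⁻¹) a) = a
        rw [← Module.End.mul_apply, ← map_mul, mul_inv_cancel, map_one]; rfl
      map_add' := fun a b => map_add _ a b }
  one a := by
    show (ρ 1) a = a
    rw [map_one]; rfl
  mul g h a := by
    show (ρ (g * h)) a = ρ g (ρ h a)
    rw [map_mul]; rfl

section
variable {k : Type} [CommRing k] {V : Type} [AddCommGroup V] [Module k V] (ρ : Representation k Gam V)

/-- Right translation on functions. -/
def rhoE (k : Type) [CommRing k] (V : Type) [AddCommGroup V] [Module k V] : Representation k Gam (Gam → V) where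
  toFun g := LinearMap.funLeft k V (· * g)
  map_one' := by ext; simp [LinearMap.funLeft_apply]
  map_mul' g h := by
    refine LinearMap.ext fun F => funext fun k => ?_
    simp [LinearMap.funLeft_apply, mul_assoc]

lemma rhoE_apply (g : Gam) (F : Gam → V) (h : Gam) : rhoE k V g F h = F (h * g) := rfl

lemma actOf_rhoE : actOf (rhoE k V) = rtrans V := rfl

/-- The coinduction embedding. -/
def iotaE : V →ₗ[k] (Gam → V) := LinearMap.pi (fun g => ρ g)

lemma iotaE_apply (a : V) (g : Gam) : iotaE ρ a g = ρ g a := rfl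

lemma iotaE_inj : Function.Injective (iotaE ρ) := by
  intro a b h
  have := congrFun h 1
  rw [iotaE_apply, iotaE_apply, map_one] at this
  exact this

lemma iotaE_comm (g : Gam) (a : V) : iotaE ρ (ρ g a) = rhoE k V g (iotaE ρ a) := by
  funext h
  rw [rhoE_apply, iotaE_apply, iotaE_apply, map_mul]; rfl

/-- The quotient representation. -/
def rhoQ : Representation k Gam ((Gam → V) ⧸ LinearMap.range (iotaE ρ)) :=
  (rhoE k V).quotient (LinearMap.range (iotaE ρ)) (by
    rintro g _ ⟨a, rfl⟩
    exact ⟨ρ g a, iotaE_comm ρ g a⟩)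

/-- The short complex. -/
def shX : ShortComplex (Rep k Gam) where
  X₁ := Rep.of ρ
  X₂ := Rep.of (rhoE k V)
  X₃ := Rep.of (rhoQ ρ)
  f := Rep.ofHom ((iotaE ρ).intertwiningMap_of_isIntertwiningMap _ _ (iotaE_comm ρ))
  g := Rep.ofHom ((LinearMap.range (iotaE ρ)).mkQ.intertwiningMap_of_isIntertwiningMap _ _
    (fun g v => rfl))
  zero := by
    ext a
    exact (Submodule.Quotient.mk_eq_zero _).2 ⟨a, rfl⟩

lemma shX_exact : (shX ρ).ShortExact where
  mono_f := (Rep.mono_iff_injective _).2 (iotaE_inj ρ)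
  epi_g := (Rep.epi_iff_surjective _).2 (Submodule.mkQ_surjective _)
  exact := by
    rw [← ShortComplex.exact_map_iff_of_faithful _ (forget₂ (Rep k Gam) (ModuleCat k)),
      ShortComplex.moduleCat_exact_iff]
    intro x hx
    exact (Submodule.Quotient.mk_eq_zero _).1 hx

/-- The coinduced module as functions. -/
def isoE : Rep.of (rhoE k V) ≅
    Rep.coind (⊥ : Subgroup Gam).subtype (Rep.trivial k (⊥ : Subgroup Gam) V) where
  hom := Rep.ofHom
    { toFun := fun F => ⟨F, fun g h => by
        obtain rfl := Subsingleton.elim g 1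
        simp⟩
      map_add' := fun _ _ => rfl
      map_smul' := fun _ _ => rfl
      isIntertwining' := fun g => rfl }
  inv := Rep.ofHom
    { toFun := fun F => F.1
      map_add' := fun _ _ => rfl
      map_smul' := fun _ _ => rfl
      isIntertwining' := fun g => rfl }
  hom_inv_id := rfl
  inv_hom_id := rfl

lemma zeroE (n : ℕ) : Limits.IsZero (groupCohomology (Rep.of (rhoE k V)) (n + 1)) := by
  refine Limits.IsZero.of_iso ?_ ((groupCohomology.functor k Gam (n + 1)).mapIso (isoE (k := k)))
  refine Limits.IsZero.of_iso ?_ (groupCohomology.coindIso _ (n + 1))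
  exact isZero_groupCohomology_succ_of_subsingleton _ n

end
end

set_option linter.all false
set_option synthInstance.maxHeartbeats 200000
set_option synthInstance.maxSize 2000
open Matrix
section
open CategoryTheory

lemma IsGHom_of {k : Type} [CommRing k] {V W : Type} [AddCommGroup V] [Module k V] [AddCommGroup W] [Module k W]
    (ρ : Representation k Gam V) (σ : Representation k Gam W) (f : V →+ W)
    (h : ∀ g a, f (ρ g a) = σ g (f a)) : IsGHom (opsOf (actOf ρ)) (opsOf (actOf σ)) f where
  u := h gu
  v := h gv
  t := h gt
  x := h gx
  e := h ge
  f := h gf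

lemma DG_iota_inv {k : Type} [CommRing k] {V : Type} [AddCommGroup V] [Module k V] (ρ : Representation k Gam V) (w : V) :
    DG (opsOf (actOf ρ)) false (iota w) = 0 ↔ w ∈ ρ.invariants := by
  rw [DG_iota]
  constructor
  · rintro ⟨h1, h2, h3, h4, h5, h6⟩ g
    exact inv_of_gens (fun g a => ρ g a) (actOf ρ).one (actOf ρ).mul w h1 h2 h3 h4 h5 h6 g
  · intro h
    exact ⟨h gu, h gv, h gt, h ge, h gf, h gx⟩

variable {k : Type} [CommRing k] {V : Type} [AddCommGroup V] [Module k V] (ρ : Representation k Gam V)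

lemma delta_zero_iff (z : (rhoQ ρ).invariants) :
    groupCohomology.δ (shX_exact ρ) 0 1 rfl ((groupCohomology.H0Iso (Rep.of (rhoQ ρ))).inv z) = 0 ↔
      ∃ e ∈ (rhoE k V).invariants, (LinearMap.range (iotaE ρ)).mkQ e = z.1 := by
  have ex := groupCohomology.mapShortComplex₃_exact (shX_exact ρ) (i := 0) (j := 1) rfl
  have hz0 := (groupCohomology.mapShortComplex₃ (shX_exact ρ) (i := 0) (j := 1) rfl).zero
  rw [ShortComplex.moduleCat_exact_iff] at ex
  have nat := fun y => ConcreteCategory.congr_hom (groupCohomology.map_id_comp_H0Iso_hom (shX ρ).g) y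
  constructor
  · intro h
    obtain ⟨y, hy⟩ := ex _ h
    have h2 := nat y
    let e := (groupCohomology.H0Iso (Rep.of (rhoE k V))).hom y
    refine ⟨e.1, e.2, ?_⟩
    have h3 : (groupCohomology.H0Iso (Rep.of (rhoQ ρ))).hom
      ((groupCohomology.H0Iso (Rep.of (rhoQ ρ))).inv z) = z := by simp
    have h4 := congrArg (groupCohomology.H0Iso (Rep.of (rhoQ ρ))).hom hy
    rw [h3] at h4
    exact (congrArg Subtype.val h2).symm.trans (congrArg Subtype.val h4)
  · rintro ⟨e, he, hez⟩
    let y := (groupCohomology.H0Iso (Rep.of (rhoE k V))).inv ⟨e, he⟩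
    have h2 := nat y
    have h3 : (groupCohomology.H0Iso (Rep.of (rhoE k V))).hom y = ⟨e, he⟩ := by simp [y]
    have h5 : (groupCohomology.map (MonoidHom.id Gam) (shX ρ).g 0) y = (groupCohomology.H0Iso (Rep.of (rhoQ ρ))).inv z := by
      apply (groupCohomology.H0Iso (Rep.of (rhoQ ρ))).toLinearEquiv.injective
      show (groupCohomology.H0Iso (Rep.of (rhoQ ρ))).hom _ = (groupCohomology.H0Iso (Rep.of (rhoQ ρ))).hom ((groupCohomology.H0Iso (Rep.of (rhoQ ρ))).inv z)
      have h6 : (groupCohomology.H0Iso (Rep.of (rhoQ ρ))).hom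
        ((groupCohomology.H0Iso (Rep.of (rhoQ ρ))).inv z) = z := by simp
      rw [h6]
      refine Eq.trans h2 ?_
      apply Subtype.ext
      refine Eq.trans ?_ hez
      exact congrArg (fun q => (LinearMap.range (iotaE ρ)).mkQ q) (congrArg Subtype.val h3)
    rw [← h5]
    exact ConcreteCategory.congr_hom hz0 y

end

set_option linter.all false
set_option synthInstance.maxHeartbeats 200000
set_option synthInstance.maxSize 2000
open Matrix
section
open CategoryTheory

variable {k : Type} [CommRing k]

lemma CGmap_iota {A A' : Type} [AddCommGroup A] [AddCommGroup A'] (f : A →+ A') (w : A) :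
    CGmap f (iota w) = iota (f w) := by
  have h : Prod.map (f : A → A') (f : A → A') 0 = 0 := by ext <;> simp
  simp [iota, CGmap, C3map, CKmap, h]

section
variable {V : Type} [AddCommGroup V] [Module k V] (ρ : Representation k Gam V)

/-- The embedding, additively. -/
def iE : V →+ (Gam → V) := (iotaE ρ).toAddMonoidHom

/-- The projection, additively. -/
def pE : (Gam → V) →+ ((Gam → V) ⧸ LinearMap.range (iotaE ρ)) :=
  (LinearMap.range (iotaE ρ)).mkQ.toAddMonoidHom

lemma iE_hom : IsGHom (opsOf (actOf ρ)) (opsOf (actOf (rhoE k V))) (iE ρ) :=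
  IsGHom_of _ _ _ (iotaE_comm ρ)

lemma pE_hom : IsGHom (opsOf (actOf (rhoE k V))) (opsOf (actOf (rhoQ ρ))) (pE ρ) :=
  IsGHom_of _ _ _ (fun _ _ => rfl)

lemma ipE (b : Gam → V) : pE ρ b = 0 ↔ ∃ a, iE ρ a = b :=
  Submodule.Quotient.mk_eq_zero _

lemma goodE : GoodG (opsOf (actOf (rhoE k V))) := rtrans_good

lemma compare_shift (n : ℕ) :
    Nonempty (groupCohomology (Rep.of (rhoQ ρ)) (n + 1) ≃+ groupCohomology (Rep.of ρ) (n + 2)) := by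
  have := groupCohomology.isIso_δ_of_isZero (shX_exact ρ) (n + 1) (zeroE n) (zeroE (n + 1))
  exact ⟨(asIso (groupCohomology.δ (shX_exact ρ) (n + 1) (n + 2) rfl)).toLinearEquiv.toAddEquiv⟩

/-- The degree zero part of the auxiliary group maps to invariants. -/
def toInv : YC (opsOf (actOf (rhoE k V))) (iE ρ) 0 →+ (rhoQ ρ).invariants where
  toFun y := ⟨pE ρ y.1.1.1.1.1, by
    rw [← DG_iota_inv]
    have h : iota (pE ρ y.1.1.1.1.1) = CGmap (pE ρ) y.1.1 := by
      rw [← CGmap_iota, ← eq_iota y.2.1]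
    have h2 := y.2.2.2
    rw [h, DG_map (pE_hom ρ)]
    change CGmap _ (DG _ (Nat.bodd 0) _) = 0
    rw [← h2, CGmap_comp_zero (iE ρ) (pE ρ) (fun a => (ipE ρ _).2 ⟨a, rfl⟩)]⟩
  map_zero' := Subtype.ext (map_zero (pE ρ))
  map_add' y z := Subtype.ext (map_add (pE ρ) _ _)

/-- The map to first cohomology. -/
noncomputable def toH1 : YC (opsOf (actOf (rhoE k V))) (iE ρ) 0 →+ groupCohomology (Rep.of ρ) 1 :=
  (((groupCohomology.H0Iso (Rep.of (rhoQ ρ))).inv ≫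
    groupCohomology.δ (shX_exact ρ) 0 1 rfl).hom.toAddMonoidHom).comp (toInv ρ)

lemma iota_sub {A : Type} [AddCommGroup A] (w z : A) : iota (w - z) = iota w - iota z := by
  simp [iota]

lemma toInv_surj : Function.Surjective (toInv ρ) := by
  rintro ⟨z, hz⟩
  obtain ⟨w, rfl⟩ := Submodule.mkQ_surjective _ z
  have h1 := (DG_iota_inv (rhoQ ρ) _).2 hz
  have h2 : CGmap (pE ρ) (iota w) = iota ((LinearMap.range (iotaE ρ)).mkQ w) := CGmap_iota _ _
  rw [← h2, DG_map (pE_hom ρ)] at h1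
  obtain ⟨a, ha, ha'⟩ := CG_lift (iE ρ) (pE ρ) (fun b hb => (ipE ρ b).1 hb)
    (DG_mem _ false (iota_mem w)) h1
  exact ⟨⟨(iota w, a), iota_mem w, ha, ha'⟩, rfl⟩

lemma compare_one :
    Nonempty (groupCohomology (Rep.of ρ) 1 ≃+ HC (opsOf (actOf ρ)) 1) := by
  refine equiv_of_ker (toH1 ρ) (toHC 1 (YC2 _ (iE ρ) 0) (YC2_mem (iE_hom ρ) (iotaE_inj ρ) 0)) ?_
    (YC2_surj (iE_hom ρ) (iotaE_inj ρ) goodE 0) ?_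
  · have hs : Function.Surjective ((groupCohomology.H0Iso (Rep.of (rhoQ ρ))).inv ≫
        groupCohomology.δ (shX_exact ρ) 0 1 rfl).hom := by
      have := groupCohomology.epi_δ_of_isZero (shX_exact ρ) 0 (zeroE 0)
      exact (ModuleCat.epi_iff_surjective _).1 (epi_comp' inferInstance this)
    exact hs.comp (toInv_surj ρ)
  · intro y
    rw [toHC_eq_zero, mem_BC]
    refine Iff.trans (delta_zero_iff ρ (toInv ρ y)) ?_
    obtain ⟨⟨w, a⟩, h1, h2, h3⟩ := y
    simp only at h1 h2 h3
    show (∃ e ∈ (rhoE k V).invariants, pE ρ e = pE ρ w.1.1.1) ↔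
      ∃ a' ∈ FG V 1, DG (opsOf (actOf ρ)) false a' = a
    have h3' : CGmap (iE ρ) a = DG (opsOf (actOf (rhoE k V))) false w := h3
    rw [eq_iota h1] at h3'
    generalize w.1.1.1 = w0 at *
    constructor
    · rintro ⟨e, he, he'⟩
      obtain ⟨a0, ha0⟩ := (ipE ρ (w0 - e)).1 (by rw [map_sub, he', sub_self])
      refine ⟨iota a0, iota_mem _, ?_⟩
      apply CGmap_inj (iE ρ) (iotaE_inj ρ)
      rw [← DG_map (iE_hom ρ), CGmap_iota, ha0, iota_sub, DG_sub, (DG_iota_inv (rhoE k V) e).2 he, sub_zero, h3']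
    · rintro ⟨a', ha', rfl⟩
      rw [eq_iota ha'] at h3'
      refine ⟨w0 - iE ρ a'.1.1.1, ?_, ?_⟩
      · rw [← DG_iota_inv, iota_sub, DG_sub, ← CGmap_iota, DG_map (iE_hom ρ), h3', sub_self]
      · rw [map_sub, (ipE ρ _).2 ⟨_, rfl⟩, sub_zero]

end

theorem compare (n : ℕ) : ∀ {V : Type} [AddCommGroup V] [Module k V] (ρ : Representation k Gam V),
    Nonempty (groupCohomology (Rep.of ρ) (n + 1) ≃+ HC (opsOf (actOf ρ)) (n + 1)) := by
  induction n with
  | zero => intro V _ _ ρ; exact compare_one ρ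
  | succ n ih =>
    intro V _ _ ρ
    obtain ⟨e1⟩ := ih (rhoQ ρ)
    obtain ⟨e2⟩ := compare_shift ρ n
    obtain ⟨e3⟩ := shiftHC (iE_hom ρ) (pE_hom ρ) (iotaE_inj ρ) (Submodule.mkQ_surjective _) (ipE ρ) goodE (n + 1) (by omega)
    exact ⟨e2.symm.trans (e1.trans e3)⟩

end

set_option linter.all false
set_option synthInstance.maxHeartbeats 200000
set_option synthInstance.maxSize 2000
open Matrix
/-! ## Computation for trivial coefficients -/

/-- A computation of one cohomology group of the small complex. -/
def Comp {B : Type} [AddCommGroup B] (O : Ops3 B) (p : Bool) (m m' : ℕ) (T : Type)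
    [AddCommGroup T] : Prop :=
  ∃ φ : C3 B →+ T, (∀ y ∈ F3 B m, φ (D3 O (!p) y) = 0) ∧
    (∀ z ∈ F3 B m', D3 O p z = 0 → φ z = 0 → ∃ y ∈ F3 B m, D3 O (!p) y = z) ∧
    ∀ t, ∃ z ∈ F3 B m', D3 O p z = 0 ∧ φ z = t

/-- The operators for trivial integer coefficients. -/
noncomputable abbrev OZ : OpsG ℤ := opsOf (actOf (Representation.trivial ℤ Gam ℤ))

lemma OZ_d1 (a : ℤ) : OZ.d1 a = 0 := by
  rw [OpsG.d1_apply]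
  exact Prod.ext (sub_self a) (sub_self a)

lemma OZ_d2 (a : ℤ × ℤ) : OZ.d2 a = 0 := by
  obtain ⟨b, c⟩ := a
  rw [OpsG.d2_apply]
  show c - c - (b - b) = 0
  ring

lemma OZ_DG (p : Bool) (z : CG ℤ) : DG OZ p z =
    (D3 OZ.toOps3 p z.1, - D3 OZ.O2 (!p) z.2.1, D3 OZ.On p z.2.2) := by
  have h1 : C3map OZ.d1 z.1 = 0 := by
    simp [C3map, CKmap, OZ_d1]
  have h2 : C3map OZ.d2 z.2.1 = 0 := by
    simp [C3map, CKmap, OZ_d2]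
  rw [DG, h1, h2, zero_sub, zero_add]

lemma combine (n : ℕ) {p : Bool} (hp : n.bodd = p) {T1 T2 T3 : Type} [AddCommGroup T1] [AddCommGroup T2] [AddCommGroup T3]
    (h1 : Comp OZ.toOps3 p n (n + 1) T1) (h2 : Comp OZ.O2 (!p) (n - 1) n T2)
    (h3 : Comp OZ.On p (n - 2) (n - 1) T3) : Nonempty (HC OZ n ≃+ T1 × T2 × T3) := by
  subst hp
  obtain ⟨f1, a1, b1, c1⟩ := h1
  obtain ⟨f2, a2, b2, c2⟩ := h2
  obtain ⟨f3, a3, b3, c3⟩ := h3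
  rw [Bool.not_not] at a2 b2
  let F : CG ℤ →+ T1 × T2 × T3 := f1.prodMap (f2.prodMap f3)
  refine equiv_of_ker (QuotientAddGroup.mk' ((BC OZ n).addSubgroupOf (ZC OZ n)))
    (F.comp (ZC OZ n).subtype) (QuotientAddGroup.mk'_surjective _) ?_ ?_
  · rintro ⟨t1, t2, t3⟩
    obtain ⟨z1, m1, d1, rfl⟩ := c1 t1
    obtain ⟨z2, m2, d2, rfl⟩ := c2 t2
    obtain ⟨z3, m3, d3, rfl⟩ := c3 t3
    refine ⟨⟨(z1, z2, z3), mem_ZC.2 ⟨⟨m1, m2, m3⟩, ?_⟩⟩, rfl⟩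
    rw [OZ_DG]
    simp only [d1, d2, d3, neg_zero]
    rfl
  · rintro ⟨⟨z1, z2, z3⟩, hz⟩
    obtain ⟨⟨m1, m2, m3⟩, hd⟩ := mem_ZC.1 hz
    rw [OZ_DG] at hd
    have e1 : D3 OZ.toOps3 n.bodd z1 = 0 := congrArg (fun w => w.1) hd
    have e2 : D3 OZ.O2 (!n.bodd) z2 = 0 := neg_eq_zero.1 (congrArg (fun w => w.2.1) hd)
    have e3 : D3 OZ.On n.bodd z3 = 0 := congrArg (fun w => w.2.2) hd
    rw [show QuotientAddGroup.mk' ((BC OZ n).addSubgroupOf (ZC OZ n)) ⟨(z1, z2, z3), hz⟩ = 0 ↔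
      (z1, z2, z3) ∈ BC OZ n from toHC_eq_zero n (ZC OZ n).subtype (fun y => y.2) _, mem_BC]
    constructor
    · rintro ⟨⟨y1, y2, y3⟩, ⟨n1, n2, n3⟩, hy⟩
      rw [OZ_DG] at hy
      obtain ⟨rfl, rfl, rfl⟩ : D3 OZ.toOps3 (!n.bodd) y1 = z1 ∧ - D3 OZ.O2 (!!n.bodd) y2 = z2 ∧
        D3 OZ.On (!n.bodd) y3 = z3 := ⟨congrArg (fun w => w.1) hy, congrArg (fun w => w.2.1) hy,
          congrArg (fun w => w.2.2) hy⟩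
      refine Prod.ext (a1 _ n1) (Prod.ext ?_ (a3 _ n3))
      show f2 (- _) = 0
      rw [map_neg, Bool.not_not, a2 _ n2, neg_zero]
    · intro h
      obtain ⟨y1, n1, rfl⟩ := b1 z1 m1 e1 (congrArg (fun w => w.1) h)
      obtain ⟨y2, n2, rfl⟩ := b2 z2 m2 e2 (congrArg (fun w => w.2.1) h)
      obtain ⟨y3, n3, rfl⟩ := b3 z3 m3 e3 (congrArg (fun w => w.2.2) h)
      refine ⟨(y1, -y2, y3), ⟨n1, (F3 _ _).neg_mem n2, n3⟩, ?_⟩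
      rw [OZ_DG, Bool.not_not]
      simp only [D3_neg, neg_neg]

lemma F3_top {B : Type} [AddCommGroup B] {m : ℕ} (hm : 4 ≤ m) : F3 B m = F3 B 4 := by
  ext ⟨⟨a, b, c, e⟩, ⟨a', b', c', e'⟩⟩
  simp only [mem_F3, mem_FK]
  constructor <;> intro _ <;> refine ⟨⟨?_, ?_, ?_⟩, ⟨?_, ?_, ?_⟩⟩ <;> intro _ <;> omega

section
variable (a b c e a' b' c' e' : ℤ)

lemma D3t_f : D3 OZ.toOps3 false ((a, b, c, e), (a', b', c', e')) =
    ((0, 0, 0, 0), (-2 * b - 2 * c + e - 4 * a', -b' - c', -e - c' + b', -4 * e')) := by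
  refine Prod.ext (Prod.ext ?_ (Prod.ext ?_ (Prod.ext ?_ ?_)))
    (Prod.ext ?_ (Prod.ext ?_ (Prod.ext ?_ ?_)))
  · show a - a = 0; ring
  · show a - a - (b - c - b + c) = 0; ring
  · show a - a - (c + b - c - b) = 0; ring
  · show c - c - (b - b) + (e - e) = 0; ring
  · show a - (c + c + b + b) + e - a - (a' + a' + a' + a') = _; ring
  · show b - b - (a' - a' - (- c' - b')) = _; ring
  · show c - e - c - (a' - a' - (b' - c')) = _; ring
  · show e - e - (c' - c' - (b' - b') + (e' + e' + e' + e')) = _; ring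

lemma D3t_t : D3 OZ.toOps3 true ((a, b, c, e), (a', b', c', e')) =
    ((4 * a, b + c, c - b, 4 * e), (- c + e, 2 * e, -2 * e, 0)) := by
  refine Prod.ext (Prod.ext ?_ (Prod.ext ?_ (Prod.ext ?_ ?_)))
    (Prod.ext ?_ (Prod.ext ?_ (Prod.ext ?_ ?_)))
  · show a + a + a + a = 4 * a; ring
  · show a - a - (-c - b) = b + c; ring
  · show a - a - (b - c) = c - b; ring
  · show c - c - (b - b) + (e + e + e + e) = 4 * e; ring
  · show a - c + e - a - (a' - a') = - c + e; ring
  · show b + e + e - b - (a' - a' - (b' - c' - b' + c')) = 2 * e; ring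
  · show c - e - e - c - (a' - a' - (c' + b' - c' - b')) = _; ring
  · show e - e - (c' - c' - (b' - b') + (e' - e')) = 0; ring

lemma D3n_f : D3 OZ.On false ((a, b, c, e), (a', b', c', e')) =
    ((-2 * a, 0, 0, -2 * e), (e, c' - b', e - b' - c', 0)) := by
  refine Prod.ext (Prod.ext ?_ (Prod.ext ?_ (Prod.ext ?_ ?_)))
    (Prod.ext ?_ (Prod.ext ?_ (Prod.ext ?_ ?_)))
  · show -a - a = _; ring
  · show a - a - (b - -c - - -b + - - -c) = 0; ring
  · show a - a - (c + -b - - - c - - - -b) = 0; ring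
  · show c - c - (b - b) + (-e - e) = _; ring
  · show a - (-c + - -c + - -b + - - -b) + - -e - a - (a' + -a' + - -a' + - - -a') = e; ring
  · show b - b - (a' - a' - (- - c' - b')) = _; ring
  · show c - -e - c - (a' - a' - (-b' - c')) = _; ring
  · show e - e - (c' - c' - (b' - b') + (e' + -e' + - -e' + - - -e')) = _; ring

lemma D3n_t : D3 OZ.On true ((a, b, c, e), (a', b', c', e')) =
    ((0, b - c, b + c, 0), (c + e + 2 * a', 0, 0, 2 * e')) := by
  refine Prod.ext (Prod.ext ?_ (Prod.ext ?_ (Prod.ext ?_ ?_)))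
    (Prod.ext ?_ (Prod.ext ?_ (Prod.ext ?_ ?_)))
  · show a + -a + - -a + - - -a = 0; ring
  · show a - a - (- -c - b) = b - c; ring
  · show a - a - (-b - c) = b + c; ring
  · show c - c - (b - b) + (e + -e + - -e + - - -e) = 0; ring
  · show a - -c + - -e - a - (-a' - a') = c + e + 2 * a'; ring
  · show b + - -e + - - -e - b - (a' - a' - (b' - -c' - - -b' + - - -c')) = 0; ring
  · show c - -e - - -e - c - (a' - a' - (c' + -b' - - -c' - - - -b')) = 0; ring
  · show e - e - (c' - c' - (b' - b') + (-e' - e')) = 2 * e'; ring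

end

section
variable (a1 a2 b1 b2 c1 c2 e1 e2 g1 g2 h1 h2 k1 k2 l1 l2 : ℤ)

lemma D3s_f : D3 OZ.O2 false (((a1, a2), (b1, b2), (c1, c2), (e1, e2)),
      ((g1, g2), (h1, h2), (k1, k2), (l1, l2))) =
    (((a2 - a1, a1 - a2), (0, 0), (0, 0), (e2 - e1, e1 - e2)),
      ((e1 - b1 - b2 - c1 - c2 - 2 * g1 - 2 * g2, e2 - b1 - b2 - c1 - c2 - 2 * g1 - 2 * g2),
       (-k2 - h1, -k1 - h2), (-e2 - k1 + h2, -e1 - k2 + h1),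
       (-2 * l1 - 2 * l2, -2 * l1 - 2 * l2))) := by
  refine Prod.ext (Prod.ext ?_ (Prod.ext ?_ (Prod.ext ?_ ?_)))
    (Prod.ext ?_ (Prod.ext ?_ (Prod.ext ?_ ?_)))
  · refine Prod.ext ?_ ?_
    · show a2 - a1 = _; ring
    · show a1 - a2 = _; ring
  · refine Prod.ext ?_ ?_
    · show a1 - a1 - (b1 - c2 - b1 + c2) = 0; ring
    · show a2 - a2 - (b2 - c1 - b2 + c1) = 0; ring
  · refine Prod.ext ?_ ?_
    · show a1 - a1 - (c1 + b2 - c1 - b2) = 0; ring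
    · show a2 - a2 - (c2 + b1 - c2 - b1) = 0; ring
  · refine Prod.ext ?_ ?_
    · show c1 - c1 - (b1 - b1) + (e2 - e1) = _; ring
    · show c2 - c2 - (b2 - b2) + (e1 - e2) = _; ring
  · refine Prod.ext ?_ ?_
    · show a1 - (c2 + c1 + b1 + b2) + e1 - a1 - (g1 + g2 + g1 + g2) = _; ring
    · show a2 - (c1 + c2 + b2 + b1) + e2 - a2 - (g2 + g1 + g2 + g1) = _; ring
  · refine Prod.ext ?_ ?_
    · show b1 - b1 - (g1 - g1 - (- k2 - h1)) = _; ring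
    · show b2 - b2 - (g2 - g2 - (- k1 - h2)) = _; ring
  · refine Prod.ext ?_ ?_
    · show c1 - e2 - c1 - (g1 - g1 - (h2 - k1)) = _; ring
    · show c2 - e1 - c2 - (g2 - g2 - (h1 - k2)) = _; ring
  · refine Prod.ext ?_ ?_
    · show e1 - e1 - (k1 - k1 - (h1 - h1) + (l1 + l2 + l1 + l2)) = _; ring
    · show e2 - e2 - (k2 - k2 - (h2 - h2) + (l2 + l1 + l2 + l1)) = _; ring

lemma D3s_t : D3 OZ.O2 true (((a1, a2), (b1, b2), (c1, c2), (e1, e2)),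
      ((g1, g2), (h1, h2), (k1, k2), (l1, l2))) =
    (((2 * a1 + 2 * a2, 2 * a1 + 2 * a2), (b1 + c2, b2 + c1), (c1 - b2, c2 - b1),
      (2 * e1 + 2 * e2, 2 * e1 + 2 * e2)),
      ((-c2 + e1 - g2 + g1, -c1 + e2 - g1 + g2), (e1 + e2, e1 + e2), (-e1 - e2, -e1 - e2),
       (l1 - l2, l2 - l1))) := by
  refine Prod.ext (Prod.ext ?_ (Prod.ext ?_ (Prod.ext ?_ ?_)))
    (Prod.ext ?_ (Prod.ext ?_ (Prod.ext ?_ ?_)))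
  · refine Prod.ext ?_ ?_
    · show a1 + a2 + a1 + a2 = _; ring
    · show a2 + a1 + a2 + a1 = _; ring
  · refine Prod.ext ?_ ?_
    · show a1 - a1 - (- c2 - b1) = _; ring
    · show a2 - a2 - (- c1 - b2) = _; ring
  · refine Prod.ext ?_ ?_
    · show a1 - a1 - (b2 - c1) = _; ring
    · show a2 - a2 - (b1 - c2) = _; ring
  · refine Prod.ext ?_ ?_
    · show c1 - c1 - (b1 - b1) + (e1 + e2 + e1 + e2) = _; ring
    · show c2 - c2 - (b2 - b2) + (e2 + e1 + e2 + e1) = _; ring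
  · refine Prod.ext ?_ ?_
    · show a1 - c2 + e1 - a1 - (g2 - g1) = _; ring
    · show a2 - c1 + e2 - a2 - (g1 - g2) = _; ring
  · refine Prod.ext ?_ ?_
    · show b1 + e1 + e2 - b1 - (g1 - g1 - (h1 - k2 - h1 + k2)) = _; ring
    · show b2 + e2 + e1 - b2 - (g2 - g2 - (h2 - k1 - h2 + k1)) = _; ring
  · refine Prod.ext ?_ ?_
    · show c1 - e2 - e1 - c1 - (g1 - g1 - (k1 + h2 - k1 - h2)) = _; ring
    · show c2 - e1 - e2 - c2 - (g2 - g2 - (k2 + h1 - k2 - h1)) = _; ring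
  · refine Prod.ext ?_ ?_
    · show e1 - e1 - (k1 - k1 - (h1 - h1) + (l2 - l1)) = _; ring
    · show e2 - e2 - (k2 - k2 - (h2 - h2) + (l1 - l2)) = _; ring

end

set_option linter.all false
set_option synthInstance.maxHeartbeats 200000
set_option synthInstance.maxSize 2000
open Matrix
lemma z4 (x : ℤ) : (x : ZMod 4) = 0 ↔ ∃ k, x = 4 * k := ZMod.intCast_zmod_eq_zero_iff_dvd x 4
lemma z2 (x : ℤ) : (x : ZMod 2) = 0 ↔ ∃ k, x = 2 * k := ZMod.intCast_zmod_eq_zero_iff_dvd x 2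
lemma z4s (t : ZMod 4) : ∃ k : ℤ, (k : ZMod 4) = t := ZMod.intCast_surjective t
lemma z2s (t : ZMod 2) : ∃ k : ℤ, (k : ZMod 2) = t := ZMod.intCast_surjective t

lemma zero_C3 : (0 : C3 ℤ) = ((0, 0, 0, 0), (0, 0, 0, 0)) := rfl
lemma zero_C3s : (0 : C3 (ℤ × ℤ)) = (((0, 0), (0, 0), (0, 0), (0, 0)), ((0, 0), (0, 0), (0, 0), (0, 0))) := rfl
lemma zero_PP : (0 : ℤ × ℤ) = (0, 0) := rfl

/-- Sign coefficients, degree minus one. -/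
lemma n_neg : Comp OZ.On true 0 0 Unit := by
  refine ⟨0, fun y hy => rfl, ?_, fun t => ⟨0, (F3 ℤ 0).zero_mem, D3_zero _ _, rfl⟩⟩
  rintro ⟨⟨a, b, c, e⟩, ⟨a', b', c', e'⟩⟩ hz hd hf
  simp only [mem_F3, mem_FK] at hz
  refine ⟨0, (F3 ℤ 0).zero_mem, ?_⟩
  rw [D3_zero]
  simp only [zero_C3, Prod.mk.injEq]; omega

/-- Sign coefficients, degree zero. -/
lemma n_zero : Comp OZ.On false 0 1 Unit := by
  refine ⟨0, fun y hy => rfl, ?_, fun t => ⟨0, (F3 ℤ 1).zero_mem, D3_zero _ _, rfl⟩⟩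
  rintro ⟨⟨a, b, c, e⟩, ⟨a', b', c', e'⟩⟩ hz hd hf
  simp only [mem_F3, mem_FK] at hz
  simp only [D3n_f, zero_C3, Prod.mk.injEq] at hd
  refine ⟨0, (F3 ℤ 0).zero_mem, ?_⟩
  rw [D3_zero]
  simp only [zero_C3, Prod.mk.injEq]; omega

/-- Trivial coefficients, degree one. -/
lemma t_one : Comp OZ.toOps3 true 1 2 ℤ := by
  refine ⟨AddMonoidHom.mk' (fun z : C3 ℤ => (z.2.1 : ℤ)) ?_, ?_, ?_, ?_⟩
  · rintro ⟨⟨a, b, c, e⟩, ⟨a', b', c', e'⟩⟩ ⟨⟨xa, xb, xc, xe⟩, ⟨xa', xb', xc', xe'⟩⟩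
    simp only [Prod.mk_add_mk, Prod.mk.injEq]
  · rintro ⟨⟨a, b, c, e⟩, ⟨a', b', c', e'⟩⟩ hy
    simp only [mem_F3, mem_FK, Prod.mk_eq_zero, Prod.mk.injEq, zero_PP, Nat.reduceLeDiff, Nat.reduceSub, Nat.not_ofNat_le_one, Nat.le_refl, Nat.zero_le, Nat.reduceEqDiff, implies_true, Bool.not_false, Bool.not_true, true_imp_iff, false_imp_iff, true_and, and_true] at hy
    simp only [Bool.not_false, Bool.not_true, D3t_f, AddMonoidHom.mk'_apply, Prod.mk_eq_zero, z4, z2]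
    exact by omega
  · rintro ⟨⟨a, b, c, e⟩, ⟨a', b', c', e'⟩⟩ hz hd hf
    simp only [mem_F3, mem_FK, Prod.mk_eq_zero, Prod.mk.injEq, zero_PP, Nat.reduceLeDiff, Nat.reduceSub, Nat.not_ofNat_le_one, Nat.le_refl, Nat.zero_le, Nat.reduceEqDiff, implies_true, Bool.not_false, Bool.not_true, true_imp_iff, false_imp_iff, true_and, and_true] at hz
    simp only [D3t_t, zero_C3, Prod.mk.injEq, true_and, and_true] at hd
    simp only [AddMonoidHom.mk'_apply, Prod.mk_eq_zero, z4, z2] at hf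
    obtain hx0 := hf
    refine ⟨((0, 0, 0, 0), (0, 0, 0, 0)), ?_, ?_⟩
    · simp only [mem_F3, mem_FK, Prod.mk_eq_zero, Prod.mk.injEq, zero_PP, Nat.reduceLeDiff, Nat.reduceSub, Nat.not_ofNat_le_one, Nat.le_refl, Nat.zero_le, Nat.reduceEqDiff, implies_true, Bool.not_false, Bool.not_true, true_imp_iff, false_imp_iff, true_and, and_true]; try omega
    · simp only [Bool.not_false, Bool.not_true, D3t_f, Prod.mk.injEq, true_and, and_true]; omega
  · intro t0
    obtain ⟨x0, rfl⟩ : ∃ x, x = t0 := ⟨_, rfl⟩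
    refine ⟨((0, 0, 0, 0), (x0, 0, 0, 0)), ?_, ?_, ?_⟩
    · simp only [mem_F3, mem_FK, Prod.mk_eq_zero, Prod.mk.injEq, zero_PP, Nat.reduceLeDiff, Nat.reduceSub, Nat.not_ofNat_le_one, Nat.le_refl, Nat.zero_le, Nat.reduceEqDiff, implies_true, Bool.not_false, Bool.not_true, true_imp_iff, false_imp_iff, true_and, and_true]; try omega
    · simp only [D3t_t, zero_C3, Prod.mk.injEq, true_and, and_true]; omega
    · simp

/-- Trivial coefficients, degree two. -/
lemma t_two : Comp OZ.toOps3 false 2 3 (ZMod 4 × ℤ) := by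
  refine ⟨AddMonoidHom.mk' (fun z : C3 ℤ => (((z.1.1 : ℤ) : ZMod 4), (z.1.2.1 + z.1.2.2.1 + 2 * z.2.1 : ℤ))) ?_, ?_, ?_, ?_⟩
  · rintro ⟨⟨a, b, c, e⟩, ⟨a', b', c', e'⟩⟩ ⟨⟨xa, xb, xc, xe⟩, ⟨xa', xb', xc', xe'⟩⟩
    simp only [Prod.mk_add_mk, Prod.mk.injEq]
    refine ⟨?_, ?_⟩ <;> push_cast <;> ring
  · rintro ⟨⟨a, b, c, e⟩, ⟨a', b', c', e'⟩⟩ hy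
    simp only [mem_F3, mem_FK, Prod.mk_eq_zero, Prod.mk.injEq, zero_PP, Nat.reduceLeDiff, Nat.reduceSub, Nat.not_ofNat_le_one, Nat.le_refl, Nat.zero_le, Nat.reduceEqDiff, implies_true, Bool.not_false, Bool.not_true, true_imp_iff, false_imp_iff, true_and, and_true] at hy
    simp only [Bool.not_false, Bool.not_true, D3t_t, AddMonoidHom.mk'_apply, Prod.mk_eq_zero, z4, z2]
    exact ⟨⟨a, by omega⟩, by omega⟩
  · rintro ⟨⟨a, b, c, e⟩, ⟨a', b', c', e'⟩⟩ hz hd hf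
    simp only [mem_F3, mem_FK, Prod.mk_eq_zero, Prod.mk.injEq, zero_PP, Nat.reduceLeDiff, Nat.reduceSub, Nat.not_ofNat_le_one, Nat.le_refl, Nat.zero_le, Nat.reduceEqDiff, implies_true, Bool.not_false, Bool.not_true, true_imp_iff, false_imp_iff, true_and, and_true] at hz
    simp only [D3t_f, zero_C3, Prod.mk.injEq, true_and, and_true] at hd
    simp only [AddMonoidHom.mk'_apply, Prod.mk_eq_zero, z4, z2] at hf
    obtain ⟨⟨x0, hx0⟩, hx1⟩ := hf
    refine ⟨((x0, b + a', -a', 0), (0, 0, 0, 0)), ?_, ?_⟩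
    · simp only [mem_F3, mem_FK, Prod.mk_eq_zero, Prod.mk.injEq, zero_PP, Nat.reduceLeDiff, Nat.reduceSub, Nat.not_ofNat_le_one, Nat.le_refl, Nat.zero_le, Nat.reduceEqDiff, implies_true, Bool.not_false, Bool.not_true, true_imp_iff, false_imp_iff, true_and, and_true]; try omega
    · simp only [Bool.not_false, Bool.not_true, D3t_t, Prod.mk.injEq, true_and, and_true]; omega
  · rintro ⟨t0, t1⟩
    obtain ⟨x0, rfl⟩ := z4s t0
    obtain ⟨x1, rfl⟩ : ∃ x, x = t1 := ⟨_, rfl⟩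
    refine ⟨((x0, x1, 0, 2 * x1), (0, x1, -x1, 0)), ?_, ?_, ?_⟩
    · simp only [mem_F3, mem_FK, Prod.mk_eq_zero, Prod.mk.injEq, zero_PP, Nat.reduceLeDiff, Nat.reduceSub, Nat.not_ofNat_le_one, Nat.le_refl, Nat.zero_le, Nat.reduceEqDiff, implies_true, Bool.not_false, Bool.not_true, true_imp_iff, false_imp_iff, true_and, and_true]; try omega
    · simp only [D3t_f, zero_C3, Prod.mk.injEq, true_and, and_true]; omega
    · simp

/-- Trivial coefficients, degree three. -/
lemma t_three : Comp OZ.toOps3 true 3 4 (ZMod 2 × ℤ) := by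
  refine ⟨AddMonoidHom.mk' (fun z : C3 ℤ => (((z.2.1 + z.2.2.1 + z.2.2.2.1 : ℤ) : ZMod 2), (z.2.2.2.2 : ℤ))) ?_, ?_, ?_, ?_⟩
  · rintro ⟨⟨a, b, c, e⟩, ⟨a', b', c', e'⟩⟩ ⟨⟨xa, xb, xc, xe⟩, ⟨xa', xb', xc', xe'⟩⟩
    simp only [Prod.mk_add_mk, Prod.mk.injEq]
    refine ⟨?_, ?_⟩ <;> push_cast <;> ring
  · rintro ⟨⟨a, b, c, e⟩, ⟨a', b', c', e'⟩⟩ hy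
    simp only [mem_F3, mem_FK, Prod.mk_eq_zero, Prod.mk.injEq, zero_PP, Nat.reduceLeDiff, Nat.reduceSub, Nat.not_ofNat_le_one, Nat.le_refl, Nat.zero_le, Nat.reduceEqDiff, implies_true, Bool.not_false, Bool.not_true, true_imp_iff, false_imp_iff, true_and, and_true] at hy
    simp only [Bool.not_false, Bool.not_true, D3t_f, AddMonoidHom.mk'_apply, Prod.mk_eq_zero, z4, z2]
    exact ⟨⟨-b - c - 2 * a' - c', by omega⟩, by omega⟩
  · rintro ⟨⟨a, b, c, e⟩, ⟨a', b', c', e'⟩⟩ hz hd hf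
    simp only [mem_F3, mem_FK, Prod.mk_eq_zero, Prod.mk.injEq, zero_PP, Nat.reduceLeDiff, Nat.reduceSub, Nat.not_ofNat_le_one, Nat.le_refl, Nat.zero_le, Nat.reduceEqDiff, implies_true, Bool.not_false, Bool.not_true, true_imp_iff, false_imp_iff, true_and, and_true] at hz
    simp only [D3t_t, zero_C3, Prod.mk.injEq, true_and, and_true] at hd
    simp only [AddMonoidHom.mk'_apply, Prod.mk_eq_zero, z4, z2] at hf
    obtain ⟨⟨x0, hx0⟩, hx1⟩ := hf
    refine ⟨((0, -x0, 0, -b' - c'), (0, -b', 0, 0)), ?_, ?_⟩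
    · simp only [mem_F3, mem_FK, Prod.mk_eq_zero, Prod.mk.injEq, zero_PP, Nat.reduceLeDiff, Nat.reduceSub, Nat.not_ofNat_le_one, Nat.le_refl, Nat.zero_le, Nat.reduceEqDiff, implies_true, Bool.not_false, Bool.not_true, true_imp_iff, false_imp_iff, true_and, and_true]; try omega
    · simp only [Bool.not_false, Bool.not_true, D3t_f, Prod.mk.injEq, true_and, and_true]; omega
  · rintro ⟨t0, t1⟩
    obtain ⟨x0, rfl⟩ := z2s t0
    obtain ⟨x1, rfl⟩ : ∃ x, x = t1 := ⟨_, rfl⟩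
    refine ⟨((0, 0, 0, 0), (x0, 0, 0, x1)), ?_, ?_, ?_⟩
    · simp only [mem_F3, mem_FK, Prod.mk_eq_zero, Prod.mk.injEq, zero_PP, Nat.reduceLeDiff, Nat.reduceSub, Nat.not_ofNat_le_one, Nat.le_refl, Nat.zero_le, Nat.reduceEqDiff, implies_true, Bool.not_false, Bool.not_true, true_imp_iff, false_imp_iff, true_and, and_true]; try omega
    · simp only [D3t_t, zero_C3, Prod.mk.injEq, true_and, and_true]; omega
    · simp

/-- Trivial coefficients, even degree. -/
lemma t_even : Comp OZ.toOps3 false 4 4 (ZMod 4 × ZMod 2) := by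
  refine ⟨AddMonoidHom.mk' (fun z : C3 ℤ => (((z.1.1 : ℤ) : ZMod 4), ((z.1.2.1 + z.1.2.2.1 : ℤ) : ZMod 2))) ?_, ?_, ?_, ?_⟩
  · rintro ⟨⟨a, b, c, e⟩, ⟨a', b', c', e'⟩⟩ ⟨⟨xa, xb, xc, xe⟩, ⟨xa', xb', xc', xe'⟩⟩
    simp only [Prod.mk_add_mk, Prod.mk.injEq]
    refine ⟨?_, ?_⟩ <;> push_cast <;> ring
  · rintro ⟨⟨a, b, c, e⟩, ⟨a', b', c', e'⟩⟩ hy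
    simp only [mem_F3, mem_FK, Prod.mk_eq_zero, Prod.mk.injEq, zero_PP, Nat.reduceLeDiff, Nat.reduceSub, Nat.not_ofNat_le_one, Nat.le_refl, Nat.zero_le, Nat.reduceEqDiff, implies_true, Bool.not_false, Bool.not_true, true_imp_iff, false_imp_iff, true_and, and_true] at hy
    simp only [Bool.not_false, Bool.not_true, D3t_t, AddMonoidHom.mk'_apply, Prod.mk_eq_zero, z4, z2]
    exact ⟨⟨a, by omega⟩, ⟨c, by omega⟩⟩
  · rintro ⟨⟨a, b, c, e⟩, ⟨a', b', c', e'⟩⟩ hz hd hf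
    simp only [mem_F3, mem_FK, Prod.mk_eq_zero, Prod.mk.injEq, zero_PP, Nat.reduceLeDiff, Nat.reduceSub, Nat.not_ofNat_le_one, Nat.le_refl, Nat.zero_le, Nat.reduceEqDiff, implies_true, Bool.not_false, Bool.not_true, true_imp_iff, false_imp_iff, true_and, and_true] at hz
    simp only [D3t_f, zero_C3, Prod.mk.injEq, true_and, and_true] at hd
    simp only [AddMonoidHom.mk'_apply, Prod.mk_eq_zero, z4, z2] at hf
    obtain ⟨⟨x0, hx0⟩, ⟨x1, hx1⟩⟩ := hf
    refine ⟨((x0, b - x1, x1, a' + x1), (0, 0, 0, 0)), ?_, ?_⟩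
    · simp only [mem_F3, mem_FK, Prod.mk_eq_zero, Prod.mk.injEq, zero_PP, Nat.reduceLeDiff, Nat.reduceSub, Nat.not_ofNat_le_one, Nat.le_refl, Nat.zero_le, Nat.reduceEqDiff, implies_true, Bool.not_false, Bool.not_true, true_imp_iff, false_imp_iff, true_and, and_true]; try omega
    · simp only [Bool.not_false, Bool.not_true, D3t_t, Prod.mk.injEq, true_and, and_true]; omega
  · rintro ⟨t0, t1⟩
    obtain ⟨x0, rfl⟩ := z4s t0
    obtain ⟨x1, rfl⟩ := z2s t1
    refine ⟨((x0, x1, 0, 2 * x1), (0, x1, -x1, 0)), ?_, ?_, ?_⟩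
    · simp only [mem_F3, mem_FK, Prod.mk_eq_zero, Prod.mk.injEq, zero_PP, Nat.reduceLeDiff, Nat.reduceSub, Nat.not_ofNat_le_one, Nat.le_refl, Nat.zero_le, Nat.reduceEqDiff, implies_true, Bool.not_false, Bool.not_true, true_imp_iff, false_imp_iff, true_and, and_true]; try omega
    · simp only [D3t_f, zero_C3, Prod.mk.injEq, true_and, and_true]; omega
    · simp

/-- Trivial coefficients, odd degree. -/
lemma t_odd : Comp OZ.toOps3 true 4 4 (ZMod 4 × ZMod 2) := by
  refine ⟨AddMonoidHom.mk' (fun z : C3 ℤ => (((z.2.2.2.2 : ℤ) : ZMod 4), ((z.2.1 + z.2.2.1 + z.2.2.2.1 : ℤ) : ZMod 2))) ?_, ?_, ?_, ?_⟩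
  · rintro ⟨⟨a, b, c, e⟩, ⟨a', b', c', e'⟩⟩ ⟨⟨xa, xb, xc, xe⟩, ⟨xa', xb', xc', xe'⟩⟩
    simp only [Prod.mk_add_mk, Prod.mk.injEq]
    refine ⟨?_, ?_⟩ <;> push_cast <;> ring
  · rintro ⟨⟨a, b, c, e⟩, ⟨a', b', c', e'⟩⟩ hy
    simp only [mem_F3, mem_FK, Prod.mk_eq_zero, Prod.mk.injEq, zero_PP, Nat.reduceLeDiff, Nat.reduceSub, Nat.not_ofNat_le_one, Nat.le_refl, Nat.zero_le, Nat.reduceEqDiff, implies_true, Bool.not_false, Bool.not_true, true_imp_iff, false_imp_iff, true_and, and_true] at hy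
    simp only [Bool.not_false, Bool.not_true, D3t_f, AddMonoidHom.mk'_apply, Prod.mk_eq_zero, z4, z2]
    exact ⟨⟨-e', by omega⟩, ⟨-b - c - 2 * a' - c', by omega⟩⟩
  · rintro ⟨⟨a, b, c, e⟩, ⟨a', b', c', e'⟩⟩ hz hd hf
    simp only [mem_F3, mem_FK, Prod.mk_eq_zero, Prod.mk.injEq, zero_PP, Nat.reduceLeDiff, Nat.reduceSub, Nat.not_ofNat_le_one, Nat.le_refl, Nat.zero_le, Nat.reduceEqDiff, implies_true, Bool.not_false, Bool.not_true, true_imp_iff, false_imp_iff, true_and, and_true] at hz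
    simp only [D3t_t, zero_C3, Prod.mk.injEq, true_and, and_true] at hd
    simp only [AddMonoidHom.mk'_apply, Prod.mk_eq_zero, z4, z2] at hf
    obtain ⟨⟨x0, hx0⟩, ⟨x1, hx1⟩⟩ := hf
    refine ⟨((0, -x1, 0, -b' - c'), (0, -b', 0, -x0)), ?_, ?_⟩
    · simp only [mem_F3, mem_FK, Prod.mk_eq_zero, Prod.mk.injEq, zero_PP, Nat.reduceLeDiff, Nat.reduceSub, Nat.not_ofNat_le_one, Nat.le_refl, Nat.zero_le, Nat.reduceEqDiff, implies_true, Bool.not_false, Bool.not_true, true_imp_iff, false_imp_iff, true_and, and_true]; try omega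
    · simp only [Bool.not_false, Bool.not_true, D3t_f, Prod.mk.injEq, true_and, and_true]; omega
  · rintro ⟨t0, t1⟩
    obtain ⟨x0, rfl⟩ := z4s t0
    obtain ⟨x1, rfl⟩ := z2s t1
    refine ⟨((0, 0, 0, 0), (x1, 0, 0, x0)), ?_, ?_, ?_⟩
    · simp only [mem_F3, mem_FK, Prod.mk_eq_zero, Prod.mk.injEq, zero_PP, Nat.reduceLeDiff, Nat.reduceSub, Nat.not_ofNat_le_one, Nat.le_refl, Nat.zero_le, Nat.reduceEqDiff, implies_true, Bool.not_false, Bool.not_true, true_imp_iff, false_imp_iff, true_and, and_true]; try omega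
    · simp only [D3t_t, zero_C3, Prod.mk.injEq, true_and, and_true]; omega
    · simp

/-- Sign coefficients, degree one. -/
lemma n_one : Comp OZ.On true 1 2 (ZMod 2) := by
  refine ⟨AddMonoidHom.mk' (fun z : C3 ℤ => ((z.1.1 : ℤ) : ZMod 2)) ?_, ?_, ?_, ?_⟩
  · rintro ⟨⟨a, b, c, e⟩, ⟨a', b', c', e'⟩⟩ ⟨⟨xa, xb, xc, xe⟩, ⟨xa', xb', xc', xe'⟩⟩
    simp only [Prod.mk_add_mk, Prod.mk.injEq]
    push_cast; ring
  · rintro ⟨⟨a, b, c, e⟩, ⟨a', b', c', e'⟩⟩ hy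
    simp only [mem_F3, mem_FK, Prod.mk_eq_zero, Prod.mk.injEq, zero_PP, Nat.reduceLeDiff, Nat.reduceSub, Nat.not_ofNat_le_one, Nat.le_refl, Nat.zero_le, Nat.reduceEqDiff, implies_true, Bool.not_false, Bool.not_true, true_imp_iff, false_imp_iff, true_and, and_true] at hy
    simp only [Bool.not_false, Bool.not_true, D3n_f, AddMonoidHom.mk'_apply, Prod.mk_eq_zero, z4, z2]
    exact ⟨-a, by omega⟩
  · rintro ⟨⟨a, b, c, e⟩, ⟨a', b', c', e'⟩⟩ hz hd hf
    simp only [mem_F3, mem_FK, Prod.mk_eq_zero, Prod.mk.injEq, zero_PP, Nat.reduceLeDiff, Nat.reduceSub, Nat.not_ofNat_le_one, Nat.le_refl, Nat.zero_le, Nat.reduceEqDiff, implies_true, Bool.not_false, Bool.not_true, true_imp_iff, false_imp_iff, true_and, and_true] at hz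
    simp only [D3n_t, zero_C3, Prod.mk.injEq, true_and, and_true] at hd
    simp only [AddMonoidHom.mk'_apply, Prod.mk_eq_zero, z4, z2] at hf
    obtain ⟨x0, hx0⟩ := hf
    refine ⟨((-x0, 0, 0, 0), (0, 0, 0, 0)), ?_, ?_⟩
    · simp only [mem_F3, mem_FK, Prod.mk_eq_zero, Prod.mk.injEq, zero_PP, Nat.reduceLeDiff, Nat.reduceSub, Nat.not_ofNat_le_one, Nat.le_refl, Nat.zero_le, Nat.reduceEqDiff, implies_true, Bool.not_false, Bool.not_true, true_imp_iff, false_imp_iff, true_and, and_true]; try omega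
    · simp only [Bool.not_false, Bool.not_true, D3n_f, Prod.mk.injEq, true_and, and_true]; omega
  · intro t0
    obtain ⟨x0, rfl⟩ := z2s t0
    refine ⟨((x0, 0, 0, 0), (0, 0, 0, 0)), ?_, ?_, ?_⟩
    · simp only [mem_F3, mem_FK, Prod.mk_eq_zero, Prod.mk.injEq, zero_PP, Nat.reduceLeDiff, Nat.reduceSub, Nat.not_ofNat_le_one, Nat.le_refl, Nat.zero_le, Nat.reduceEqDiff, implies_true, Bool.not_false, Bool.not_true, true_imp_iff, false_imp_iff, true_and, and_true]; try omega
    · simp only [D3n_t, zero_C3, Prod.mk.injEq, true_and, and_true]; omega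
    · simp

/-- Sign coefficients, degree two. -/
lemma n_two : Comp OZ.On false 2 3 (ZMod 4) := by
  refine ⟨AddMonoidHom.mk' (fun z : C3 ℤ => ((z.1.2.1 - z.1.2.2.1 + 2 * z.2.1 : ℤ) : ZMod 4)) ?_, ?_, ?_, ?_⟩
  · rintro ⟨⟨a, b, c, e⟩, ⟨a', b', c', e'⟩⟩ ⟨⟨xa, xb, xc, xe⟩, ⟨xa', xb', xc', xe'⟩⟩
    simp only [Prod.mk_add_mk, Prod.mk.injEq]
    push_cast; ring
  · rintro ⟨⟨a, b, c, e⟩, ⟨a', b', c', e'⟩⟩ hy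
    simp only [mem_F3, mem_FK, Prod.mk_eq_zero, Prod.mk.injEq, zero_PP, Nat.reduceLeDiff, Nat.reduceSub, Nat.not_ofNat_le_one, Nat.le_refl, Nat.zero_le, Nat.reduceEqDiff, implies_true, Bool.not_false, Bool.not_true, true_imp_iff, false_imp_iff, true_and, and_true] at hy
    simp only [Bool.not_false, Bool.not_true, D3n_t, AddMonoidHom.mk'_apply, Prod.mk_eq_zero, z4, z2]
    exact ⟨a', by omega⟩
  · rintro ⟨⟨a, b, c, e⟩, ⟨a', b', c', e'⟩⟩ hz hd hf
    simp only [mem_F3, mem_FK, Prod.mk_eq_zero, Prod.mk.injEq, zero_PP, Nat.reduceLeDiff, Nat.reduceSub, Nat.not_ofNat_le_one, Nat.le_refl, Nat.zero_le, Nat.reduceEqDiff, implies_true, Bool.not_false, Bool.not_true, true_imp_iff, false_imp_iff, true_and, and_true] at hz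
    simp only [D3n_f, zero_C3, Prod.mk.injEq, true_and, and_true] at hd
    simp only [AddMonoidHom.mk'_apply, Prod.mk_eq_zero, z4, z2] at hf
    obtain ⟨x0, hx0⟩ := hf
    refine ⟨((0, b + a' - 2 * x0, a' - 2 * x0, 0), (x0, 0, 0, 0)), ?_, ?_⟩
    · simp only [mem_F3, mem_FK, Prod.mk_eq_zero, Prod.mk.injEq, zero_PP, Nat.reduceLeDiff, Nat.reduceSub, Nat.not_ofNat_le_one, Nat.le_refl, Nat.zero_le, Nat.reduceEqDiff, implies_true, Bool.not_false, Bool.not_true, true_imp_iff, false_imp_iff, true_and, and_true]; try omega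
    · simp only [Bool.not_false, Bool.not_true, D3n_t, Prod.mk.injEq, true_and, and_true]; omega
  · intro t0
    obtain ⟨x0, rfl⟩ := z4s t0
    refine ⟨((0, x0, 0, 0), (0, 0, 0, 0)), ?_, ?_, ?_⟩
    · simp only [mem_F3, mem_FK, Prod.mk_eq_zero, Prod.mk.injEq, zero_PP, Nat.reduceLeDiff, Nat.reduceSub, Nat.not_ofNat_le_one, Nat.le_refl, Nat.zero_le, Nat.reduceEqDiff, implies_true, Bool.not_false, Bool.not_true, true_imp_iff, false_imp_iff, true_and, and_true]; try omega
    · simp only [D3n_f, zero_C3, Prod.mk.injEq, true_and, and_true]; omega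
    · simp

/-- Sign coefficients, odd degree. -/
lemma n_three : Comp OZ.On true 3 4 (ZMod 2 × ZMod 2) := by
  refine ⟨AddMonoidHom.mk' (fun z : C3 ℤ => (((z.1.1 : ℤ) : ZMod 2), ((z.2.1 + z.2.2.1 + z.2.2.2.1 : ℤ) : ZMod 2))) ?_, ?_, ?_, ?_⟩
  · rintro ⟨⟨a, b, c, e⟩, ⟨a', b', c', e'⟩⟩ ⟨⟨xa, xb, xc, xe⟩, ⟨xa', xb', xc', xe'⟩⟩
    simp only [Prod.mk_add_mk, Prod.mk.injEq]
    refine ⟨?_, ?_⟩ <;> push_cast <;> ring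
  · rintro ⟨⟨a, b, c, e⟩, ⟨a', b', c', e'⟩⟩ hy
    simp only [mem_F3, mem_FK, Prod.mk_eq_zero, Prod.mk.injEq, zero_PP, Nat.reduceLeDiff, Nat.reduceSub, Nat.not_ofNat_le_one, Nat.le_refl, Nat.zero_le, Nat.reduceEqDiff, implies_true, Bool.not_false, Bool.not_true, true_imp_iff, false_imp_iff, true_and, and_true] at hy
    simp only [Bool.not_false, Bool.not_true, D3n_f, AddMonoidHom.mk'_apply, Prod.mk_eq_zero, z4, z2]
    exact ⟨⟨-a, by omega⟩, ⟨e - b', by omega⟩⟩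
  · rintro ⟨⟨a, b, c, e⟩, ⟨a', b', c', e'⟩⟩ hz hd hf
    simp only [mem_F3, mem_FK, Prod.mk_eq_zero, Prod.mk.injEq, zero_PP, Nat.reduceLeDiff, Nat.reduceSub, Nat.not_ofNat_le_one, Nat.le_refl, Nat.zero_le, Nat.reduceEqDiff, implies_true, Bool.not_false, Bool.not_true, true_imp_iff, false_imp_iff, true_and, and_true] at hz
    simp only [D3n_t, zero_C3, Prod.mk.injEq, true_and, and_true] at hd
    simp only [AddMonoidHom.mk'_apply, Prod.mk_eq_zero, z4, z2] at hf
    obtain ⟨⟨x0, hx0⟩, ⟨x1, hx1⟩⟩ := hf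
    refine ⟨((-x0, 0, 0, a'), (0, x1 - c' - b', x1 - c', 0)), ?_, ?_⟩
    · simp only [mem_F3, mem_FK, Prod.mk_eq_zero, Prod.mk.injEq, zero_PP, Nat.reduceLeDiff, Nat.reduceSub, Nat.not_ofNat_le_one, Nat.le_refl, Nat.zero_le, Nat.reduceEqDiff, implies_true, Bool.not_false, Bool.not_true, true_imp_iff, false_imp_iff, true_and, and_true]; try omega
    · simp only [Bool.not_false, Bool.not_true, D3n_f, Prod.mk.injEq, true_and, and_true]; omega
  · rintro ⟨t0, t1⟩
    obtain ⟨x0, rfl⟩ := z2s t0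
    obtain ⟨x1, rfl⟩ := z2s t1
    refine ⟨((x0, 0, 0, 0), (0, x1, 0, 0)), ?_, ?_, ?_⟩
    · simp only [mem_F3, mem_FK, Prod.mk_eq_zero, Prod.mk.injEq, zero_PP, Nat.reduceLeDiff, Nat.reduceSub, Nat.not_ofNat_le_one, Nat.le_refl, Nat.zero_le, Nat.reduceEqDiff, implies_true, Bool.not_false, Bool.not_true, true_imp_iff, false_imp_iff, true_and, and_true]; try omega
    · simp only [D3n_t, zero_C3, Prod.mk.injEq, true_and, and_true]; omega
    · simp

/-- Sign coefficients, odd degree. -/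
lemma n_odd : Comp OZ.On true 4 4 (ZMod 2 × ZMod 2) := by
  refine ⟨AddMonoidHom.mk' (fun z : C3 ℤ => (((z.1.1 : ℤ) : ZMod 2), ((z.2.1 + z.2.2.1 + z.2.2.2.1 : ℤ) : ZMod 2))) ?_, ?_, ?_, ?_⟩
  · rintro ⟨⟨a, b, c, e⟩, ⟨a', b', c', e'⟩⟩ ⟨⟨xa, xb, xc, xe⟩, ⟨xa', xb', xc', xe'⟩⟩
    simp only [Prod.mk_add_mk, Prod.mk.injEq]
    refine ⟨?_, ?_⟩ <;> push_cast <;> ring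
  · rintro ⟨⟨a, b, c, e⟩, ⟨a', b', c', e'⟩⟩ hy
    simp only [mem_F3, mem_FK, Prod.mk_eq_zero, Prod.mk.injEq, zero_PP, Nat.reduceLeDiff, Nat.reduceSub, Nat.not_ofNat_le_one, Nat.le_refl, Nat.zero_le, Nat.reduceEqDiff, implies_true, Bool.not_false, Bool.not_true, true_imp_iff, false_imp_iff, true_and, and_true] at hy
    simp only [Bool.not_false, Bool.not_true, D3n_f, AddMonoidHom.mk'_apply, Prod.mk_eq_zero, z4, z2]
    exact ⟨⟨-a, by omega⟩, ⟨e - b', by omega⟩⟩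
  · rintro ⟨⟨a, b, c, e⟩, ⟨a', b', c', e'⟩⟩ hz hd hf
    simp only [mem_F3, mem_FK, Prod.mk_eq_zero, Prod.mk.injEq, zero_PP, Nat.reduceLeDiff, Nat.reduceSub, Nat.not_ofNat_le_one, Nat.le_refl, Nat.zero_le, Nat.reduceEqDiff, implies_true, Bool.not_false, Bool.not_true, true_imp_iff, false_imp_iff, true_and, and_true] at hz
    simp only [D3n_t, zero_C3, Prod.mk.injEq, true_and, and_true] at hd
    simp only [AddMonoidHom.mk'_apply, Prod.mk_eq_zero, z4, z2] at hf
    obtain ⟨⟨x0, hx0⟩, ⟨x1, hx1⟩⟩ := hf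
    refine ⟨((-x0, 0, 0, a'), (0, x1 - c' - b', x1 - c', 0)), ?_, ?_⟩
    · simp only [mem_F3, mem_FK, Prod.mk_eq_zero, Prod.mk.injEq, zero_PP, Nat.reduceLeDiff, Nat.reduceSub, Nat.not_ofNat_le_one, Nat.le_refl, Nat.zero_le, Nat.reduceEqDiff, implies_true, Bool.not_false, Bool.not_true, true_imp_iff, false_imp_iff, true_and, and_true]; try omega
    · simp only [Bool.not_false, Bool.not_true, D3n_f, Prod.mk.injEq, true_and, and_true]; omega
  · rintro ⟨t0, t1⟩
    obtain ⟨x0, rfl⟩ := z2s t0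
    obtain ⟨x1, rfl⟩ := z2s t1
    refine ⟨((x0, 0, 0, 0), (0, x1, 0, 0)), ?_, ?_, ?_⟩
    · simp only [mem_F3, mem_FK, Prod.mk_eq_zero, Prod.mk.injEq, zero_PP, Nat.reduceLeDiff, Nat.reduceSub, Nat.not_ofNat_le_one, Nat.le_refl, Nat.zero_le, Nat.reduceEqDiff, implies_true, Bool.not_false, Bool.not_true, true_imp_iff, false_imp_iff, true_and, and_true]; try omega
    · simp only [D3n_t, zero_C3, Prod.mk.injEq, true_and, and_true]; omega
    · simp

/-- Sign coefficients, even degree. -/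
lemma n_even : Comp OZ.On false 4 4 (ZMod 2 × ZMod 2) := by
  refine ⟨AddMonoidHom.mk' (fun z : C3 ℤ => (((z.1.2.1 + z.1.2.2.1 : ℤ) : ZMod 2), ((z.2.2.2.2 : ℤ) : ZMod 2))) ?_, ?_, ?_, ?_⟩
  · rintro ⟨⟨a, b, c, e⟩, ⟨a', b', c', e'⟩⟩ ⟨⟨xa, xb, xc, xe⟩, ⟨xa', xb', xc', xe'⟩⟩
    simp only [Prod.mk_add_mk, Prod.mk.injEq]
    refine ⟨?_, ?_⟩ <;> push_cast <;> ring
  · rintro ⟨⟨a, b, c, e⟩, ⟨a', b', c', e'⟩⟩ hy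
    simp only [mem_F3, mem_FK, Prod.mk_eq_zero, Prod.mk.injEq, zero_PP, Nat.reduceLeDiff, Nat.reduceSub, Nat.not_ofNat_le_one, Nat.le_refl, Nat.zero_le, Nat.reduceEqDiff, implies_true, Bool.not_false, Bool.not_true, true_imp_iff, false_imp_iff, true_and, and_true] at hy
    simp only [Bool.not_false, Bool.not_true, D3n_t, AddMonoidHom.mk'_apply, Prod.mk_eq_zero, z4, z2]
    exact ⟨⟨b, by omega⟩, ⟨e', by omega⟩⟩
  · rintro ⟨⟨a, b, c, e⟩, ⟨a', b', c', e'⟩⟩ hz hd hf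
    simp only [mem_F3, mem_FK, Prod.mk_eq_zero, Prod.mk.injEq, zero_PP, Nat.reduceLeDiff, Nat.reduceSub, Nat.not_ofNat_le_one, Nat.le_refl, Nat.zero_le, Nat.reduceEqDiff, implies_true, Bool.not_false, Bool.not_true, true_imp_iff, false_imp_iff, true_and, and_true] at hz
    simp only [D3n_f, zero_C3, Prod.mk.injEq, true_and, and_true] at hd
    simp only [AddMonoidHom.mk'_apply, Prod.mk_eq_zero, z4, z2] at hf
    obtain ⟨⟨x0, hx0⟩, ⟨x1, hx1⟩⟩ := hf
    refine ⟨((0, x0, x0 - b, a' - x0 + b), (0, 0, 0, x1)), ?_, ?_⟩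
    · simp only [mem_F3, mem_FK, Prod.mk_eq_zero, Prod.mk.injEq, zero_PP, Nat.reduceLeDiff, Nat.reduceSub, Nat.not_ofNat_le_one, Nat.le_refl, Nat.zero_le, Nat.reduceEqDiff, implies_true, Bool.not_false, Bool.not_true, true_imp_iff, false_imp_iff, true_and, and_true]; try omega
    · simp only [Bool.not_false, Bool.not_true, D3n_t, Prod.mk.injEq, true_and, and_true]; omega
  · rintro ⟨t0, t1⟩
    obtain ⟨x0, rfl⟩ := z2s t0
    obtain ⟨x1, rfl⟩ := z2s t1
    refine ⟨((0, x0, 0, 0), (0, 0, 0, x1)), ?_, ?_, ?_⟩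
    · simp only [mem_F3, mem_FK, Prod.mk_eq_zero, Prod.mk.injEq, zero_PP, Nat.reduceLeDiff, Nat.reduceSub, Nat.not_ofNat_le_one, Nat.le_refl, Nat.zero_le, Nat.reduceEqDiff, implies_true, Bool.not_false, Bool.not_true, true_imp_iff, false_imp_iff, true_and, and_true]; try omega
    · simp only [D3n_f, zero_C3, Prod.mk.injEq, true_and, and_true]; omega
    · simp

/-- Permutation coefficients, degree zero. -/
lemma s_zero : Comp OZ.O2 false 0 1 ℤ := by
  refine ⟨AddMonoidHom.mk' (fun z : C3 (ℤ × ℤ) => (z.1.1.1 : ℤ)) ?_, ?_, ?_, ?_⟩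
  · rintro ⟨⟨⟨a1, a2⟩, ⟨b1, b2⟩, ⟨c1, c2⟩, ⟨e1, e2⟩⟩, ⟨⟨g1, g2⟩, ⟨h1, h2⟩, ⟨k1, k2⟩, ⟨l1, l2⟩⟩⟩ ⟨⟨⟨xa1, xa2⟩, ⟨xb1, xb2⟩, ⟨xc1, xc2⟩, ⟨xe1, xe2⟩⟩, ⟨⟨xg1, xg2⟩, ⟨xh1, xh2⟩, ⟨xk1, xk2⟩, ⟨xl1, xl2⟩⟩⟩
    simp only [Prod.mk_add_mk, Prod.mk.injEq]
  · rintro ⟨⟨⟨a1, a2⟩, ⟨b1, b2⟩, ⟨c1, c2⟩, ⟨e1, e2⟩⟩, ⟨⟨g1, g2⟩, ⟨h1, h2⟩, ⟨k1, k2⟩, ⟨l1, l2⟩⟩⟩ hy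
    simp only [mem_F3, mem_FK, Prod.mk_eq_zero, Prod.mk.injEq, zero_PP, Nat.reduceLeDiff, Nat.reduceSub, Nat.not_ofNat_le_one, Nat.le_refl, Nat.zero_le, Nat.reduceEqDiff, implies_true, Bool.not_false, Bool.not_true, true_imp_iff, false_imp_iff, true_and, and_true] at hy
    simp only [Bool.not_false, Bool.not_true, D3s_t, AddMonoidHom.mk'_apply, Prod.mk_eq_zero, z4, z2]
    exact by omega
  · rintro ⟨⟨⟨a1, a2⟩, ⟨b1, b2⟩, ⟨c1, c2⟩, ⟨e1, e2⟩⟩, ⟨⟨g1, g2⟩, ⟨h1, h2⟩, ⟨k1, k2⟩, ⟨l1, l2⟩⟩⟩ hz hd hf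
    simp only [mem_F3, mem_FK, Prod.mk_eq_zero, Prod.mk.injEq, zero_PP, Nat.reduceLeDiff, Nat.reduceSub, Nat.not_ofNat_le_one, Nat.le_refl, Nat.zero_le, Nat.reduceEqDiff, implies_true, Bool.not_false, Bool.not_true, true_imp_iff, false_imp_iff, true_and, and_true] at hz
    simp only [D3s_f, zero_C3s, Prod.mk.injEq, true_and, and_true] at hd
    simp only [AddMonoidHom.mk'_apply, Prod.mk_eq_zero, z4, z2] at hf
    obtain hx0 := hf
    refine ⟨(((0, 0), (0, 0), (0, 0), (0, 0)), ((0, 0), (0, 0), (0, 0), (0, 0))), ?_, ?_⟩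
    · simp only [mem_F3, mem_FK, Prod.mk_eq_zero, Prod.mk.injEq, zero_PP, Nat.reduceLeDiff, Nat.reduceSub, Nat.not_ofNat_le_one, Nat.le_refl, Nat.zero_le, Nat.reduceEqDiff, implies_true, Bool.not_false, Bool.not_true, true_imp_iff, false_imp_iff, true_and, and_true]; try omega
    · simp only [Bool.not_false, Bool.not_true, D3s_t, Prod.mk.injEq, true_and, and_true]; omega
  · intro t0
    obtain ⟨x0, rfl⟩ : ∃ x, x = t0 := ⟨_, rfl⟩
    refine ⟨(((x0, x0), (0, 0), (0, 0), (0, 0)), ((0, 0), (0, 0), (0, 0), (0, 0))), ?_, ?_, ?_⟩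
    · simp only [mem_F3, mem_FK, Prod.mk_eq_zero, Prod.mk.injEq, zero_PP, Nat.reduceLeDiff, Nat.reduceSub, Nat.not_ofNat_le_one, Nat.le_refl, Nat.zero_le, Nat.reduceEqDiff, implies_true, Bool.not_false, Bool.not_true, true_imp_iff, false_imp_iff, true_and, and_true]; try omega
    · simp only [D3s_f, zero_C3s, Prod.mk.injEq, true_and, and_true]; omega
    · simp

/-- Permutation coefficients, degree one. -/
lemma s_one : Comp OZ.O2 true 1 2 ℤ := by
  refine ⟨AddMonoidHom.mk' (fun z : C3 (ℤ × ℤ) => (z.2.1.1 : ℤ)) ?_, ?_, ?_, ?_⟩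
  · rintro ⟨⟨⟨a1, a2⟩, ⟨b1, b2⟩, ⟨c1, c2⟩, ⟨e1, e2⟩⟩, ⟨⟨g1, g2⟩, ⟨h1, h2⟩, ⟨k1, k2⟩, ⟨l1, l2⟩⟩⟩ ⟨⟨⟨xa1, xa2⟩, ⟨xb1, xb2⟩, ⟨xc1, xc2⟩, ⟨xe1, xe2⟩⟩, ⟨⟨xg1, xg2⟩, ⟨xh1, xh2⟩, ⟨xk1, xk2⟩, ⟨xl1, xl2⟩⟩⟩
    simp only [Prod.mk_add_mk, Prod.mk.injEq]
  · rintro ⟨⟨⟨a1, a2⟩, ⟨b1, b2⟩, ⟨c1, c2⟩, ⟨e1, e2⟩⟩, ⟨⟨g1, g2⟩, ⟨h1, h2⟩, ⟨k1, k2⟩, ⟨l1, l2⟩⟩⟩ hy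
    simp only [mem_F3, mem_FK, Prod.mk_eq_zero, Prod.mk.injEq, zero_PP, Nat.reduceLeDiff, Nat.reduceSub, Nat.not_ofNat_le_one, Nat.le_refl, Nat.zero_le, Nat.reduceEqDiff, implies_true, Bool.not_false, Bool.not_true, true_imp_iff, false_imp_iff, true_and, and_true] at hy
    simp only [Bool.not_false, Bool.not_true, D3s_f, AddMonoidHom.mk'_apply, Prod.mk_eq_zero, z4, z2]
    exact by omega
  · rintro ⟨⟨⟨a1, a2⟩, ⟨b1, b2⟩, ⟨c1, c2⟩, ⟨e1, e2⟩⟩, ⟨⟨g1, g2⟩, ⟨h1, h2⟩, ⟨k1, k2⟩, ⟨l1, l2⟩⟩⟩ hz hd hf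
    simp only [mem_F3, mem_FK, Prod.mk_eq_zero, Prod.mk.injEq, zero_PP, Nat.reduceLeDiff, Nat.reduceSub, Nat.not_ofNat_le_one, Nat.le_refl, Nat.zero_le, Nat.reduceEqDiff, implies_true, Bool.not_false, Bool.not_true, true_imp_iff, false_imp_iff, true_and, and_true] at hz
    simp only [D3s_t, zero_C3s, Prod.mk.injEq, true_and, and_true] at hd
    simp only [AddMonoidHom.mk'_apply, Prod.mk_eq_zero, z4, z2] at hf
    obtain hx0 := hf
    refine ⟨(((0, a1), (0, 0), (0, 0), (0, 0)), ((0, 0), (0, 0), (0, 0), (0, 0))), ?_, ?_⟩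
    · simp only [mem_F3, mem_FK, Prod.mk_eq_zero, Prod.mk.injEq, zero_PP, Nat.reduceLeDiff, Nat.reduceSub, Nat.not_ofNat_le_one, Nat.le_refl, Nat.zero_le, Nat.reduceEqDiff, implies_true, Bool.not_false, Bool.not_true, true_imp_iff, false_imp_iff, true_and, and_true]; try omega
    · simp only [Bool.not_false, Bool.not_true, D3s_f, Prod.mk.injEq, true_and, and_true]; omega
  · intro t0
    obtain ⟨x0, rfl⟩ : ∃ x, x = t0 := ⟨_, rfl⟩
    refine ⟨(((0, 0), (0, 0), (0, 0), (0, 0)), ((x0, x0), (0, 0), (0, 0), (0, 0))), ?_, ?_, ?_⟩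
    · simp only [mem_F3, mem_FK, Prod.mk_eq_zero, Prod.mk.injEq, zero_PP, Nat.reduceLeDiff, Nat.reduceSub, Nat.not_ofNat_le_one, Nat.le_refl, Nat.zero_le, Nat.reduceEqDiff, implies_true, Bool.not_false, Bool.not_true, true_imp_iff, false_imp_iff, true_and, and_true]; try omega
    · simp only [D3s_t, zero_C3s, Prod.mk.injEq, true_and, and_true]; omega
    · simp

/-- Permutation coefficients, degree two. -/
lemma s_two : Comp OZ.O2 false 2 3 (ZMod 2 × ZMod 2 × ℤ) := by
  refine ⟨AddMonoidHom.mk' (fun z : C3 (ℤ × ℤ) => (((z.1.1.1 : ℤ) : ZMod 2), ((z.1.2.1.1 + z.1.2.2.1.2 : ℤ) : ZMod 2), (z.2.2.2.1.1 : ℤ))) ?_, ?_, ?_, ?_⟩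
  · rintro ⟨⟨⟨a1, a2⟩, ⟨b1, b2⟩, ⟨c1, c2⟩, ⟨e1, e2⟩⟩, ⟨⟨g1, g2⟩, ⟨h1, h2⟩, ⟨k1, k2⟩, ⟨l1, l2⟩⟩⟩ ⟨⟨⟨xa1, xa2⟩, ⟨xb1, xb2⟩, ⟨xc1, xc2⟩, ⟨xe1, xe2⟩⟩, ⟨⟨xg1, xg2⟩, ⟨xh1, xh2⟩, ⟨xk1, xk2⟩, ⟨xl1, xl2⟩⟩⟩
    simp only [Prod.mk_add_mk, Prod.mk.injEq]
    refine ⟨?_, ?_, ?_⟩ <;> push_cast <;> ring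
  · rintro ⟨⟨⟨a1, a2⟩, ⟨b1, b2⟩, ⟨c1, c2⟩, ⟨e1, e2⟩⟩, ⟨⟨g1, g2⟩, ⟨h1, h2⟩, ⟨k1, k2⟩, ⟨l1, l2⟩⟩⟩ hy
    simp only [mem_F3, mem_FK, Prod.mk_eq_zero, Prod.mk.injEq, zero_PP, Nat.reduceLeDiff, Nat.reduceSub, Nat.not_ofNat_le_one, Nat.le_refl, Nat.zero_le, Nat.reduceEqDiff, implies_true, Bool.not_false, Bool.not_true, true_imp_iff, false_imp_iff, true_and, and_true] at hy
    simp only [Bool.not_false, Bool.not_true, D3s_t, AddMonoidHom.mk'_apply, Prod.mk_eq_zero, z4, z2]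
    exact ⟨⟨a1 + a2, by omega⟩, ⟨c2, by omega⟩, by omega⟩
  · rintro ⟨⟨⟨a1, a2⟩, ⟨b1, b2⟩, ⟨c1, c2⟩, ⟨e1, e2⟩⟩, ⟨⟨g1, g2⟩, ⟨h1, h2⟩, ⟨k1, k2⟩, ⟨l1, l2⟩⟩⟩ hz hd hf
    simp only [mem_F3, mem_FK, Prod.mk_eq_zero, Prod.mk.injEq, zero_PP, Nat.reduceLeDiff, Nat.reduceSub, Nat.not_ofNat_le_one, Nat.le_refl, Nat.zero_le, Nat.reduceEqDiff, implies_true, Bool.not_false, Bool.not_true, true_imp_iff, false_imp_iff, true_and, and_true] at hz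
    simp only [D3s_f, zero_C3s, Prod.mk.injEq, true_and, and_true] at hd
    simp only [AddMonoidHom.mk'_apply, Prod.mk_eq_zero, z4, z2] at hf
    obtain ⟨⟨x0, hx0⟩, ⟨x1, hx1⟩, hx2⟩ := hf
    refine ⟨(((x0, 0), (b1 - x1, b2 + g1 + g2 + x1), (-g1 - g2 - x1, x1), (0, 0)), ((g1 + x1, 0), (0, 0), (0, 0), (0, 0))), ?_, ?_⟩
    · simp only [mem_F3, mem_FK, Prod.mk_eq_zero, Prod.mk.injEq, zero_PP, Nat.reduceLeDiff, Nat.reduceSub, Nat.not_ofNat_le_one, Nat.le_refl, Nat.zero_le, Nat.reduceEqDiff, implies_true, Bool.not_false, Bool.not_true, true_imp_iff, false_imp_iff, true_and, and_true]; try omega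
    · simp only [Bool.not_false, Bool.not_true, D3s_t, Prod.mk.injEq, true_and, and_true]; omega
  · rintro ⟨t0, t1, t2⟩
    obtain ⟨x0, rfl⟩ := z2s t0
    obtain ⟨x1, rfl⟩ := z2s t1
    obtain ⟨x2, rfl⟩ : ∃ x, x = t2 := ⟨_, rfl⟩
    refine ⟨(((x0, x0), (x1, -x1), (0, 0), (-2 * x2, -2 * x2)), ((-x2, 0), (-x2, -x2), (x2, x2), (0, 0))), ?_, ?_, ?_⟩
    · simp only [mem_F3, mem_FK, Prod.mk_eq_zero, Prod.mk.injEq, zero_PP, Nat.reduceLeDiff, Nat.reduceSub, Nat.not_ofNat_le_one, Nat.le_refl, Nat.zero_le, Nat.reduceEqDiff, implies_true, Bool.not_false, Bool.not_true, true_imp_iff, false_imp_iff, true_and, and_true]; try omega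
    · simp only [D3s_f, zero_C3s, Prod.mk.injEq, true_and, and_true]; omega
    · simp

/-- Permutation coefficients, degree three. -/
lemma s_three : Comp OZ.O2 true 3 4 (ZMod 2 × ℤ) := by
  refine ⟨AddMonoidHom.mk' (fun z : C3 (ℤ × ℤ) => (((z.2.1.1 + z.2.1.2 + z.2.2.1.1 + z.2.2.1.2 + z.2.2.2.1.1 + z.2.2.2.1.2 : ℤ) : ZMod 2), (z.2.2.2.2.1 : ℤ))) ?_, ?_, ?_, ?_⟩
  · rintro ⟨⟨⟨a1, a2⟩, ⟨b1, b2⟩, ⟨c1, c2⟩, ⟨e1, e2⟩⟩, ⟨⟨g1, g2⟩, ⟨h1, h2⟩, ⟨k1, k2⟩, ⟨l1, l2⟩⟩⟩ ⟨⟨⟨xa1, xa2⟩, ⟨xb1, xb2⟩, ⟨xc1, xc2⟩, ⟨xe1, xe2⟩⟩, ⟨⟨xg1, xg2⟩, ⟨xh1, xh2⟩, ⟨xk1, xk2⟩, ⟨xl1, xl2⟩⟩⟩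
    simp only [Prod.mk_add_mk, Prod.mk.injEq]
    refine ⟨?_, ?_⟩ <;> push_cast <;> ring
  · rintro ⟨⟨⟨a1, a2⟩, ⟨b1, b2⟩, ⟨c1, c2⟩, ⟨e1, e2⟩⟩, ⟨⟨g1, g2⟩, ⟨h1, h2⟩, ⟨k1, k2⟩, ⟨l1, l2⟩⟩⟩ hy
    simp only [mem_F3, mem_FK, Prod.mk_eq_zero, Prod.mk.injEq, zero_PP, Nat.reduceLeDiff, Nat.reduceSub, Nat.not_ofNat_le_one, Nat.le_refl, Nat.zero_le, Nat.reduceEqDiff, implies_true, Bool.not_false, Bool.not_true, true_imp_iff, false_imp_iff, true_and, and_true] at hy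
    simp only [Bool.not_false, Bool.not_true, D3s_f, AddMonoidHom.mk'_apply, Prod.mk_eq_zero, z4, z2]
    exact ⟨⟨-b1 - b2 - c1 - c2 - 2 * g1 - 2 * g2 - k1 - k2, by omega⟩, by omega⟩
  · rintro ⟨⟨⟨a1, a2⟩, ⟨b1, b2⟩, ⟨c1, c2⟩, ⟨e1, e2⟩⟩, ⟨⟨g1, g2⟩, ⟨h1, h2⟩, ⟨k1, k2⟩, ⟨l1, l2⟩⟩⟩ hz hd hf
    simp only [mem_F3, mem_FK, Prod.mk_eq_zero, Prod.mk.injEq, zero_PP, Nat.reduceLeDiff, Nat.reduceSub, Nat.not_ofNat_le_one, Nat.le_refl, Nat.zero_le, Nat.reduceEqDiff, implies_true, Bool.not_false, Bool.not_true, true_imp_iff, false_imp_iff, true_and, and_true] at hz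
    simp only [D3s_t, zero_C3s, Prod.mk.injEq, true_and, and_true] at hd
    simp only [AddMonoidHom.mk'_apply, Prod.mk_eq_zero, z4, z2] at hf
    obtain ⟨⟨x0, hx0⟩, hx1⟩ := hf
    refine ⟨(((0, a1), (-k2 - h1 - g1, 0), (0, 0), (-k2 - h1, -k1 - h2 - 2 * (x0 - k1 - h2 - g2))), ((0, 0), (-h1, -h2 - (x0 - k1 - h2 - g2)), (x0 - k1 - h2 - g2, 0), (0, 0))), ?_, ?_⟩
    · simp only [mem_F3, mem_FK, Prod.mk_eq_zero, Prod.mk.injEq, zero_PP, Nat.reduceLeDiff, Nat.reduceSub, Nat.not_ofNat_le_one, Nat.le_refl, Nat.zero_le, Nat.reduceEqDiff, implies_true, Bool.not_false, Bool.not_true, true_imp_iff, false_imp_iff, true_and, and_true]; try omega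
    · simp only [Bool.not_false, Bool.not_true, D3s_f, Prod.mk.injEq, true_and, and_true]; omega
  · rintro ⟨t0, t1⟩
    obtain ⟨x0, rfl⟩ := z2s t0
    obtain ⟨x1, rfl⟩ : ∃ x, x = t1 := ⟨_, rfl⟩
    refine ⟨(((0, 0), (0, 0), (0, 0), (0, 0)), ((0, 0), (x0, 0), (0, 0), (x1, x1))), ?_, ?_, ?_⟩
    · simp only [mem_F3, mem_FK, Prod.mk_eq_zero, Prod.mk.injEq, zero_PP, Nat.reduceLeDiff, Nat.reduceSub, Nat.not_ofNat_le_one, Nat.le_refl, Nat.zero_le, Nat.reduceEqDiff, implies_true, Bool.not_false, Bool.not_true, true_imp_iff, false_imp_iff, true_and, and_true]; try omega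
    · simp only [D3s_t, zero_C3s, Prod.mk.injEq, true_and, and_true]; omega
    · simp

/-- Permutation coefficients, even degree. -/
lemma s_even : Comp OZ.O2 false 4 4 (ZMod 2 × ZMod 2) := by
  refine ⟨AddMonoidHom.mk' (fun z : C3 (ℤ × ℤ) => (((z.1.1.1 : ℤ) : ZMod 2), ((z.1.2.1.1 + z.1.2.2.1.2 : ℤ) : ZMod 2))) ?_, ?_, ?_, ?_⟩
  · rintro ⟨⟨⟨a1, a2⟩, ⟨b1, b2⟩, ⟨c1, c2⟩, ⟨e1, e2⟩⟩, ⟨⟨g1, g2⟩, ⟨h1, h2⟩, ⟨k1, k2⟩, ⟨l1, l2⟩⟩⟩ ⟨⟨⟨xa1, xa2⟩, ⟨xb1, xb2⟩, ⟨xc1, xc2⟩, ⟨xe1, xe2⟩⟩, ⟨⟨xg1, xg2⟩, ⟨xh1, xh2⟩, ⟨xk1, xk2⟩, ⟨xl1, xl2⟩⟩⟩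
    simp only [Prod.mk_add_mk, Prod.mk.injEq]
    refine ⟨?_, ?_⟩ <;> push_cast <;> ring
  · rintro ⟨⟨⟨a1, a2⟩, ⟨b1, b2⟩, ⟨c1, c2⟩, ⟨e1, e2⟩⟩, ⟨⟨g1, g2⟩, ⟨h1, h2⟩, ⟨k1, k2⟩, ⟨l1, l2⟩⟩⟩ hy
    simp only [mem_F3, mem_FK, Prod.mk_eq_zero, Prod.mk.injEq, zero_PP, Nat.reduceLeDiff, Nat.reduceSub, Nat.not_ofNat_le_one, Nat.le_refl, Nat.zero_le, Nat.reduceEqDiff, implies_true, Bool.not_false, Bool.not_true, true_imp_iff, false_imp_iff, true_and, and_true] at hy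
    simp only [Bool.not_false, Bool.not_true, D3s_t, AddMonoidHom.mk'_apply, Prod.mk_eq_zero, z4, z2]
    exact ⟨⟨a1 + a2, by omega⟩, ⟨c2, by omega⟩⟩
  · rintro ⟨⟨⟨a1, a2⟩, ⟨b1, b2⟩, ⟨c1, c2⟩, ⟨e1, e2⟩⟩, ⟨⟨g1, g2⟩, ⟨h1, h2⟩, ⟨k1, k2⟩, ⟨l1, l2⟩⟩⟩ hz hd hf
    simp only [mem_F3, mem_FK, Prod.mk_eq_zero, Prod.mk.injEq, zero_PP, Nat.reduceLeDiff, Nat.reduceSub, Nat.not_ofNat_le_one, Nat.le_refl, Nat.zero_le, Nat.reduceEqDiff, implies_true, Bool.not_false, Bool.not_true, true_imp_iff, false_imp_iff, true_and, and_true] at hz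
    simp only [D3s_f, zero_C3s, Prod.mk.injEq, true_and, and_true] at hd
    simp only [AddMonoidHom.mk'_apply, Prod.mk_eq_zero, z4, z2] at hf
    obtain ⟨⟨x0, hx0⟩, ⟨x1, hx1⟩⟩ := hf
    refine ⟨(((x0, 0), (b1 - x1, b2 - h1 + g1 + g2 + x1), (h1 - g1 - g2 - x1, x1), (h1, 0)), ((g1 + x1 - h1, 0), (0, 0), (0, 0), (l1, 0))), ?_, ?_⟩
    · simp only [mem_F3, mem_FK, Prod.mk_eq_zero, Prod.mk.injEq, zero_PP, Nat.reduceLeDiff, Nat.reduceSub, Nat.not_ofNat_le_one, Nat.le_refl, Nat.zero_le, Nat.reduceEqDiff, implies_true, Bool.not_false, Bool.not_true, true_imp_iff, false_imp_iff, true_and, and_true]; try omega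
    · simp only [Bool.not_false, Bool.not_true, D3s_t, Prod.mk.injEq, true_and, and_true]; omega
  · rintro ⟨t0, t1⟩
    obtain ⟨x0, rfl⟩ := z2s t0
    obtain ⟨x1, rfl⟩ := z2s t1
    refine ⟨(((x0, x0), (x1, -x1), (0, 0), (0, 0)), ((0, 0), (0, 0), (0, 0), (0, 0))), ?_, ?_, ?_⟩
    · simp only [mem_F3, mem_FK, Prod.mk_eq_zero, Prod.mk.injEq, zero_PP, Nat.reduceLeDiff, Nat.reduceSub, Nat.not_ofNat_le_one, Nat.le_refl, Nat.zero_le, Nat.reduceEqDiff, implies_true, Bool.not_false, Bool.not_true, true_imp_iff, false_imp_iff, true_and, and_true]; try omega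
    · simp only [D3s_f, zero_C3s, Prod.mk.injEq, true_and, and_true]; omega
    · simp

/-- Permutation coefficients, odd degree. -/
lemma s_odd : Comp OZ.O2 true 4 4 (ZMod 2 × ZMod 2) := by
  refine ⟨AddMonoidHom.mk' (fun z : C3 (ℤ × ℤ) => (((z.2.1.1 + z.2.1.2 + z.2.2.1.1 + z.2.2.1.2 + z.2.2.2.1.1 + z.2.2.2.1.2 : ℤ) : ZMod 2), ((z.2.2.2.2.1 : ℤ) : ZMod 2))) ?_, ?_, ?_, ?_⟩
  · rintro ⟨⟨⟨a1, a2⟩, ⟨b1, b2⟩, ⟨c1, c2⟩, ⟨e1, e2⟩⟩, ⟨⟨g1, g2⟩, ⟨h1, h2⟩, ⟨k1, k2⟩, ⟨l1, l2⟩⟩⟩ ⟨⟨⟨xa1, xa2⟩, ⟨xb1, xb2⟩, ⟨xc1, xc2⟩, ⟨xe1, xe2⟩⟩, ⟨⟨xg1, xg2⟩, ⟨xh1, xh2⟩, ⟨xk1, xk2⟩, ⟨xl1, xl2⟩⟩⟩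
    simp only [Prod.mk_add_mk, Prod.mk.injEq]
    refine ⟨?_, ?_⟩ <;> push_cast <;> ring
  · rintro ⟨⟨⟨a1, a2⟩, ⟨b1, b2⟩, ⟨c1, c2⟩, ⟨e1, e2⟩⟩, ⟨⟨g1, g2⟩, ⟨h1, h2⟩, ⟨k1, k2⟩, ⟨l1, l2⟩⟩⟩ hy
    simp only [mem_F3, mem_FK, Prod.mk_eq_zero, Prod.mk.injEq, zero_PP, Nat.reduceLeDiff, Nat.reduceSub, Nat.not_ofNat_le_one, Nat.le_refl, Nat.zero_le, Nat.reduceEqDiff, implies_true, Bool.not_false, Bool.not_true, true_imp_iff, false_imp_iff, true_and, and_true] at hy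
    simp only [Bool.not_false, Bool.not_true, D3s_f, AddMonoidHom.mk'_apply, Prod.mk_eq_zero, z4, z2]
    exact ⟨⟨-b1 - b2 - c1 - c2 - 2 * g1 - 2 * g2 - k1 - k2, by omega⟩, ⟨-l1 - l2, by omega⟩⟩
  · rintro ⟨⟨⟨a1, a2⟩, ⟨b1, b2⟩, ⟨c1, c2⟩, ⟨e1, e2⟩⟩, ⟨⟨g1, g2⟩, ⟨h1, h2⟩, ⟨k1, k2⟩, ⟨l1, l2⟩⟩⟩ hz hd hf
    simp only [mem_F3, mem_FK, Prod.mk_eq_zero, Prod.mk.injEq, zero_PP, Nat.reduceLeDiff, Nat.reduceSub, Nat.not_ofNat_le_one, Nat.le_refl, Nat.zero_le, Nat.reduceEqDiff, implies_true, Bool.not_false, Bool.not_true, true_imp_iff, false_imp_iff, true_and, and_true] at hz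
    simp only [D3s_t, zero_C3s, Prod.mk.injEq, true_and, and_true] at hd
    simp only [AddMonoidHom.mk'_apply, Prod.mk_eq_zero, z4, z2] at hf
    obtain ⟨⟨x0, hx0⟩, ⟨x1, hx1⟩⟩ := hf
    refine ⟨(((0, a1), (-k2 - h1 - g1, 0), (0, 0), (-k2 - h1, -k1 - h2 - 2 * (x0 - k1 - h2 - g2))), ((0, 0), (-h1, -h2 - (x0 - k1 - h2 - g2)), (x0 - k1 - h2 - g2, 0), (-x1, 0))), ?_, ?_⟩
    · simp only [mem_F3, mem_FK, Prod.mk_eq_zero, Prod.mk.injEq, zero_PP, Nat.reduceLeDiff, Nat.reduceSub, Nat.not_ofNat_le_one, Nat.le_refl, Nat.zero_le, Nat.reduceEqDiff, implies_true, Bool.not_false, Bool.not_true, true_imp_iff, false_imp_iff, true_and, and_true]; try omega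
    · simp only [Bool.not_false, Bool.not_true, D3s_f, Prod.mk.injEq, true_and, and_true]; omega
  · rintro ⟨t0, t1⟩
    obtain ⟨x0, rfl⟩ := z2s t0
    obtain ⟨x1, rfl⟩ := z2s t1
    refine ⟨(((0, 0), (0, 0), (0, 0), (0, 0)), ((0, 0), (x0, 0), (0, 0), (x1, x1))), ?_, ?_, ?_⟩
    · simp only [mem_F3, mem_FK, Prod.mk_eq_zero, Prod.mk.injEq, zero_PP, Nat.reduceLeDiff, Nat.reduceSub, Nat.not_ofNat_le_one, Nat.le_refl, Nat.zero_le, Nat.reduceEqDiff, implies_true, Bool.not_false, Bool.not_true, true_imp_iff, false_imp_iff, true_and, and_true]; try omega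
    · simp only [D3s_t, zero_C3s, Prod.mk.injEq, true_and, and_true]; omega
    · simp

set_option linter.all false
set_option synthInstance.maxHeartbeats 200000
set_option synthInstance.maxSize 2000
open Matrix
lemma comp_top {B : Type} [AddCommGroup B] {O : Ops3 B} {p : Bool} {m m' : ℕ} {T : Type}
    [AddCommGroup T] (hm : 4 ≤ m) (hm' : 4 ≤ m') (h : Comp O p 4 4 T) : Comp O p m m' T := by
  unfold Comp at h ⊢
  rw [F3_top hm, F3_top hm']
  exact h

lemma comp_top3 {B : Type} [AddCommGroup B] {O : Ops3 B} {p : Bool} {m' : ℕ} {T : Type}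
    [AddCommGroup T] (hm' : 4 ≤ m') (h : Comp O p 3 4 T) : Comp O p 3 m' T := by
  unfold Comp at h ⊢
  rw [F3_top hm']
  exact h

lemma H_of (n : ℕ) {T T' : Type} [AddCommGroup T] [AddCommGroup T']
    (h : Nonempty (HC OZ (n + 1) ≃+ T)) (e : T ≃+ T') : Nonempty (H (n + 1) ≃+ T') := by
  obtain ⟨f⟩ := h
  obtain ⟨g⟩ := compare n (Representation.trivial ℤ Gam ℤ)
  exact ⟨(g.trans f).trans e⟩

/-- Target in degree one. -/
def tgt1 : (ℤ × ℤ × Unit) ≃+ (Fin 2 → ℤ) where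
  toFun x := ![x.1, x.2.1]
  invFun y := (y 0, y 1, ())
  left_inv x := rfl
  right_inv y := by ext i; fin_cases i <;> rfl
  map_add' x y := by ext i; fin_cases i <;> rfl

/-- Target in degree two. -/
def tgt2 : ((ZMod 4 × ℤ) × ℤ × Unit) ≃+ ((Fin 2 → ℤ) × ZMod 4) where
  toFun x := (![x.1.2, x.2.1], x.1.1)
  invFun y := ((y.2, y.1 0), y.1 1, ())
  left_inv x := rfl
  right_inv y := by refine Prod.ext ?_ rfl; ext i; fin_cases i <;> rfl
  map_add' x y := by refine Prod.ext ?_ rfl; ext i; fin_cases i <;> rfl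

/-- Target in degree three. -/
def tgt3 : ((ZMod 2 × ℤ) × (ZMod 2 × ZMod 2 × ℤ) × ZMod 2) ≃+
    ((Fin 2 → ℤ) × (Fin 4 → ZMod 2)) where
  toFun x := (![x.1.2, x.2.1.2.2], ![x.1.1, x.2.1.1, x.2.1.2.1, x.2.2])
  invFun y := ((y.2 0, y.1 0), (y.2 1, y.2 2, y.1 1), y.2 3)
  left_inv x := rfl
  right_inv y := by refine Prod.ext ?_ ?_ <;> ext i <;> fin_cases i <;> rfl
  map_add' x y := by refine Prod.ext ?_ ?_ <;> funext i <;> fin_cases i <;> rfl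

/-- Target in degree four. -/
def tgt4 : ((ZMod 4 × ZMod 2) × (ZMod 2 × ℤ) × ZMod 4) ≃+
    (ℤ × (Fin 2 → ZMod 4) × (Fin 2 → ZMod 2)) where
  toFun x := (x.2.1.2, ![x.1.1, x.2.2], ![x.1.2, x.2.1.1])
  invFun y := ((y.2.1 0, y.2.2 0), (y.2.2 1, y.1), y.2.1 1)
  left_inv x := rfl
  right_inv y := by
    refine Prod.ext rfl (Prod.ext ?_ ?_) <;> funext i <;> fin_cases i <;> rfl
  map_add' x y := by
    refine Prod.ext rfl (Prod.ext ?_ ?_) <;> funext i <;> fin_cases i <;> rfl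

/-- Target in degrees at least five. -/
def tgt5 : ((ZMod 4 × ZMod 2) × (ZMod 2 × ZMod 2) × ZMod 2 × ZMod 2) ≃+
    (ZMod 4 × (Fin 5 → ZMod 2)) where
  toFun x := (x.1.1, ![x.1.2, x.2.1.1, x.2.1.2, x.2.2.1, x.2.2.2])
  invFun y := ((y.1, y.2 0), (y.2 1, y.2 2), y.2 3, y.2 4)
  left_inv x := rfl
  right_inv y := by refine Prod.ext rfl ?_; funext i; fin_cases i <;> rfl
  map_add' x y := by refine Prod.ext rfl ?_; funext i; fin_cases i <;> rfl

lemma HC_high (n : ℕ) (hn : 5 ≤ n) : Nonempty (HC OZ n ≃+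
    (ZMod 4 × ZMod 2) × (ZMod 2 × ZMod 2) × ZMod 2 × ZMod 2) := by
  cases hp : n.bodd with
  | false =>
    have h6 : n ≠ 5 := by rintro rfl; exact absurd hp (by decide)
    exact combine n hp (comp_top (by omega) (by omega) t_even)
      (comp_top (by omega) (by omega) s_odd) (comp_top (by omega) (by omega) n_even)
  | true =>
    refine combine n hp (comp_top (by omega) (by omega) t_odd)
      (comp_top (by omega) (by omega) s_even) ?_
    rcases Nat.lt_or_ge n 6 with h | h
    · obtain rfl : n = 5 := by omega
      exact comp_top3 (by omega) n_three
    · exact comp_top (by omega) (by omega) n_odd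

theorem cohomology_min82_1_7 :
    Nonempty (H 1 ≃+ (Fin 2 → ℤ)) ∧
    Nonempty (H 2 ≃+ ((Fin 2 → ℤ) × ZMod 4)) ∧
    Nonempty (H 3 ≃+ ((Fin 2 → ℤ) × (Fin 4 → ZMod 2))) ∧
    Nonempty (H 4 ≃+ (ℤ × (Fin 2 → ZMod 4) × (Fin 2 → ZMod 2))) ∧
    (∀ i, 5 ≤ i → Nonempty (H i ≃+ (ZMod 4 × (Fin 5 → ZMod 2)))) := by
  refine ⟨H_of 0 (combine 1 rfl t_one s_zero n_neg) tgt1,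
    H_of 1 (combine 2 rfl t_two s_one n_zero) tgt2,
    H_of 2 (combine 3 rfl t_three s_two n_one) tgt3,
    H_of 3 (combine 4 rfl (comp_top (by omega) (by omega) t_even) s_three n_two) tgt4, ?_⟩
  intro i hi
  obtain ⟨j, rfl⟩ : ∃ j, i = j + 1 := ⟨i - 1, by omega⟩
  exact H_of j (HC_high (j + 1) hi) tgt5
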